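/- Let 𝔞 be a convex ideal of the ring O(ℝⁿ) of real-analytic functions on ℝⁿ. Then the saturation 𝔞~ of 𝔞 is also a convex ideal. -/

import Mathlib

/-!
That the saturation is an ideal is a direct verification. For convexity let `|g| ≤ f` with `f` in the
saturation, and let `x` be a point, so that `f = ∑ cᵢ Aᵢ` near `x` with `Aᵢ ∈ 𝔞`. The key fact
(`real_relation`) is that there are *global* analytic functions `h`, `C₁, …, C_r` with
`h f = ∑ Cᵢ Aᵢ` on `ℝⁿ` and `h x ≠ 0`. Then `h² f ∈ 𝔞` and `|h² g| ≤ h² f`, hence `h² g ∈ 𝔞` by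
convexity of `𝔞`, and `g = h⁻² · (h² g)` near `x`. So `g` is in the saturation.

The key fact is an instance of Cartan's Theorem A on `ℝⁿ`, for the sheaf of relations between
`f, A₁, …, A_r`. Its proof is built from first principles, in the following way.

* Local theory. Osgood's lemma (`osgood`) gives analyticity of limits and of integrals depending on
  parameters. Weierstrass division (`weierstrass_exists`, `weierstrass_unique`) is obtained by
  inverting a division operator on the disc algebra, analytically in the parameter. It leads to Oka's
  theorem (`oka_pi`): the relations between finitely many holomorphic functions are, locally,
  generated by finitely many of them.
* Boxes in `ℂⁿ`. Cauchy's formula for rectangles yields the additive splitting of Cousin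
  (`cousin_split`) and Runge approximation by entire functions (`runge`); iterating the additive
  splitting yields Cartan's lemma on invertible matrices (`cartan`). Generators of relations and
  solutions of linear systems can therefore be glued along a common face of two boxes (`glueA`,
  `glueB`), and an induction over the number of nondegenerate real directions proves Theorems A and
  B near every closed box (`thmAB`).
* Tubes. Exhausting the tube `|Im zᵢ| < 1/2` by boxes, with approximation at each step, gives global
  relations on that tube among functions holomorphic on the tube `|Im zᵢ| < 1` (`relation_tube`).
* Descent to `ℝⁿ`. Real-analytic functions extend to a neighbourhood `Ω` of `ℝⁿ` in `ℂⁿ`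
  (`complexify`), which need not contain a tube of constant width. This is repaired by the slow map
  `w ↦ ∑ₖ w / √(Rₖ² + ∑ wᵢ²)`: if the scales `Rₖ` grow fast enough, it maps the unit tube into `Ω`
  (`exists_scales`), and it restricts to a real-analytic automorphism of `ℝⁿ` (`slow_inverse`).
  Relations on the tube between the pulled-back functions thus give relations on `ℝⁿ`.
-/

/-- The ring of real-analytic functions on `ℝⁿ`, as a subring of the pointwise function ring. -/
noncomputable def ORn (n : ℕ) : Subring ((Fin n → ℝ) → ℝ) where
  carrier := {f | ∀ x, AnalyticAt ℝ f x}
  mul_mem' hf hg x := (hf x).mul (hg x)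
  one_mem' _ := analyticAt_const
  add_mem' hf hg x := (hf x).add (hg x)
  zero_mem' _ := analyticAt_const
  neg_mem' hf x := (hf x).neg

/-- The saturation of a set of global real-analytic functions on `ℝⁿ`. -/
def saturation (n : ℕ) (a : Set (ORn n)) : Set (ORn n) :=
  {g | ∀ x : Fin n → ℝ, ∃ U : Set (Fin n → ℝ), IsOpen U ∧ x ∈ U ∧
    ∃ (r : ℕ) (A : Fin r → ORn n) (c : Fin r → ((Fin n → ℝ) → ℝ)),
      (∀ i, A i ∈ a) ∧ (∀ i, ∀ y ∈ U, AnalyticAt ℝ (c i) y) ∧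
      ∀ y ∈ U, (g : (Fin n → ℝ) → ℝ) y = ∑ i, c i y * (A i : (Fin n → ℝ) → ℝ) y}

/-! ### Osgood's lemma -/

section

open Set Filter Topology Metric

/-- Directional complex differentiability of a continuous map on an open set implies analyticity
(the Osgood property) for the domain `E` and all complete targets. -/
def Osgood (E : Type) [NormedAddCommGroup E] [NormedSpace ℂ E] : Prop :=
  ∀ (F : Type) [NormedAddCommGroup F] [NormedSpace ℂ F] [CompleteSpace F] (U : Set E) (f : E → F),
    IsOpen U → ContinuousOn f U →
    (∀ x ∈ U, ∀ v : E, DifferentiableAt ℂ (fun t : ℂ => f (x + t • v)) 0) → AnalyticOnNhd ℂ f U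

theorem Osgood.equiv {E E₂ : Type} [NormedAddCommGroup E] [NormedSpace ℂ E]
    [NormedAddCommGroup E₂] [NormedSpace ℂ E₂] (e : E₂ ≃L[ℂ] E) (h : Osgood E) : Osgood E₂ := by
  intro F _ _ _ U f hU hf hd
  have h1 := h F (e.symm ⁻¹' U) (f ∘ e.symm) (hU.preimage e.symm.continuous)
    (hf.comp e.symm.continuous.continuousOn (fun x hx => hx)) (fun x hx v => by
      simpa using hd (e.symm x) hx (e.symm v))
  intro x hx
  have h2 := (h1 (e x) (by simpa using hx)).comp (e.toContinuousLinearMap.analyticAt x)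
  refine h2.congr (Eventually.of_forall fun y => by simp)

/-- Integration over `[a, b]` as a continuous linear map on continuous functions. -/
noncomputable def icInt {a b : ℝ} (hab : a ≤ b) (F : Type) [NormedAddCommGroup F]
    [NormedSpace ℂ F] : C(Icc a b, F) →L[ℂ] F :=
  LinearMap.mkContinuous
    { toFun := fun φ => ∫ θ in a..b, φ (projIcc a b hab θ)
      map_add' := fun φ ψ => by
        simp only [ContinuousMap.add_apply]
        apply intervalIntegral.integral_add <;>
        exact (((ContinuousMap.continuous _).comp continuous_projIcc)).intervalIntegrable _ _
      map_smul' := fun c φ => by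
        simp [intervalIntegral.integral_smul] } (b - a) (fun φ => by
      have := intervalIntegral.norm_integral_le_of_norm_le_const (a := a) (b := b)
        (f := fun θ => φ (projIcc a b hab θ)) (C := ‖φ‖)
        (fun x _ => φ.norm_coe_le_norm _)
      rw [abs_of_nonneg (by linarith), mul_comm] at this
      exact this)

theorem icInt_eq {a b : ℝ} (hab : a ≤ b) {F : Type} [NormedAddCommGroup F] [NormedSpace ℂ F]
    (g : ℝ → F) (φ : C(Icc a b, F)) (h : ∀ θ, φ θ = g θ) :
    icInt hab F φ = ∫ θ in a..b, g θ := by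
  change ∫ θ in a..b, φ (projIcc a b hab θ) = _
  apply intervalIntegral.integral_congr
  intro θ hθ
  rw [uIcc_of_le hab] at hθ
  simp only [h, projIcc_of_mem _ hθ]

/-- A continuous map from a plane domain into a Banach space that is holomorphic after composition
with a separating family of functionals is differentiable: it is the Cauchy integral of itself. -/
theorem differentiableAt_of_pointwise {X Y F : Type} [NormedAddCommGroup Y] [NormedSpace ℂ Y]
    [CompleteSpace Y] [NormedAddCommGroup F] [NormedSpace ℂ F] [CompleteSpace F]
    (ev : X → Y →L[ℂ] F) (hev : ∀ y y' : Y, (∀ x, ev x y = ev x y') → y = y') {r : ℝ} (hr : 0 < r)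
    (φ : ℂ → Y) (hc : ContinuousOn φ (closedBall 0 r))
    (hd : ∀ x, DifferentiableOn ℂ (fun t => ev x (φ t)) (ball 0 r)) : DifferentiableAt ℂ φ 0 := by
  lift r to NNReal using hr.le
  have hr' : 0 < r := hr
  have hci : CircleIntegrable φ 0 r :=
    (hc.mono sphere_subset_closedBall).circleIntegrable hr.le
  have h1 := hasFPowerSeriesOn_cauchy_integral hci hr'
  refine h1.analyticAt.differentiableAt.congr_of_eventuallyEq ?_
  filter_upwards [ball_mem_nhds (0:ℂ) hr] with t ht
  refine hev _ _ fun x => ?_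
  have h2 : ∮ z in C(0, r), (z - t)⁻¹ • ev x (φ z) =
      (2 * Real.pi * Complex.I : ℂ) • ev x (φ t) := by
    refine Complex.circleIntegral_sub_inv_smul_of_differentiable_on_off_countable
      countable_empty ht ((ev x).continuous.comp_continuousOn hc)
      (fun s hs => (hd x).differentiableAt (isOpen_ball.mem_nhds hs.1))
  have h3 : ev x (∮ z in C(0, r), (z - t)⁻¹ • φ z) = ∮ z in C(0, r), (z - t)⁻¹ • ev x (φ z) := by
    have := (ev x).intervalIntegral_comp_comm
      (f := fun θ => deriv (circleMap 0 r) θ • (circleMap 0 r θ - t)⁻¹ • φ (circleMap 0 r θ))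
      (a := 0) (b := 2 * Real.pi) (μ := MeasureTheory.volume) ?_
    · simp only [circleIntegral]
      rw [← this]
      simp only [map_smul]
    · have : CircleIntegrable (fun z => (z - t)⁻¹ • φ z) 0 r := by
        apply ContinuousOn.circleIntegrable hr.le
        refine ContinuousOn.smul (f := fun z : ℂ => (z - t)⁻¹) ?_
          (hc.mono sphere_subset_closedBall)
        refine ContinuousOn.inv₀ (by fun_prop) ?_
        intro z hz h0
        rw [sub_eq_zero] at h0
        subst h0
        simp at hz ht
        linarith
      exact this.out
  simp only [map_smul, h3, h2]
  rw [smul_smul, inv_mul_cancel₀ (by simp [Real.pi_ne_zero]), one_smul]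

/-- On a product `E × ℂ`, it suffices to test holomorphy in the two factors separately. -/
theorem Osgood.prod' {E F : Type} [NormedAddCommGroup E] [NormedSpace ℂ E] (h : Osgood E)
    [NormedAddCommGroup F] [NormedSpace ℂ F] [CompleteSpace F] {U : Set (E × ℂ)} {f : E × ℂ → F}
    (hU : IsOpen U) (hf : ContinuousOn f U)
    (hd1 : ∀ p ∈ U, ∀ v : E, DifferentiableAt ℂ (fun t : ℂ => f (p.1 + t • v, p.2)) 0)
    (hd2 : ∀ p ∈ U, DifferentiableAt ℂ (fun t : ℂ => f (p.1, t)) p.2) : AnalyticOnNhd ℂ f U := by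
  rintro ⟨x₀, z₀⟩ hx₀
  obtain ⟨R, hR, hRU⟩ := Metric.isOpen_iff.1 hU _ hx₀
  obtain ⟨ρ, hρ, hρR⟩ := exists_between hR
  have hin : ∀ x ∈ ball x₀ ρ, ∀ z ∈ closedBall z₀ ρ, (x, z) ∈ U := by
    intro x hx z hz
    apply hRU
    rw [mem_ball, Prod.dist_eq]
    exact max_lt (lt_trans hx hρR) (lt_of_le_of_lt hz hρR)
  have hpi : (0:ℝ) ≤ 2 * Real.pi := by positivity
  let I := Icc (0:ℝ) (2 * Real.pi)
  have hcirc : ∀ θ, circleMap z₀ ρ θ ∈ closedBall z₀ ρ := fun θ =>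
    circleMap_mem_closedBall _ hρ.le _
  let Gc : C(ball x₀ ρ, C(I, F)) := ContinuousMap.curry
    ⟨fun p : ball x₀ ρ × I => f (p.1, circleMap z₀ ρ p.2), by
      refine hf.comp_continuous (by fun_prop) (fun p => hin _ p.1.2 _ (hcirc _))⟩
  classical
  let G : E → C(I, F) := fun x => if hx : x ∈ ball x₀ ρ then Gc ⟨x, hx⟩ else 0
  have hG : ∀ x ∈ ball x₀ ρ, ∀ θ : I, G x θ = f (x, circleMap z₀ ρ θ) := by
    intro x hx θ
    simp only [G, dif_pos hx]
    rfl
  have hGcont : ContinuousOn G (ball x₀ ρ) := by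
    rw [continuousOn_iff_continuous_domRestrict]
    convert Gc.continuous using 1
    ext x θ
    rw [domRestrict_apply, hG x.1 x.2 θ]
    rfl
  have hGan : AnalyticOnNhd ℂ G (ball x₀ ρ) := by
    refine h _ _ G isOpen_ball hGcont ?_
    intro x hx v
    have hopen : IsOpen ((fun t : ℂ => x + t • v) ⁻¹' (ball x₀ ρ)) :=
      isOpen_ball.preimage (by fun_prop)
    obtain ⟨r, hr, hrs⟩ := Metric.isOpen_iff.1 hopen 0 (by simpa using hx)
    refine differentiableAt_of_pointwise (fun θ : I => ContinuousMap.evalCLM ℂ θ)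
      (fun y y' hyy => ContinuousMap.ext hyy) (half_pos hr) _ ?_ ?_
    · refine hGcont.comp (by fun_prop) (fun t ht => ?_)
      exact hrs (lt_of_le_of_lt ht (half_lt_self hr))
    · intro θ t ht
      have ht' : x + t • v ∈ ball x₀ ρ := hrs (lt_trans ht (half_lt_self hr))
      have h1 := hd1 (x + t • v, circleMap z₀ ρ θ) (hin _ ht' _ (hcirc _)) v
      have h2 : DifferentiableAt ℂ (fun s : ℂ => f (x + s • v, circleMap z₀ ρ θ)) t := by
        have h3 : DifferentiableAt ℂ (fun s : ℂ => s - t) t := by fun_prop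
        have h1' : DifferentiableAt ℂ (fun s : ℂ => f (x + t • v + s • v, circleMap z₀ ρ θ))
          ((fun s : ℂ => s - t) t) := by simpa using h1
        refine (DifferentiableAt.comp
          (g := fun s : ℂ => f (x + t • v + s • v, circleMap z₀ ρ θ))
          (f := fun s : ℂ => s - t) t h1' h3).congr_of_eventuallyEq
          (Eventually.of_forall fun s => ?_)
        simp [sub_smul]
      refine (h2.congr_of_eventuallyEq ?_).differentiableWithinAt
      filter_upwards [hopen.mem_nhds ht'] with s hs
      exact hG _ hs θ
  -- the Cauchy kernel as an element of the Banach algebra of functions on the circle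
  let u : C(I, ℂ) := ⟨fun θ => circleMap z₀ ρ θ, by fun_prop⟩
  let du : C(I, ℂ) := ⟨fun θ => deriv (circleMap z₀ ρ) θ, by simp only [deriv_circleMap]; fun_prop⟩
  let k : ℂ → C(I, ℂ) := fun z => Ring.inverse (u - ContinuousMap.const I z)
  have hunit : ∀ z ∈ ball z₀ ρ, ∀ θ : I, (u - ContinuousMap.const I z) θ ≠ 0 := by
    intro z hz θ h0
    have : circleMap z₀ ρ θ = z := by simpa [u, sub_eq_zero] using h0
    have h2 := circleMap_mem_sphere z₀ hρ.le (θ : ℝ)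
    rw [this] at h2
    rw [mem_ball] at hz
    rw [mem_sphere] at h2
    linarith
  have hunit' : ∀ z ∈ ball z₀ ρ, IsUnit (u - ContinuousMap.const I z) := fun z hz =>
    ContinuousMap.isUnit_iff_forall_ne_zero _ |>.2 (hunit z hz)
  have hk : ∀ z ∈ ball z₀ ρ, ∀ θ : I, k z θ = (circleMap z₀ ρ θ - z)⁻¹ := by
    intro z hz θ
    have h1 := Ring.inverse_mul_cancel _ (hunit' z hz)
    have h2 := congrArg (fun w : C(I, ℂ) => w θ) h1
    exact eq_inv_of_mul_eq_one_left h2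
  have hkan : AnalyticAt ℂ k z₀ := by
    obtain ⟨w, hw⟩ := hunit' z₀ (mem_ball_self hρ)
    have hinv := analyticAt_inverse (𝕜 := ℂ) w
    rw [hw] at hinv
    refine AnalyticAt.fun_comp hinv ?_
    refine analyticAt_const.sub ?_
    have h5 : (fun z : ℂ => ContinuousMap.const I z) =
      fun z : ℂ => z • (1 : C(I, ℂ)) := by ext z θ; simp
    change AnalyticAt ℂ (fun z : ℂ => ContinuousMap.const I z) z₀
    rw [h5]
    fun_prop
  have hmain : AnalyticAt ℂ (fun p : E × ℂ =>
      (2 * Real.pi * Complex.I : ℂ)⁻¹ • icInt hpi F (du • k p.2 • G p.1)) (x₀, z₀) := by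
    refine analyticAt_const.smul (((icInt hpi F).analyticAt _).fun_comp ?_)
    have hb : AnalyticAt ℂ (fun q : C(I, ℂ) × C(I, F) => q.1 • q.2)
        (k z₀, G x₀) := by
      let B : C(I, ℂ) →L[ℂ] C(I, F) →L[ℂ] C(I, F) := LinearMap.mkContinuous₂
        (LinearMap.mk₂ ℂ (fun a b => a • b) (by intros; ext; simp [add_smul])
          (by intros; ext; simp [mul_smul]) (by intros; ext; simp)
          (by intro c m n; ext; simp [smul_comm c])) 1 (by
            intro a b
            rw [one_mul]
            refine (ContinuousMap.norm_le _ (by positivity)).2 fun θ => ?_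
            simp only [LinearMap.mk₂_apply, ContinuousMap.smul_apply', norm_smul]
            exact mul_le_mul (a.norm_coe_le_norm θ) (b.norm_coe_le_norm θ) (norm_nonneg _) (norm_nonneg _))
      exact B.analyticAt_bilinear (k z₀, G x₀)
    have hdu : AnalyticAt ℂ (fun q : C(I, F) => du • q) (k z₀ • G x₀) := by
      let D : C(I, F) →L[ℂ] C(I, F) := LinearMap.mkContinuous
        { toFun := fun q => du • q
          map_add' := by intros; ext; simp
          map_smul' := by intro c m; ext; simp [smul_comm c] } ‖du‖ (by
            intro b
            refine (ContinuousMap.norm_le _ (by positivity)).2 fun θ => ?_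
            simp only [LinearMap.coe_mk, AddHom.coe_mk, ContinuousMap.smul_apply', norm_smul]
            exact mul_le_mul (du.norm_coe_le_norm θ) (b.norm_coe_le_norm θ) (norm_nonneg _) (norm_nonneg _))
      exact D.analyticAt _
    refine hdu.fun_comp (f := fun p : E × ℂ => k p.2 • G p.1) ?_
    have hkp : AnalyticAt ℂ (fun p : E × ℂ => k p.2) (x₀, z₀) :=
      AnalyticAt.fun_comp (g := k) (f := fun p : E × ℂ => p.2) hkan analyticAt_snd
    have hGp : AnalyticAt ℂ (fun p : E × ℂ => G p.1) (x₀, z₀) :=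
      AnalyticAt.fun_comp (g := G) (f := fun p : E × ℂ => p.1) (hGan x₀ (mem_ball_self hρ)) analyticAt_fst
    exact AnalyticAt.fun_comp (f := fun p : E × ℂ => (k p.2, G p.1)) hb (hkp.prod hGp)
  refine hmain.congr ?_
  have hnb : ball x₀ ρ ×ˢ ball z₀ ρ ∈ 𝓝 (x₀, z₀) :=
    prod_mem_nhds (ball_mem_nhds _ hρ) (ball_mem_nhds _ hρ)
  filter_upwards [hnb] with p hp
  obtain ⟨x, z⟩ := p
  obtain ⟨hx, hz⟩ := hp
  simp only at hx hz
  rw [icInt_eq hpi (fun θ => deriv (circleMap z₀ ρ) θ • ((circleMap z₀ ρ θ - z)⁻¹ •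
    f (x, circleMap z₀ ρ θ))) _ (by
      intro θ
      simp only [ContinuousMap.smul_apply']
      rw [hk z hz θ, hG x hx θ]
      rfl)]
  have h2 : ∮ ζ in C(z₀, ρ), (ζ - z)⁻¹ • f (x, ζ) = (2 * Real.pi * Complex.I : ℂ) • f (x, z) := by
    refine Complex.circleIntegral_sub_inv_smul_of_differentiable_on_off_countable
      (f := fun ζ => f (x, ζ)) countable_empty hz
      (hf.comp (by fun_prop) (fun ζ hζ => hin x hx ζ hζ))
      (fun s hs => ?_)
    exact hd2 (x, s) (hin x hx s (ball_subset_closedBall hs.1))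
  rw [circleIntegral] at h2
  rw [h2, smul_smul, inv_mul_cancel₀ (by simp [Real.pi_ne_zero]), one_smul]

theorem Osgood.prod {E : Type} [NormedAddCommGroup E] [NormedSpace ℂ E] (h : Osgood E) :
    Osgood (E × ℂ) := by
  intro F _ _ _ U f hU hf hd
  refine h.prod' hU hf (fun p hp v => by
    obtain ⟨x, s⟩ := p
    simpa using hd (x, s) hp (v, 0)) (fun p hp => ?_)
  have h3 : DifferentiableAt ℂ (fun t : ℂ => t - p.2) p.2 := by fun_prop
  have h1' : DifferentiableAt ℂ (fun t : ℂ => f (p + t • ((0 : E), (1:ℂ))))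
    ((fun t : ℂ => t - p.2) p.2) := by simpa using hd p hp (0, 1)
  refine (DifferentiableAt.comp (g := fun t : ℂ => f (p + t • ((0 : E), (1:ℂ))))
    (f := fun t : ℂ => t - p.2) p.2 h1' h3).congr_of_eventuallyEq
    (Eventually.of_forall fun t => ?_)
  obtain ⟨x, s⟩ := p
  simp

theorem osgood_pi (n : ℕ) : Osgood (Fin n → ℂ) := by
  induction n with
  | zero =>
    intro F _ _ _ U f _ _ _ x _
    have : f = fun _ => f x := by ext y; rw [Subsingleton.elim y x]
    rw [this]; exact analyticAt_const
  | succ n ih =>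
    exact Osgood.equiv ((Fin.consEquivL ℂ (fun _ : Fin (n+1) => ℂ)).symm.trans
      (ContinuousLinearEquiv.prodComm ℂ ℂ (Fin n → ℂ))) ih.prod

/-- Osgood's lemma: every finite-dimensional space has the Osgood property. -/
theorem osgood (E : Type) [NormedAddCommGroup E] [NormedSpace ℂ E] [FiniteDimensional ℂ E] :
    Osgood E :=
  Osgood.equiv (ContinuousLinearEquiv.ofFinrankEq (by simp)) (osgood_pi (Module.finrank ℂ E))

end

/-! ### Limits and integrals of analytic functions -/

section

open Set Filter Topology Metric

section
variable {E F : Type} [NormedAddCommGroup E] [NormedSpace ℂ E] [FiniteDimensional ℂ E]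
  [NormedAddCommGroup F] [NormedSpace ℂ F] [CompleteSpace F]

/-- Weierstrass' convergence theorem in several variables, for Banach space valued functions. -/
theorem analyticOnNhd_of_tendstoLocallyUniformlyOn {f : ℕ → E → F} {g : E → F} {U : Set E}
    (hU : IsOpen U) (hf : ∀ n, AnalyticOnNhd ℂ (f n) U)
    (h : TendstoLocallyUniformlyOn f g atTop U) : AnalyticOnNhd ℂ g U := by
  refine osgood E F U g hU (h.continuousOn (Frequently.of_forall fun n => (hf n).continuousOn)) ?_
  intro x hx v
  have hopen : IsOpen ((fun t : ℂ => x + t • v) ⁻¹' U) := hU.preimage (by fun_prop)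
  have h1 : TendstoLocallyUniformlyOn (fun n => f n ∘ fun t : ℂ => x + t • v)
      (g ∘ fun t : ℂ => x + t • v) atTop ((fun t : ℂ => x + t • v) ⁻¹' U) :=
    h.comp _ (fun t ht => ht) (by fun_prop)
  have h2 := h1.differentiableOn (Eventually.of_forall fun n t ht => ?_) hopen
  · exact h2.differentiableAt (hopen.mem_nhds (by simpa using hx))
  · refine DifferentiableAt.differentiableWithinAt ?_
    exact DifferentiableAt.comp t (hf n _ ht).differentiableAt (by fun_prop)

/-- A jointly continuous family, as a continuous map into a space of continuous functions. -/
theorem exists_curry {X : Type} [TopologicalSpace X] {U : Set E} (G : E → X → F)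
    (hG : ContinuousOn (Function.uncurry G) (U ×ˢ univ)) :
    ∃ H : E → C(X, F), ContinuousOn H U ∧ ∀ x ∈ U, ∀ θ, H x θ = G x θ := by
  classical
  let Gc : C(U, C(X, F)) := ContinuousMap.curry
    ⟨fun p : U × X => G p.1 p.2,
      hG.comp_continuous (f := fun p : U × X => ((p.1 : E), p.2)) (by fun_prop)
        (fun p => ⟨p.1.2, mem_univ _⟩)⟩
  let H : E → C(X, F) := fun x => if hx : x ∈ U then Gc ⟨x, hx⟩ else 0
  have hH : ∀ x ∈ U, ∀ θ, H x θ = G x θ := by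
    intro x hx θ
    simp only [H, dif_pos hx]
    rfl
  refine ⟨H, ?_, hH⟩
  rw [continuousOn_iff_continuous_domRestrict]
  convert Gc.continuous using 1
  ext x θ
  rw [domRestrict_apply, hH x.1 x.2 θ]
  rfl

/-- A continuous Banach-valued map which is analytic after composition with a separating family of
continuous linear maps is analytic. -/
theorem analyticOnNhd_of_pointwise {X Y : Type} [NormedAddCommGroup Y] [NormedSpace ℂ Y]
    [CompleteSpace Y] (ev : X → Y →L[ℂ] F) (hev : ∀ y y' : Y, (∀ x, ev x y = ev x y') → y = y')
    {U : Set E} (hU : IsOpen U) (H : E → Y) (hc : ContinuousOn H U)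
    (ha : ∀ θ, AnalyticOnNhd ℂ (fun x => ev θ (H x)) U) : AnalyticOnNhd ℂ H U := by
  refine osgood E _ U H hU hc ?_
  intro x hx v
  have hopen : IsOpen ((fun t : ℂ => x + t • v) ⁻¹' U) := hU.preimage (by fun_prop)
  obtain ⟨r, hr, hrs⟩ := Metric.isOpen_iff.1 hopen 0 (by simpa using hx)
  refine differentiableAt_of_pointwise ev hev (half_pos hr) _ ?_ ?_
  · exact hc.comp (by fun_prop) (fun t ht => hrs (lt_of_le_of_lt ht (half_lt_self hr)))
  · intro θ t ht
    refine DifferentiableAt.differentiableWithinAt ?_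
    exact DifferentiableAt.comp (g := fun x => ev θ (H x)) t
      (ha θ _ (hrs (lt_trans ht (half_lt_self hr)))).differentiableAt (by fun_prop)

/-- Integrals over a compact interval of analytic functions depending continuously on the
integration variable are analytic. -/
theorem analyticOnNhd_intervalIntegral {U : Set E} (hU : IsOpen U) {a b : ℝ} (hab : a ≤ b)
    (G : E → ℝ → F) (hc : ContinuousOn (Function.uncurry G) (U ×ˢ Icc a b))
    (ha : ∀ τ ∈ Icc a b, AnalyticOnNhd ℂ (fun x => G x τ) U) :
    AnalyticOnNhd ℂ (fun x => ∫ τ in a..b, G x τ) U := by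
  obtain ⟨H, hHc, hH⟩ := exists_curry (X := Icc a b) (U := U) (fun x θ => G x θ)
    (hc.comp (f := fun p : E × Icc a b => (p.1, (p.2 : ℝ))) (by fun_prop)
      (fun p hp => ⟨hp.1, p.2.2⟩))
  have h1 := analyticOnNhd_of_pointwise (fun θ : Icc a b => ContinuousMap.evalCLM ℂ θ)
    (fun y y' hyy => ContinuousMap.ext hyy) hU H hHc (fun θ x hx =>
    (ha θ θ.2 x hx).congr (by
      filter_upwards [hU.mem_nhds hx] with y hy
      exact (hH y hy θ).symm))
  intro x hx
  refine (((icInt hab F).analyticAt _).fun_comp (h1 x hx)).congr ?_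
  filter_upwards [hU.mem_nhds hx] with y hy
  exact icInt_eq hab _ _ (hH y hy)

end

end

/-! ### The disc algebra -/

section

open Set Filter Topology Metric

/-- The disc algebra: continuous functions on a closed disc that are holomorphic inside. Membership
is phrased by means of an extension to `ℂ`. -/
def discAlg (t₀ : ℂ) (R : ℝ) : Subalgebra ℂ C(closedBall t₀ R, ℂ) where
  carrier := {φ | ∃ g : ℂ → ℂ, ContinuousOn g (closedBall t₀ R) ∧ DifferentiableOn ℂ g (ball t₀ R) ∧
    ∀ s : closedBall t₀ R, φ s = g s}
  mul_mem' := by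
    rintro φ ψ ⟨g, hg1, hg2, hg3⟩ ⟨k, hk1, hk2, hk3⟩
    exact ⟨fun s => g s * k s, hg1.mul hk1, hg2.mul hk2, fun s => by simp [hg3, hk3]⟩
  add_mem' := by
    rintro φ ψ ⟨g, hg1, hg2, hg3⟩ ⟨k, hk1, hk2, hk3⟩
    exact ⟨fun s => g s + k s, hg1.add hk1, hg2.add hk2, fun s => by simp [hg3, hk3]⟩
  algebraMap_mem' := fun r => ⟨fun _ => r, continuousOn_const, differentiableOn_const _,
    fun s => by simp⟩

theorem discAlg_isClosed (t₀ : ℂ) (R : ℝ) :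
    IsClosed (discAlg t₀ R : Set C(closedBall t₀ R, ℂ)) := by
  rw [← isSeqClosed_iff_isClosed]
  intro φ ψ hφ hlim
  choose g hg1 hg2 hg3 using hφ
  classical
  let k : ℂ → ℂ := fun s => if hs : s ∈ closedBall t₀ R then ψ ⟨s, hs⟩ else 0
  have hk : ∀ s : closedBall t₀ R, ψ s = k s := fun s => by simp only [k]; rw [dif_pos s.2]
  have hu : TendstoUniformlyOn g k atTop (closedBall t₀ R) := by
    have h1 := (ContinuousMap.tendsto_iff_tendstoUniformly.1 hlim)
    rw [Metric.tendstoUniformly_iff] at h1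
    rw [Metric.tendstoUniformlyOn_iff]
    intro ε hε
    filter_upwards [h1 ε hε] with n hn s hs
    have := hn ⟨s, hs⟩
    rwa [hk, hg3] at this
  refine ⟨k, hu.continuousOn (Frequently.of_forall fun n => hg1 n), ?_, hk⟩
  exact (hu.mono ball_subset_closedBall).tendstoLocallyUniformlyOn.differentiableOn
    (Eventually.of_forall fun n => hg2 n) isOpen_ball

instance (t₀ : ℂ) (R : ℝ) : CompleteSpace (discAlg t₀ R) :=
  (discAlg_isClosed t₀ R).completeSpace_coe

/-- Point evaluation on the disc algebra. -/
noncomputable def discEval {t₀ : ℂ} {R : ℝ} (s : closedBall t₀ R) : discAlg t₀ R →L[ℂ] ℂ where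
  toFun φ := φ.1 s
  map_add' _ _ := rfl
  map_smul' _ _ := rfl
  cont := (ContinuousMap.evalCLM ℂ s).continuous.comp continuous_subtype_val

theorem dslope_disc {t₀ : ℂ} {R : ℝ} (hR : 0 < R) {g : ℂ → ℂ}
    (h1 : ContinuousOn g (closedBall t₀ R)) (h2 : DifferentiableOn ℂ g (ball t₀ R)) :
    ContinuousOn (dslope g t₀) (closedBall t₀ R) ∧ DifferentiableOn ℂ (dslope g t₀) (ball t₀ R) := by
  have hb := ball_mem_nhds t₀ hR
  exact ⟨(continuousOn_dslope (closedBall_mem_nhds t₀ hR)).2 ⟨h1, h2.differentiableAt hb⟩,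
    (Complex.differentiableOn_dslope hb).2 h2⟩

/-- Division with remainder by `(t - t₀) ^ e` in the disc algebra. -/
theorem taylor_disc {t₀ : ℂ} {R : ℝ} (hR : 0 < R) (e : ℕ) {g : ℂ → ℂ}
    (h1 : ContinuousOn g (closedBall t₀ R)) (h2 : DifferentiableOn ℂ g (ball t₀ R)) :
    ∃ (p : Polynomial ℂ) (k : ℂ → ℂ), p.degree < e ∧ ContinuousOn k (closedBall t₀ R) ∧
      DifferentiableOn ℂ k (ball t₀ R) ∧ ∀ t, g t = p.eval t + (t - t₀) ^ e * k t := by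
  induction e with
  | zero => exact ⟨0, g, by simp, h1, h2, by simp⟩
  | succ e ih =>
    obtain ⟨p, k, hp, hk1, hk2, hk⟩ := ih
    refine ⟨p + k t₀ • (Polynomial.X - Polynomial.C t₀) ^ e, dslope k t₀, ?_,
      (dslope_disc hR hk1 hk2).1, (dslope_disc hR hk1 hk2).2, fun t => ?_⟩
    · refine lt_of_le_of_lt (Polynomial.degree_add_le _ _) (max_lt (hp.trans ?_) ?_)
      · exact_mod_cast Nat.lt_succ_self e
      · refine lt_of_le_of_lt (Polynomial.degree_smul_le _ _) ?_
        rw [Polynomial.degree_pow, Polynomial.degree_X_sub_C]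
        simp only [nsmul_eq_mul, mul_one]
        exact_mod_cast Nat.lt_succ_self e
    · have := sub_smul_dslope k t₀ t
      rw [smul_eq_mul] at this
      rw [hk t]
      simp only [Polynomial.eval_add, Polynomial.eval_smul, smul_eq_mul, Polynomial.eval_C, Polynomial.eval_pow,
        Polynomial.eval_sub, Polynomial.eval_X]
      have h3 : (t - t₀) ^ (e + 1) * dslope k t₀ t = (t - t₀) ^ e * (k t - k t₀) := by
        rw [← this]; ring
      rw [h3]; ring

/-- Uniqueness of the division by `(t - t₀) ^ e`. -/
theorem poly_eq_zero_of_order (t₀ : ℂ) (e : ℕ) (p : Polynomial ℂ) (hp : p.degree < e) (k : ℂ → ℂ)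
    (hk : ContinuousAt k t₀) (h : ∀ᶠ t in 𝓝[≠] t₀, p.eval t = (t - t₀) ^ e * k t) : p = 0 := by
  induction e generalizing p with
  | zero =>
    simpa [Polynomial.degree_eq_bot] using hp
  | succ e ih =>
    have h0 : p.eval t₀ = 0 := by
      have h1 : Tendsto (fun t => p.eval t) (𝓝[≠] t₀) (𝓝 (p.eval t₀)) :=
        p.continuous.continuousAt.mono_left nhdsWithin_le_nhds
      have h2 : Tendsto (fun t => (t - t₀) ^ (e + 1) * k t) (𝓝[≠] t₀)
          (𝓝 ((t₀ - t₀) ^ (e + 1) * k t₀)) := by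
        have : ContinuousAt (fun t => (t - t₀) ^ (e + 1) * k t) t₀ := by fun_prop
        exact this.mono_left nhdsWithin_le_nhds
      have h3 := tendsto_nhds_unique (h1.congr' h) h2
      simpa using h3
    obtain ⟨p1, rfl⟩ := Polynomial.dvd_iff_isRoot.2 h0
    have hp1 : p1 = 0 := by
      refine ih p1 ?_ ?_
      · by_cases hz : p1 = 0
        · simp only [hz, Polynomial.degree_zero]; exact WithBot.bot_lt_coe e
        rw [Polynomial.degree_mul, Polynomial.degree_X_sub_C, Polynomial.degree_eq_natDegree hz] at hp
        rw [Polynomial.degree_eq_natDegree hz]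
        have : 1 + p1.natDegree < e + 1 := by exact_mod_cast hp
        exact_mod_cast (by omega : p1.natDegree < e)
      · filter_upwards [h, self_mem_nhdsWithin] with t ht hne
        have hne' : t - t₀ ≠ 0 := sub_ne_zero.2 hne
        simp only [Polynomial.eval_mul, Polynomial.eval_sub, Polynomial.eval_X,
          Polynomial.eval_C] at ht
        apply mul_left_cancel₀ hne'
        rw [ht]; ring
    simp [hp1]

section
variable {E : Type} [NormedAddCommGroup E] [NormedSpace ℂ E] [FiniteDimensional ℂ E]

/-- A function analytic on a neighbourhood of a polydisc is an analytic map from the parameters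
to the disc algebra. -/
theorem exists_lift {x₀ : E} {t₀ : ℂ} {ρ R : ℝ} {f : E × ℂ → ℂ}
    (hf : AnalyticOnNhd ℂ f (ball x₀ ρ ×ˢ closedBall t₀ R)) :
    ∃ H : E → discAlg t₀ R, AnalyticOnNhd ℂ H (ball x₀ ρ) ∧
      ∀ x ∈ ball x₀ ρ, ∀ s : closedBall t₀ R, (H x).1 s = f (x, s) := by
  obtain ⟨H', hc, hH'⟩ := exists_curry (X := closedBall t₀ R) (U := ball x₀ ρ)
    (fun x s => f (x, s)) (hf.continuousOn.comp (f := fun p : E × closedBall t₀ R => (p.1, (p.2 : ℂ)))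
      (by fun_prop) (fun p hp => ⟨hp.1, p.2.2⟩))
  have hmem : ∀ x ∈ ball x₀ ρ, H' x ∈ discAlg t₀ R := by
    intro x hx
    refine ⟨fun s => f (x, s), ?_, ?_, hH' x hx⟩
    · exact hf.continuousOn.comp (by fun_prop) (fun s hs => ⟨hx, hs⟩)
    · intro s hs
      refine DifferentiableAt.differentiableWithinAt ?_
      exact DifferentiableAt.comp (g := f) s
        (hf (x, s) ⟨hx, ball_subset_closedBall hs⟩).differentiableAt (by fun_prop)
  classical
  let H : E → discAlg t₀ R := fun x => if h : H' x ∈ discAlg t₀ R then ⟨H' x, h⟩ else 0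
  have hH : ∀ x ∈ ball x₀ ρ, (H x).1 = H' x := by
    intro x hx
    simp only [H]
    rw [dif_pos (hmem x hx)]
  have hHs : ∀ x ∈ ball x₀ ρ, ∀ s : closedBall t₀ R, (H x).1 s = f (x, s) := by
    intro x hx s
    rw [hH x hx, hH' x hx]
  refine ⟨H, ?_, hHs⟩
  refine analyticOnNhd_of_pointwise (fun s : closedBall t₀ R => discEval s) ?_ isOpen_ball H ?_ ?_
  · intro y y' h
    exact Subtype.ext (ContinuousMap.ext h)
  · rw [Topology.IsInducing.subtypeVal.continuousOn_iff]
    exact hc.congr (fun x hx => hH x hx)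
  · intro s x hx
    have h1 : AnalyticAt ℂ (fun x => f (x, (s : ℂ))) x :=
      AnalyticAt.fun_comp (g := f) (f := fun x => (x, (s : ℂ))) (hf (x, s) ⟨hx, s.2⟩)
        (analyticAt_id.prod analyticAt_const)
    refine h1.congr ?_
    filter_upwards [isOpen_ball.mem_nhds hx] with y hy
    exact (hHs y hy s).symm

/-- Converse of `exists_lift`: an analytic map to the disc algebra is a function analytic in both
variables. -/
theorem exists_unlift {t₀ : ℂ} {R : ℝ} {U : Set E} (hU : IsOpen U) (q : E → discAlg t₀ R)
    (hq : AnalyticOnNhd ℂ q U) : ∃ Q : E × ℂ → ℂ, AnalyticOnNhd ℂ Q (U ×ˢ ball t₀ R) ∧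
      ∀ x (s : closedBall t₀ R), Q (x, s) = (q x).1 s := by
  classical
  let Q : E × ℂ → ℂ := fun p => if h : p.2 ∈ closedBall t₀ R then (q p.1).1 ⟨p.2, h⟩ else 0
  have hQ : ∀ x (s : closedBall t₀ R), Q (x, s) = (q x).1 s := by
    intro x s
    simp only [Q]
    rw [dif_pos s.2]
  refine ⟨Q, ?_, hQ⟩
  refine (osgood E).prod' (hU.prod isOpen_ball) ?_ ?_ ?_
  · rw [continuousOn_iff_continuous_domRestrict]
    have hqc : Continuous (fun p : (U ×ˢ ball t₀ R : Set (E × ℂ)) => (q p.1.1).1) := by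
      have : ContinuousOn (fun p : E × ℂ => (q p.1).1) (U ×ˢ ball t₀ R) :=
        continuous_subtype_val.comp_continuousOn
          (hq.continuousOn.comp continuous_fst.continuousOn (fun p hp => hp.1))
      exact continuousOn_iff_continuous_domRestrict.1 this
    have hs : Continuous (fun p : (U ×ˢ ball t₀ R : Set (E × ℂ)) =>
        (⟨p.1.2, ball_subset_closedBall p.2.2⟩ : closedBall t₀ R)) := by fun_prop
    have := ContinuousEval.continuous_eval.comp (hqc.prodMk hs)
    convert this using 1
    ext p
    exact hQ p.1.1 ⟨p.1.2, ball_subset_closedBall p.2.2⟩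
  · rintro ⟨x, s⟩ ⟨hx, hs⟩ v
    have h1 : DifferentiableAt ℂ (fun t : ℂ => q (x + t • v)) 0 :=
      DifferentiableAt.comp (g := q) 0 (by simpa using (hq x hx).differentiableAt) (by fun_prop)
    have h2 := (discEval (⟨s, ball_subset_closedBall hs⟩ : closedBall t₀ R)).differentiableAt.comp 0 h1
    refine h2.congr_of_eventuallyEq (Eventually.of_forall fun t => ?_)
    exact hQ (x + t • v) ⟨s, ball_subset_closedBall hs⟩
  · rintro ⟨x, s⟩ ⟨hx, hs⟩
    obtain ⟨g, hg1, hg2, hg3⟩ := (q x).2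
    refine (hg2.differentiableAt (isOpen_ball.mem_nhds hs)).congr_of_eventuallyEq ?_
    filter_upwards [isOpen_ball.mem_nhds hs] with t ht
    exact (hQ x ⟨t, ball_subset_closedBall ht⟩).trans (hg3 _)

end

end

/-! ### Weierstrass division -/

section

open Set Filter Topology Metric

section
variable {E : Type} [NormedAddCommGroup E] [NormedSpace ℂ E] [FiniteDimensional ℂ E]

/-- The polynomial function `∑ rᵢ tⁱ` as an element of the disc algebra. -/
noncomputable def discPoly (t₀ : ℂ) (R : ℝ) (e : ℕ) : (Fin e → ℂ) →L[ℂ] discAlg t₀ R :=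
  LinearMap.toContinuousLinearMap
    { toFun := fun r => ⟨⟨fun s => ∑ i, r i * (s : ℂ) ^ (i : ℕ), by fun_prop⟩,
        fun s => ∑ i, r i * (s : ℂ) ^ (i : ℕ), by fun_prop, by fun_prop, fun s => rfl⟩
      map_add' := fun r r' => Subtype.ext (ContinuousMap.ext fun s => by
        simp [add_mul, Finset.sum_add_distrib])
      map_smul' := fun c r => Subtype.ext (ContinuousMap.ext fun s => by
        simp [mul_assoc, Finset.mul_sum]) }

theorem discPoly_apply (t₀ : ℂ) (R : ℝ) (e : ℕ) (r : Fin e → ℂ) (s : closedBall t₀ R) :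
    (discPoly t₀ R e r).1 s = ∑ i, r i * (s : ℂ) ^ (i : ℕ) := rfl

theorem poly_fin_eval {e : ℕ} (p : Polynomial ℂ) (hp : p.degree < e) (t : ℂ) :
    p.eval t = ∑ i : Fin e, p.coeff i * t ^ (i : ℕ) := by
  rw [Polynomial.eval_eq_sum_degreeLTEquiv (Polynomial.mem_degreeLT.2 hp)]
  rfl

/-- The division operator `(q, r) ↦ φ q + ∑ rᵢ tⁱ` on the disc algebra. -/
noncomputable def divOp {t₀ : ℂ} {R : ℝ} (e : ℕ) (φ : discAlg t₀ R) :
    (discAlg t₀ R × (Fin e → ℂ)) →L[ℂ] discAlg t₀ R :=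
  (ContinuousLinearMap.mul ℂ (discAlg t₀ R) φ).coprod (discPoly t₀ R e)

theorem divOp_apply {t₀ : ℂ} {R : ℝ} (e : ℕ) (φ q : discAlg t₀ R) (r : Fin e → ℂ)
    (s : closedBall t₀ R) :
    (divOp e φ (q, r)).1 s = φ.1 s * q.1 s + ∑ i, r i * (s : ℂ) ^ (i : ℕ) := rfl

/-- Division by a function with exactly one zero, at the centre and of order `e`, is possible and
unique in the disc algebra. -/
theorem divOp_bijective {t₀ : ℂ} {R : ℝ} (hR : 0 < R) (e : ℕ) (φ : discAlg t₀ R) (u : ℂ → ℂ)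
    (hu1 : ContinuousOn u (closedBall t₀ R)) (hu2 : DifferentiableOn ℂ u (ball t₀ R))
    (hu0 : ∀ s ∈ closedBall t₀ R, u s ≠ 0)
    (hφ : ∀ s : closedBall t₀ R, φ.1 s = ((s : ℂ) - t₀) ^ e * u s) :
    Function.Bijective (divOp e φ) := by
  constructor
  · rw [injective_iff_map_eq_zero]
    rintro ⟨q, r⟩ h
    have hs : ∀ s : closedBall t₀ R,
        ((s : ℂ) - t₀) ^ e * u s * q.1 s + ∑ i, r i * (s : ℂ) ^ (i : ℕ) = 0 := by
      intro s
      rw [← hφ, ← divOp_apply, h]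
      rfl
    obtain ⟨g, hg1, hg2, hg3⟩ := q.2
    have hb : closedBall t₀ R ∈ 𝓝 t₀ := closedBall_mem_nhds t₀ hR
    let p : Polynomial ℂ := ∑ i : Fin e, Polynomial.C (r i) * Polynomial.X ^ (i : ℕ)
    have hpe : ∀ t, p.eval t = ∑ i : Fin e, r i * t ^ (i : ℕ) := fun t => by
      simp [p, Polynomial.eval_finset_sum]
    have hpd : p.degree < e := by
      refine (Polynomial.degree_sum_le _ _).trans_lt ?_
      refine (Finset.sup_lt_iff (WithBot.bot_lt_coe e)).2 ?_
      intro i _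
      exact (Polynomial.degree_C_mul_X_pow_le _ _).trans_lt (WithBot.coe_lt_coe.2 i.2)
    have hpc : ∀ i : Fin e, p.coeff i = r i := by
      intro i
      simp only [p, Polynomial.finset_sum_coeff, Polynomial.coeff_C_mul, Polynomial.coeff_X_pow]
      simp [Fin.val_inj]
    have hp0 : p = 0 := by
      refine poly_eq_zero_of_order t₀ e p hpd (fun t => - (u t * g t)) ?_ ?_
      · exact ((hu1.continuousAt hb).mul (hg1.continuousAt hb)).neg
      · filter_upwards [mem_nhdsWithin_of_mem_nhds hb] with t ht
        have := hs ⟨t, ht⟩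
        rw [hg3] at this
        rw [hpe]
        linear_combination this
    have hr : r = 0 := by
      ext i
      rw [← hpc i, hp0]; simp
    have hq : q = 0 := by
      apply Subtype.ext
      have hg0 : ∀ s ∈ closedBall t₀ R, g s = 0 := by
        have hne : ∀ s ∈ closedBall t₀ R, s ≠ t₀ → g s = 0 := by
          intro s hs' hne
          have := hs ⟨s, hs'⟩
          rw [hg3, hr] at this
          simpa [sub_eq_zero, hne, hu0 s hs'] using this
        intro s hs'
        by_cases hst : s = t₀
        · rw [hst]
          have h1 : Tendsto g (𝓝[≠] t₀) (𝓝 (g t₀)) :=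
            (hg1.continuousAt hb).mono_left nhdsWithin_le_nhds
          have h2 : Tendsto g (𝓝[≠] t₀) (𝓝 0) := by
            refine tendsto_const_nhds.congr' ?_
            filter_upwards [mem_nhdsWithin_of_mem_nhds hb, self_mem_nhdsWithin] with t ht hne'
            exact (hne t ht hne').symm
          exact tendsto_nhds_unique h1 h2
        · exact hne s hs' hst
      ext s
      rw [hg3, hg0 s s.2]; rfl
    rw [hr, hq]; rfl
  · intro ψ
    obtain ⟨g, hg1, hg2, hg3⟩ := ψ.2
    obtain ⟨p, k, hp, hk1, hk2, hk⟩ := taylor_disc hR e hg1 hg2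
    have hc : ContinuousOn (fun s => k s * (u s)⁻¹) (closedBall t₀ R) := hk1.mul (hu1.inv₀ hu0)
    refine ⟨(⟨⟨fun s => k s * (u s)⁻¹, hc.domRestrict⟩, fun s => k s * (u s)⁻¹, hc,
      hk2.mul (hu2.inv (fun s hs => hu0 s (ball_subset_closedBall hs))), fun s => rfl⟩,
      fun i => p.coeff i), ?_⟩
    apply Subtype.ext
    ext s
    rw [divOp_apply, hφ, hg3, hk, poly_fin_eval p hp]
    have := hu0 s s.2
    change ((s : ℂ) - t₀) ^ e * u s * (k s * (u s)⁻¹) + _ = _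
    field_simp
    ring

/-- Local data for division by `f` at `(x₀, t₀)`: on a small polydisc the division operators
attached to the slices of `f` are invertible, with inverse analytic in the parameter. -/
theorem divOp_inverse {x₀ : E} {t₀ : ℂ} {R : ℝ} (hR : 0 < R) (e : ℕ) (H : E → discAlg t₀ R)
    (hH : AnalyticAt ℂ H x₀) (u : ℂ → ℂ)
    (hu1 : ContinuousOn u (closedBall t₀ R)) (hu2 : DifferentiableOn ℂ u (ball t₀ R))
    (hu0 : ∀ s ∈ closedBall t₀ R, u s ≠ 0)
    (hφ : ∀ s : closedBall t₀ R, (H x₀).1 s = ((s : ℂ) - t₀) ^ e * u s) :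
    ∃ S : E → discAlg t₀ R →L[ℂ] (discAlg t₀ R × (Fin e → ℂ)), AnalyticAt ℂ S x₀ ∧
      ∀ᶠ x in 𝓝 x₀, (∀ y, divOp e (H x) (S x y) = y) ∧ ∀ y, S x (divOp e (H x) y) = y := by
  have hbij := divOp_bijective hR e (H x₀) u hu1 hu2 hu0 hφ
  let Eq := ContinuousLinearEquiv.ofBijective (divOp e (H x₀))
    (LinearMap.ker_eq_bot.2 hbij.1) (LinearMap.range_eq_top.2 hbij.2)
  have hEq : (Eq : (discAlg t₀ R × (Fin e → ℂ)) →L[ℂ] discAlg t₀ R) = divOp e (H x₀) := by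
    ext <;> rfl
  have hT : AnalyticAt ℂ (fun x => divOp e (H x)) x₀ := by
    have h1 : (fun x => divOp e (H x)) = fun x =>
        ((ContinuousLinearMap.compL ℂ (discAlg t₀ R × (Fin e → ℂ)) (discAlg t₀ R)
          (discAlg t₀ R)).flip (ContinuousLinearMap.fst ℂ _ _)).comp
            (ContinuousLinearMap.mul ℂ (discAlg t₀ R)) (H x) +
          (discPoly t₀ R e).comp (ContinuousLinearMap.snd ℂ _ _) := by
      ext x <;> simp [divOp]
    rw [h1]
    exact ((ContinuousLinearMap.analyticAt _ _).fun_comp hH).add analyticAt_const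
  have hinv : AnalyticAt ℂ (ContinuousLinearMap.inverse :
      ((discAlg t₀ R × (Fin e → ℂ)) →L[ℂ] discAlg t₀ R) → _) (divOp e (H x₀)) := by
    rw [← hEq]
    exact (contDiffAt_map_inverse (n := ⊤) Eq).analyticAt
  refine ⟨fun x => (divOp e (H x)).inverse, AnalyticAt.fun_comp (f := fun x => divOp e (H x)) hinv hT, ?_⟩
  have hnh := Eq.nhds
  rw [hEq] at hnh
  filter_upwards [hT.continuousAt hnh] with x hx
  obtain ⟨e', he'⟩ := hx
  simp only at he'
  rw [← he']
  simp

theorem analyticAt_clm_app {A B : Type} [NormedAddCommGroup A] [NormedSpace ℂ A]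
    [NormedAddCommGroup B] [NormedSpace ℂ B] {S : E → A →L[ℂ] B} {v : E → A} {x : E}
    (hS : AnalyticAt ℂ S x) (hv : AnalyticAt ℂ v x) : AnalyticAt ℂ (fun x => S x (v x)) x := by
  have hb := (ContinuousLinearMap.id ℂ (A →L[ℂ] B)).analyticAt_bilinear (S x, v x)
  exact AnalyticAt.fun_comp (f := fun x => (S x, v x)) hb (hS.prod hv)

theorem exists_polydisc {x₀ : E} {t₀ : ℂ} {P : E × ℂ → Prop} (h : ∀ᶠ p in 𝓝 (x₀, t₀), P p) :
    ∃ r > 0, ∀ R ≤ r, ∀ p ∈ ball x₀ R ×ˢ closedBall t₀ R, P p := by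
  obtain ⟨ε, hε, h⟩ := Metric.eventually_nhds_iff.1 h
  refine ⟨ε / 2, half_pos hε, fun R hR p hp => h ?_⟩
  rw [Prod.dist_eq]
  have h1 : dist p.1 x₀ < R := hp.1
  have h2 : dist p.2 t₀ ≤ R := hp.2
  exact max_lt (by linarith) (by linarith)

/-- Weierstrass division, existence. -/
theorem weierstrass_exists {x₀ : E} {t₀ : ℂ} {f g : E × ℂ → ℂ} (hf : AnalyticAt ℂ f (x₀, t₀))
    (hg : AnalyticAt ℂ g (x₀, t₀)) (e : ℕ) (u : ℂ → ℂ) (hu : AnalyticAt ℂ u t₀) (hu0 : u t₀ ≠ 0)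
    (hfu : ∀ᶠ t in 𝓝 t₀, f (x₀, t) = (t - t₀) ^ e * u t) :
    ∃ (q : E × ℂ → ℂ) (r : Fin e → E → ℂ), AnalyticAt ℂ q (x₀, t₀) ∧ (∀ i, AnalyticAt ℂ (r i) x₀) ∧
      ∀ᶠ p in 𝓝 (x₀, t₀), g p = f p * q p + ∑ i, r i p.1 * p.2 ^ (i : ℕ) := by
  have hev : ∀ᶠ p : E × ℂ in 𝓝 (x₀, t₀), AnalyticAt ℂ f p ∧ AnalyticAt ℂ g p ∧
      AnalyticAt ℂ u p.2 ∧ u p.2 ≠ 0 ∧ f (x₀, p.2) = (p.2 - t₀) ^ e * u p.2 := by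
    have ht : Tendsto (fun p : E × ℂ => p.2) (𝓝 (x₀, t₀)) (𝓝 t₀) := continuous_snd.tendsto _
    filter_upwards [hf.eventually_analyticAt, hg.eventually_analyticAt,
      ht.eventually hu.eventually_analyticAt, ht.eventually (hu.continuousAt.eventually_ne hu0),
      ht.eventually hfu] with p h1 h2 h3 h4 h5
    exact ⟨h1, h2, h3, h4, h5⟩
  obtain ⟨R, hR, h⟩ := exists_polydisc hev
  replace h := h R le_rfl
  have hx : x₀ ∈ ball x₀ R := mem_ball_self hR
  obtain ⟨Hf, hHf, hHf'⟩ := exists_lift (fun p hp => (h p hp).1)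
  obtain ⟨Hg, hHg, hHg'⟩ := exists_lift (fun p hp => (h p hp).2.1)
  obtain ⟨S, hS, hS'⟩ := divOp_inverse hR e Hf (hHf x₀ hx) u
    (fun s hs => (h (x₀, s) ⟨hx, hs⟩).2.2.1.continuousAt.continuousWithinAt)
    (fun s hs => (h (x₀, s) ⟨hx, ball_subset_closedBall hs⟩).2.2.1.differentiableAt.differentiableWithinAt)
    (fun s hs => (h (x₀, s) ⟨hx, hs⟩).2.2.2.1)
    (fun s => by rw [hHf' x₀ hx]; exact (h (x₀, s) ⟨hx, s.2⟩).2.2.2.2)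
  have hSg : AnalyticAt ℂ (fun x => S x (Hg x)) x₀ := analyticAt_clm_app hS (hHg x₀ hx)
  obtain ⟨V, hV, hVo, hxV⟩ := _root_.eventually_nhds_iff.1 (hSg.eventually_analyticAt)
  obtain ⟨Q, hQ, hQ'⟩ := exists_unlift hVo (fun x => (S x (Hg x)).1) (fun x hx =>
    ((ContinuousLinearMap.fst ℂ (discAlg t₀ R) (Fin e → ℂ)).analyticAt _).fun_comp (hV x hx))
  refine ⟨Q, fun i x => (S x (Hg x)).2 i, hQ _ ⟨hxV, mem_ball_self hR⟩, fun i => ?_, ?_⟩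
  · exact (((ContinuousLinearMap.proj (R := ℂ) (φ := fun _ : Fin e => ℂ) i).comp
      (ContinuousLinearMap.snd ℂ (discAlg t₀ R) (Fin e → ℂ))).analyticAt _).fun_comp hSg
  · have hx' : ∀ᶠ p : E × ℂ in 𝓝 (x₀, t₀), p.1 ∈ ball x₀ R :=
      (continuous_fst.tendsto (x₀, t₀)).eventually (isOpen_ball.mem_nhds hx)
    have ht' : ∀ᶠ p : E × ℂ in 𝓝 (x₀, t₀), p.2 ∈ ball t₀ R :=
      (continuous_snd.tendsto (x₀, t₀)).eventually (ball_mem_nhds t₀ hR)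
    filter_upwards [hx', ht', (continuous_fst.tendsto (x₀, t₀)).eventually hS'] with p h1 h2 h3
    obtain ⟨x, t⟩ := p
    have h4 := h3.1 (Hg x)
    let s : closedBall t₀ R := ⟨t, ball_subset_closedBall h2⟩
    have h5 := congrArg (fun y : discAlg t₀ R => y.1 s) h4
    simp only at h5
    rw [hHg' x h1, divOp_apply, hHf' x h1, ← hQ'] at h5
    exact h5.symm

/-- Weierstrass division, uniqueness. -/
theorem weierstrass_unique {x₀ : E} {t₀ : ℂ} {f q : E × ℂ → ℂ} (hf : AnalyticAt ℂ f (x₀, t₀))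
    (hq : AnalyticAt ℂ q (x₀, t₀)) (e : ℕ) (u : ℂ → ℂ) (hu : AnalyticAt ℂ u t₀) (hu0 : u t₀ ≠ 0)
    (hfu : ∀ᶠ t in 𝓝 t₀, f (x₀, t) = (t - t₀) ^ e * u t) (r : Fin e → E → ℂ)
    (h0 : ∀ᶠ p in 𝓝 (x₀, t₀), f p * q p + ∑ i, r i p.1 * p.2 ^ (i : ℕ) = 0) :
    (∀ᶠ p in 𝓝 (x₀, t₀), q p = 0) ∧ ∀ i, ∀ᶠ x in 𝓝 x₀, r i x = 0 := by
  have hev : ∀ᶠ p : E × ℂ in 𝓝 (x₀, t₀), AnalyticAt ℂ f p ∧ AnalyticAt ℂ q p ∧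
      AnalyticAt ℂ u p.2 ∧ u p.2 ≠ 0 ∧ f (x₀, p.2) = (p.2 - t₀) ^ e * u p.2 ∧
      f p * q p + ∑ i, r i p.1 * p.2 ^ (i : ℕ) = 0 := by
    have ht : Tendsto (fun p : E × ℂ => p.2) (𝓝 (x₀, t₀)) (𝓝 t₀) := continuous_snd.tendsto _
    filter_upwards [hf.eventually_analyticAt, hq.eventually_analyticAt,
      ht.eventually hu.eventually_analyticAt, ht.eventually (hu.continuousAt.eventually_ne hu0),
      ht.eventually hfu, h0] with p h1 h2 h3 h4 h5 h6
    exact ⟨h1, h2, h3, h4, h5, h6⟩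
  obtain ⟨R, hR, h⟩ := exists_polydisc hev
  replace h := h R le_rfl
  have hx : x₀ ∈ ball x₀ R := mem_ball_self hR
  obtain ⟨Hf, hHf, hHf'⟩ := exists_lift (fun p hp => (h p hp).1)
  obtain ⟨Hq, hHq, hHq'⟩ := exists_lift (fun p hp => (h p hp).2.1)
  obtain ⟨S, hS, hS'⟩ := divOp_inverse hR e Hf (hHf x₀ hx) u
    (fun s hs => (h (x₀, s) ⟨hx, hs⟩).2.2.1.continuousAt.continuousWithinAt)
    (fun s hs => (h (x₀, s) ⟨hx, ball_subset_closedBall hs⟩).2.2.1.differentiableAt.differentiableWithinAt)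
    (fun s hs => (h (x₀, s) ⟨hx, hs⟩).2.2.2.1)
    (fun s => by rw [hHf' x₀ hx]; exact (h (x₀, s) ⟨hx, s.2⟩).2.2.2.2.1)
  have key : ∀ᶠ x in 𝓝 x₀, x ∈ ball x₀ R ∧ Hq x = 0 ∧ ∀ i, r i x = 0 := by
    filter_upwards [hS', isOpen_ball.mem_nhds hx] with x h1 h2
    have h3 : divOp e (Hf x) (Hq x, fun i => r i x) = 0 := by
      apply Subtype.ext
      ext s
      rw [divOp_apply, hHf' x h2, hHq' x h2]
      exact (h (x, s) ⟨h2, s.2⟩).2.2.2.2.2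
    have h4 := h1.2 (Hq x, fun i => r i x)
    rw [h3, map_zero] at h4
    have h5 := Prod.ext_iff.1 h4
    exact ⟨h2, h5.1.symm, fun i => (congrFun h5.2 i).symm⟩
  refine ⟨?_, fun i => key.mono fun x hx => hx.2.2 i⟩
  filter_upwards [(continuous_fst.tendsto (x₀, t₀)).eventually key,
    (continuous_snd.tendsto (x₀, t₀)).eventually (ball_mem_nhds t₀ hR)] with p h1 h2
  have := hHq' p.1 h1.1 ⟨p.2, ball_subset_closedBall h2⟩
  rw [h1.2.1] at this
  exact this.symm

end

end

/-! ### The algebra behind Oka's theorem -/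

section

open Set Filter Topology Metric Polynomial

theorem degree_mul_lt_add {A : Type} [CommRing A] {p q : A[X]} {m k : ℕ} (hp : p.degree < m)
    (hq : q.degree < k) : (p * q).degree < ((m + k : ℕ) : WithBot ℕ) := by
  by_cases h1 : p = 0
  · simp [h1]
  by_cases h2 : q = 0
  · simp [h2]
  rw [degree_lt_iff_coeff_zero] at *
  intro N hN
  rw [coeff_mul]
  refine Finset.sum_eq_zero fun x hx => ?_
  have hx' : x.1 + x.2 = N := by simpa using hx
  by_cases hm : m ≤ x.1
  · rw [hp _ hm, zero_mul]
  · rw [hq _ (by omega), mul_zero]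

/-- The purely algebraic heart of Oka's theorem: if division by `ev W` with remainders of degree
`< e` is possible and unique in `B`, then every `B`-relation between the `ev (r j)` and `ev W` is
a combination of the Koszul relations and of one relation with polynomial entries of
degree `< d`. -/
theorem alg_rel {A B κ : Type} [CommRing A] [Nontrivial A] [CommRing B] [Fintype κ]
    (ev : A[X] →+* B) (W : A[X]) (d e : ℕ) (hW : W.Monic) (hWd : W.natDegree = d)
    (r : κ → A[X]) (hr : ∀ j, (r j).degree < d)
    (hdiv : ∀ b : B, ∃ (q : B) (s : A[X]), s.degree < e ∧ b = ev W * q + ev s)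
    (huniq : ∀ (b : B) (s : A[X]), s.degree < e → ev W * b + ev s = 0 → b = 0 ∧ s = 0)
    (g : κ → B) (gW : B) (hg : ∑ j, ev (r j) * g j + ev W * gW = 0) :
    ∃ (q : κ → B) (c : B) (p : κ → A[X]) (pW : A[X]), (∀ j, (p j).degree < d) ∧ pW.degree < d ∧
      ∑ j, r j * p j + W * pW = 0 ∧ (∀ j, g j = ev W * q j + c * ev (p j)) ∧
      gW = - ∑ j, ev (r j) * q j + c * ev pW := by
  obtain ⟨q, s, hs, hq⟩ := hdiv (ev (X ^ e))
  -- the distinguished polynomial of degree `e`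
  set W₁ : A[X] := X ^ e - s with hW₁
  have hW₁m : W₁.Monic := monic_X_pow_sub hs
  have hW₁d : W₁.degree = e := by
    rw [hW₁, degree_sub_eq_left_of_degree_lt, degree_X_pow]
    rwa [degree_X_pow]
  have hevW₁ : ev W₁ = ev W * q := by
    rw [hW₁, map_sub, hq]; ring
  set V := W /ₘ W₁ with hV
  have hS : (W %ₘ W₁).degree < e := by
    have := degree_modByMonic_lt W hW₁m
    rwa [hW₁d] at this
  have hWS := modByMonic_add_div W W₁
  rw [← hV] at hWS
  obtain ⟨h1, h2⟩ := huniq (q * ev V - 1) (W %ₘ W₁) hS (by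
    have := congrArg ev hWS
    rw [map_add, map_mul, hevW₁] at this
    linear_combination this)
  rw [h2, zero_add] at hWS
  have hVm : V.Monic := hW₁m.of_mul_monic_left (hWS ▸ hW)
  have hde : e + V.natDegree = d := by
    rw [← hWd, ← hWS, hW₁m.natDegree_mul hVm]
    congr 1
    exact (natDegree_eq_of_degree_eq_some hW₁d).symm
  choose qj ρ hρ hgj using fun j => hdiv (g j)
  set P := ∑ j, r j * ρ j with hP
  have hPS : (P %ₘ W₁).degree < e := by
    have := degree_modByMonic_lt P hW₁m
    rwa [hW₁d] at this
  have hPQ := modByMonic_add_div P W₁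
  set Q := P /ₘ W₁ with hQ
  set g' := gW + ∑ j, ev (r j) * qj j with hg'
  have hrel : ev P + ev W * g' = 0 := by
    rw [hP, map_sum, hg', mul_add, Finset.mul_sum, ← hg]
    have : ∑ j, ev (r j) * g j = ∑ j, ev (r j * ρ j) + ∑ j, ev W * (ev (r j) * qj j) := by
      rw [← Finset.sum_add_distrib]
      refine Finset.sum_congr rfl fun j _ => ?_
      rw [hgj j, map_mul]; ring
    rw [this]; ring
  obtain ⟨h3, h4⟩ := huniq (g' + q * ev Q) (P %ₘ W₁) hPS (by
    rw [← hPQ, map_add, map_mul, hevW₁] at hrel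
    linear_combination hrel)
  rw [h4, zero_add] at hPQ
  have hpd : ∀ j, (V * ρ j).degree < d := by
    intro j
    rw [mul_comm, hVm.degree_mul]
    by_cases hz : ρ j = 0
    · simp [hz]
    · rw [degree_eq_natDegree hVm.ne_zero, degree_eq_natDegree hz, add_comm]
      have := (natDegree_lt_iff_degree_lt hz).2 (hρ j)
      exact_mod_cast (by omega : V.natDegree + (ρ j).natDegree < d)
  have hsum : ∑ j, r j * (V * ρ j) + W * (-Q) = 0 := by
    have : ∑ j, r j * (V * ρ j) = V * P := by
      rw [hP, Finset.mul_sum]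
      exact Finset.sum_congr rfl fun j _ => by ring
    rw [this, ← hPQ, ← hWS]; ring
  refine ⟨qj, q, fun j => V * ρ j, -Q, hpd, ?_, hsum, fun j => ?_, ?_⟩
  · by_cases hz : Q = 0
    · simp [hz]
    have h5 : (W * Q).degree < ((d + d : ℕ) : WithBot ℕ) := by
      have : W * Q = ∑ j, r j * (V * ρ j) := by linear_combination -hsum
      rw [this]
      refine (degree_sum_le _ _).trans_lt ((Finset.sup_lt_iff (WithBot.bot_lt_coe _)).2 ?_)
      exact fun j _ => degree_mul_lt_add (hr j) (hpd j)
    rw [mul_comm, hW.degree_mul, degree_eq_natDegree hW.ne_zero, degree_eq_natDegree hz, hWd,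
      add_comm] at h5
    rw [degree_neg, degree_eq_natDegree hz]
    have : d + Q.natDegree < d + d := by exact_mod_cast h5
    exact_mod_cast (by omega : Q.natDegree < d)
  · rw [map_mul]
    linear_combination hgj j + (- ev (ρ j)) * h1
  · rw [map_neg]
    linear_combination h3

end

/-! ### Germs and polynomial relations -/

section

open Set Filter Topology Metric Polynomial

section
variable {E : Type} [NormedAddCommGroup E] [NormedSpace ℂ E]

/-- The ring of germs at `x` of analytic functions. -/
def anGerm (x : E) : Subring (Germ (𝓝 x) ℂ) where
  carrier := {φ | ∃ f : E → ℂ, AnalyticAt ℂ f x ∧ φ = (f : Germ (𝓝 x) ℂ)}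
  mul_mem' := by
    rintro _ _ ⟨f, hf, rfl⟩ ⟨g, hg, rfl⟩
    exact ⟨f * g, hf.mul hg, rfl⟩
  one_mem' := ⟨1, analyticAt_const, rfl⟩
  add_mem' := by
    rintro _ _ ⟨f, hf, rfl⟩ ⟨g, hg, rfl⟩
    exact ⟨f + g, hf.add hg, rfl⟩
  zero_mem' := ⟨0, analyticAt_const, rfl⟩
  neg_mem' := by
    rintro _ ⟨f, hf, rfl⟩
    exact ⟨-f, hf.neg, rfl⟩

/-- The germ at `x` of a function analytic at `x`. -/
def gm {x : E} (f : E → ℂ) (hf : AnalyticAt ℂ f x) : anGerm x := ⟨(f : Germ (𝓝 x) ℂ), f, hf, rfl⟩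

theorem exists_gm {x : E} (φ : anGerm x) : ∃ f, ∃ hf : AnalyticAt ℂ f x, φ = gm f hf := by
  obtain ⟨_, f, hf, rfl⟩ := φ
  exact ⟨f, hf, rfl⟩

theorem gm_eq {x : E} {f g : E → ℂ} {hf : AnalyticAt ℂ f x} {hg : AnalyticAt ℂ g x} :
    gm f hf = gm g hg ↔ ∀ᶠ y in 𝓝 x, f y = g y := by
  exact Subtype.mk_eq_mk.trans Germ.coe_eq

theorem gm_zero {x : E} : (0 : anGerm x) = gm (fun _ => 0) analyticAt_const := rfl

theorem gm_one {x : E} : (1 : anGerm x) = gm (fun _ => 1) analyticAt_const := rfl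

theorem gm_add {x : E} {f g : E → ℂ} (hf : AnalyticAt ℂ f x) (hg : AnalyticAt ℂ g x) :
    gm f hf + gm g hg = gm (fun y => f y + g y) (hf.add hg) := rfl

theorem gm_mul {x : E} {f g : E → ℂ} (hf : AnalyticAt ℂ f x) (hg : AnalyticAt ℂ g x) :
    gm f hf * gm g hg = gm (fun y => f y * g y) (hf.mul hg) := rfl

theorem gm_neg {x : E} {f : E → ℂ} (hf : AnalyticAt ℂ f x) :
    - gm f hf = gm (fun y => - f y) hf.neg := rfl

theorem gm_pow {x : E} {f : E → ℂ} (hf : AnalyticAt ℂ f x) (k : ℕ) :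
    gm f hf ^ k = gm (fun y => f y ^ k) (hf.pow k) := rfl

theorem gm_sum {x : E} {ι : Type} (s : Finset ι) (f : ι → E → ℂ) (hf : ∀ i, AnalyticAt ℂ (f i) x) :
    ∑ i ∈ s, gm (f i) (hf i) = gm (fun y => ∑ i ∈ s, f i y)
      (Finset.analyticAt_fun_sum s fun i _ => hf i) := by
  classical
  induction s using Finset.induction_on with
  | empty => simp [gm_zero]
  | insert a s ha ih => simp only [Finset.sum_insert ha, ih, gm_add]

/-- Pull-back of germs along the projection `E × ℂ → E`. -/
noncomputable def gmFst (x : E) (t : ℂ) : anGerm x →+* anGerm (x, t) where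
  toFun φ := ⟨φ.1.compTendsto Prod.fst (continuous_fst.tendsto (x, t)), by
    obtain ⟨f, hf, h⟩ := φ.2
    refine ⟨fun p => f p.1, AnalyticAt.fun_comp (g := f) (f := Prod.fst) hf analyticAt_fst, ?_⟩
    rw [h]; rfl⟩
  map_one' := rfl
  map_zero' := rfl
  map_add' := by
    rintro ⟨_, f, hf, rfl⟩ ⟨_, g, hg, rfl⟩
    rfl
  map_mul' := by
    rintro ⟨_, f, hf, rfl⟩ ⟨_, g, hg, rfl⟩
    rfl

theorem AnalyticAt.fstPull {x : E} {t : ℂ} {f : E → ℂ} (hf : AnalyticAt ℂ f x) :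
    AnalyticAt ℂ (fun p : E × ℂ => f p.1) (x, t) :=
  AnalyticAt.fun_comp (g := f) (f := Prod.fst) hf analyticAt_fst

theorem gmFst_gm {x : E} {t : ℂ} {f : E → ℂ} (hf : AnalyticAt ℂ f x) :
    gmFst x t (gm f hf) = gm (fun p => f p.1) hf.fstPull := rfl

/-- The germ of a polynomial with germ coefficients. -/
noncomputable def gmEv (x : E) (t : ℂ) : (anGerm x)[X] →+* anGerm (x, t) :=
  eval₂RingHom (gmFst x t) (gm (fun p => p.2) analyticAt_snd)

/-- The polynomial with coefficients the germs of the `r i`. -/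
noncomputable def gmPoly {x : E} {d : ℕ} (r : Fin d → E → ℂ) (hr : ∀ i, AnalyticAt ℂ (r i) x) :
    (anGerm x)[X] := ∑ i, C (gm (r i) (hr i)) * X ^ (i : ℕ)

theorem analyticAt_poly {x : E} {t : ℂ} {d : ℕ} {r : Fin d → E → ℂ}
    (hr : ∀ i, AnalyticAt ℂ (r i) x) :
    AnalyticAt ℂ (fun p : E × ℂ => ∑ i, r i p.1 * p.2 ^ (i : ℕ)) (x, t) :=
  Finset.analyticAt_fun_sum _ fun i _ => (hr i).fstPull.mul (analyticAt_snd.pow _)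

theorem gmEv_poly {x : E} {t : ℂ} {d : ℕ} (r : Fin d → E → ℂ) (hr : ∀ i, AnalyticAt ℂ (r i) x) :
    gmEv x t (gmPoly r hr) = gm (fun p => ∑ i, r i p.1 * p.2 ^ (i : ℕ)) (analyticAt_poly hr) := by
  rw [gmPoly, map_sum]
  refine Eq.trans ?_ (gm_sum _ (fun i (p : E × ℂ) => r i p.1 * p.2 ^ (i : ℕ))
    fun i => (hr i).fstPull.mul (analyticAt_snd.pow _))
  refine Finset.sum_congr rfl fun i _ => ?_
  simp [gmEv, gmFst_gm, gm_pow, gm_mul]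

theorem gmEv_X_pow {x : E} {t : ℂ} (d : ℕ) :
    gmEv x t (X ^ d) = gm (fun p => p.2 ^ d) (analyticAt_snd.pow d) := by
  simp [gmEv, gm_pow]

theorem gmPoly_eval {x : E} (t : ℂ) {d : ℕ} (r : Fin d → E → ℂ) (hr : ∀ i, AnalyticAt ℂ (r i) x) :
    (gmPoly r hr).eval (gm (fun _ => t) analyticAt_const) = gm (fun y => ∑ i, r i y * t ^ (i : ℕ))
      (Finset.analyticAt_fun_sum _ fun i _ => (hr i).mul analyticAt_const) := by
  rw [gmPoly, eval_finset_sum]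
  refine Eq.trans ?_ (gm_sum _ (fun i y => r i y * t ^ (i : ℕ))
    fun i => (hr i).mul analyticAt_const)
  refine Finset.sum_congr rfl fun i _ => ?_
  simp [gm_pow, gm_mul]

theorem gmPoly_degree {x : E} {d : ℕ} (r : Fin d → E → ℂ) (hr : ∀ i, AnalyticAt ℂ (r i) x) :
    (gmPoly r hr).degree < d := by
  refine (degree_sum_le _ _).trans_lt ((Finset.sup_lt_iff (WithBot.bot_lt_coe _)).2 fun i _ => ?_)
  exact (degree_C_mul_X_pow_le _ _).trans_lt (WithBot.coe_lt_coe.2 i.2)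

theorem gmPoly_coeff {x : E} {d : ℕ} (r : Fin d → E → ℂ) (hr : ∀ i, AnalyticAt ℂ (r i) x)
    (i : Fin d) : (gmPoly r hr).coeff i = gm (r i) (hr i) := by
  rw [gmPoly, finset_sum_coeff, Finset.sum_eq_single i]
  · simp
  · intro j _ hj
    rw [coeff_C_mul, coeff_X_pow, if_neg (fun h => hj (Fin.ext h.symm)), mul_zero]
  · simp

theorem exists_gmPoly {x : E} {d : ℕ} (s : (anGerm x)[X]) (hs : s.degree < d) :
    ∃ (r : Fin d → E → ℂ) (hr : ∀ i, AnalyticAt ℂ (r i) x), s = gmPoly r hr := by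
  choose r hr h using fun i : Fin d => exists_gm (s.coeff i)
  refine ⟨r, hr, ?_⟩
  ext1 k
  by_cases hk : k < d
  · have := gmPoly_coeff r hr ⟨k, hk⟩
    rw [this]; exact h ⟨k, hk⟩
  · rw [coeff_eq_zero_of_degree_lt, coeff_eq_zero_of_degree_lt]
    · exact (gmPoly_degree r hr).trans_le (by exact_mod_cast not_lt.1 hk)
    · exact hs.trans_le (by exact_mod_cast not_lt.1 hk)

/-- A monic polynomial does not vanish identically near a point. -/
theorem exists_order_monic (d : ℕ) (w : Fin d → ℂ) (t₀ : ℂ) : ∃ (e : ℕ) (u : ℂ → ℂ),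
    AnalyticAt ℂ u t₀ ∧ u t₀ ≠ 0 ∧
      ∀ᶠ t in 𝓝 t₀, t ^ d + ∑ i, w i * t ^ (i : ℕ) = (t - t₀) ^ e * u t := by
  have ha : AnalyticAt ℂ (fun t : ℂ => t ^ d + ∑ i, w i * t ^ (i : ℕ)) t₀ :=
    (analyticAt_id.pow d).add
      (Finset.analyticAt_fun_sum _ fun i _ => analyticAt_const.mul (analyticAt_id.pow _))
  refine ha.exists_eventuallyEq_pow_smul_nonzero_iff.2 fun h0 => ?_
  set P : ℂ[X] := X ^ d + ∑ i, C (w i) * X ^ (i : ℕ) with hP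
  have hPm : P.Monic := monic_X_pow_add
    ((degree_sum_le _ _).trans_lt ((Finset.sup_lt_iff (WithBot.bot_lt_coe _)).2 fun i _ =>
      (degree_C_mul_X_pow_le _ _).trans_lt (WithBot.coe_lt_coe.2 i.2)))
  have hroot : ∀ᶠ t in 𝓝[≠] t₀, P.eval t = 0 := by
    refine (h0.filter_mono nhdsWithin_le_nhds).mono fun t ht => ?_
    rw [← ht, hP]
    simp [eval_finset_sum]
  have hinf : {t | P.IsRoot t}.Infinite := infinite_of_mem_nhds t₀
    (h0.mono fun t ht => by
      change P.eval t = 0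
      rw [← ht, hP]
      simp [eval_finset_sum])
  exact hPm.ne_zero (eq_zero_of_infinite_isRoot _ hinf)

/-- Relations between polynomials in the last variable: every relation is a combination of Koszul
relations and one with polynomial coefficients of bounded degree. -/
theorem poly_rel [FiniteDimensional ℂ E] {ι : Type} [Fintype ι] {x : E} {t₀ : ℂ} {d : ℕ}
    (w : Fin d → E → ℂ) (hw : ∀ i, AnalyticAt ℂ (w i) x) (r : ι → Fin d → E → ℂ)
    (hr : ∀ j i, AnalyticAt ℂ (r j i) x) (g : ι → E × ℂ → ℂ) (hg : ∀ j, AnalyticAt ℂ (g j) (x, t₀))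
    (gW : E × ℂ → ℂ) (hgW : AnalyticAt ℂ gW (x, t₀))
    (h : ∀ᶠ p in 𝓝 (x, t₀), ∑ j, (∑ i, r j i p.1 * p.2 ^ (i : ℕ)) * g j p +
      (p.2 ^ d + ∑ i, w i p.1 * p.2 ^ (i : ℕ)) * gW p = 0) :
    ∃ (q : ι → E × ℂ → ℂ) (c : E × ℂ → ℂ) (a : ι → Fin d → E → ℂ) (aW : Fin d → E → ℂ),
      (∀ j, AnalyticAt ℂ (q j) (x, t₀)) ∧ AnalyticAt ℂ c (x, t₀) ∧
      (∀ j i, AnalyticAt ℂ (a j i) x) ∧ (∀ i, AnalyticAt ℂ (aW i) x) ∧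
      (∀ t : ℂ, ∀ᶠ y in 𝓝 x, ∑ j, (∑ i, r j i y * t ^ (i : ℕ)) * (∑ i, a j i y * t ^ (i : ℕ)) +
        (t ^ d + ∑ i, w i y * t ^ (i : ℕ)) * (∑ i, aW i y * t ^ (i : ℕ)) = 0) ∧
      ∀ᶠ p in 𝓝 (x, t₀), (∀ j, g j p = (p.2 ^ d + ∑ i, w i p.1 * p.2 ^ (i : ℕ)) * q j p +
          c p * (∑ i, a j i p.1 * p.2 ^ (i : ℕ))) ∧
        gW p = - ∑ j, (∑ i, r j i p.1 * p.2 ^ (i : ℕ)) * q j p +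
          c p * (∑ i, aW i p.1 * p.2 ^ (i : ℕ)) := by
  obtain ⟨e, u, hu, hu0, hue⟩ := exists_order_monic d (fun i => w i x) t₀
  have hWa : AnalyticAt ℂ (fun p : E × ℂ => p.2 ^ d + ∑ i, w i p.1 * p.2 ^ (i : ℕ)) (x, t₀) :=
    (analyticAt_snd.pow d).add (analyticAt_poly hw)
  set W : (anGerm x)[X] := X ^ d + gmPoly w hw with hW
  have hWm : W.Monic := monic_X_pow_add (gmPoly_degree w hw)
  have hWd : W.natDegree = d := by
    apply natDegree_eq_of_degree_eq_some
    rw [hW, degree_add_eq_left_of_degree_lt, degree_X_pow]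
    rw [degree_X_pow]; exact gmPoly_degree w hw
  have hevW : gmEv x t₀ W = gm _ hWa := by
    rw [hW, map_add, gmEv_poly, gmEv_X_pow, gm_add]
  obtain ⟨q, c, p, pW, hp, hpW, hrel, hg1, hg2⟩ := alg_rel (gmEv x t₀) W d e hWm hWd
    (fun j => gmPoly (r j) (hr j)) (fun j => gmPoly_degree _ _) (by
      intro b
      obtain ⟨b, hb, rfl⟩ := exists_gm b
      obtain ⟨q, s, hq, hs, h1⟩ := weierstrass_exists hWa hb e u hu hu0 hue
      refine ⟨gm q hq, gmPoly s hs, gmPoly_degree _ _, ?_⟩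
      rw [hevW, gmEv_poly, gm_mul, gm_add, gm_eq]
      exact h1) (by
      intro b s hs h1
      obtain ⟨b, hb, rfl⟩ := exists_gm b
      obtain ⟨s, hs', rfl⟩ := exists_gmPoly s hs
      rw [hevW, gmEv_poly, gm_mul, gm_add, gm_zero, gm_eq] at h1
      obtain ⟨h2, h3⟩ := weierstrass_unique hWa hb e u hu hu0 hue s h1
      refine ⟨by rw [gm_zero, gm_eq]; exact h2, ?_⟩
      have : ∀ i, gm (s i) (hs' i) = 0 := fun i => by rw [gm_zero, gm_eq]; exact h3 i
      simp [gmPoly, this])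
    (fun j => gm (g j) (hg j)) (gm gW hgW) (by
      simp only [gmEv_poly, hevW, gm_mul]
      rw [gm_sum, gm_add, gm_zero, gm_eq]
      exact h)
  choose q hq hqe using fun j => exists_gm (q j)
  obtain ⟨c, hc, rfl⟩ := exists_gm c
  choose a ha hae using fun j => exists_gmPoly (p j) (hp j)
  obtain ⟨aW, haW, rfl⟩ := exists_gmPoly pW hpW
  refine ⟨q, c, a, aW, hq, hc, ha, haW, fun t => ?_, ?_⟩
  · have h1 := congrArg (Polynomial.eval (gm (fun _ => t) analyticAt_const)) hrel
    simp only [hae, eval_add, eval_finset_sum, eval_mul, gmPoly_eval, hW, eval_pow, eval_X, gm_pow,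
      gm_add, gm_mul, eval_zero] at h1
    rw [gm_sum, gm_add, gm_zero, gm_eq] at h1
    exact h1
  · have h1 : ∀ j, ∀ᶠ p in 𝓝 (x, t₀), g j p = (p.2 ^ d + ∑ i, w i p.1 * p.2 ^ (i : ℕ)) * q j p +
          c p * (∑ i, a j i p.1 * p.2 ^ (i : ℕ)) := by
      intro j
      have := hg1 j
      rw [hqe, hae, hevW, gmEv_poly, gm_mul, gm_mul, gm_add, gm_eq] at this
      exact this
    have h2 := hg2
    simp only [hqe, gmEv_poly, gm_mul] at h2
    rw [gm_sum, gm_neg, gm_add, gm_eq] at h2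
    exact (eventually_all.2 h1).and h2
end

end

/-! ### The Weierstrass step of Oka's theorem -/

section

open Set Filter Topology Metric Polynomial

/-- A polynomial relation of degree `< 2d` that holds at `2d` points holds everywhere. -/
theorem poly_vanish {ι : Type} [Fintype ι] {d : ℕ} (r a : ι → Fin d → ℂ) (w b : Fin d → ℂ)
    (h : ∀ k : Fin (d + d), ∑ j, (∑ i, r j i * ((k : ℕ) : ℂ) ^ (i : ℕ)) *
        (∑ i, a j i * ((k : ℕ) : ℂ) ^ (i : ℕ)) +
      (((k : ℕ) : ℂ) ^ d + ∑ i, w i * ((k : ℕ) : ℂ) ^ (i : ℕ)) *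
        (∑ i, b i * ((k : ℕ) : ℂ) ^ (i : ℕ)) = 0) (t : ℂ) :
    ∑ j, (∑ i, r j i * t ^ (i : ℕ)) * (∑ i, a j i * t ^ (i : ℕ)) +
      (t ^ d + ∑ i, w i * t ^ (i : ℕ)) * (∑ i, b i * t ^ (i : ℕ)) = 0 := by
  have hdeg : ∀ s : Fin d → ℂ, (∑ i, C (s i) * X ^ (i : ℕ) : ℂ[X]).degree < (d : WithBot ℕ) := fun s =>
    (degree_sum_le _ _).trans_lt ((Finset.sup_lt_iff (WithBot.bot_lt_coe _)).2 fun i _ =>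
      (degree_C_mul_X_pow_le _ _).trans_lt (WithBot.coe_lt_coe.2 i.2))
  set P : ℂ[X] := ∑ j, (∑ i, C (r j i) * X ^ (i : ℕ)) * (∑ i, C (a j i) * X ^ (i : ℕ)) +
    (X ^ d + ∑ i, C (w i) * X ^ (i : ℕ)) * (∑ i, C (b i) * X ^ (i : ℕ)) with hP
  have hPe : ∀ t, P.eval t = ∑ j, (∑ i, r j i * t ^ (i : ℕ)) * (∑ i, a j i * t ^ (i : ℕ)) +
      (t ^ d + ∑ i, w i * t ^ (i : ℕ)) * (∑ i, b i * t ^ (i : ℕ)) := by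
    intro t
    simp [hP, eval_finset_sum]
  rw [← hPe]
  have hP0 : P = 0 := by
    have hcard : (Finset.univ.image fun k : Fin (d + d) => (((k : ℕ) : ℂ))).card = d + d := by
      rw [Finset.card_image_of_injective, Finset.card_univ, Fintype.card_fin]
      intro k l hkl
      have hkl' : ((k : ℕ) : ℂ) = ((l : ℕ) : ℂ) := hkl
      exact Fin.ext (by exact_mod_cast hkl')
    refine eq_zero_of_degree_lt_of_eval_finset_eq_zero
      (s := Finset.univ.image fun k : Fin (d + d) => (((k : ℕ) : ℂ))) ?_ ?_
    · rw [hcard]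
      refine (degree_add_le _ _).trans_lt (max_lt ?_ ?_)
      · refine (degree_sum_le _ _).trans_lt ((Finset.sup_lt_iff (WithBot.bot_lt_coe _)).2 fun j _ =>
          degree_mul_lt_add (hdeg _) (hdeg _))
      · rw [add_mul]
        refine (degree_add_le _ _).trans_lt (max_lt ?_ (degree_mul_lt_add (hdeg _) (hdeg _)))
        by_cases hz : (∑ i, C (b i) * X ^ (i : ℕ)) = 0
        · simp [hz]
        · rw [degree_mul, degree_X_pow, degree_eq_natDegree hz]
          have := (natDegree_lt_iff_degree_lt hz).2 (hdeg b)
          exact_mod_cast (by omega : d + (∑ i, C (b i) * X ^ (i : ℕ)).natDegree < d + d)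
    · intro x hx
      obtain ⟨k, -, rfl⟩ := Finset.mem_image.1 hx
      rw [hPe]; exact h k
  rw [hP0, eval_zero]

section
variable {E : Type} [NormedAddCommGroup E] [NormedSpace ℂ E]

/-- The columns of `σ` generate, over the germs at `z`, all relations between the columns
of `Φ`. -/
def LocGen {κ ι β : Type} [Fintype ι] [Fintype β] (Φ : κ → ι → E → ℂ) (σ : ι → β → E → ℂ) (z : E) :
    Prop :=
  ∀ g : ι → E → ℂ, (∀ j, AnalyticAt ℂ (g j) z) →
    (∀ᶠ p in 𝓝 z, ∀ k, ∑ j, Φ k j p * g j p = 0) →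
    ∃ c : β → E → ℂ, (∀ b, AnalyticAt ℂ (c b) z) ∧ ∀ᶠ p in 𝓝 z, ∀ j, g j p = ∑ b, σ j b p * c b p

/-- Finitely many relations near `y` generate the relations at all points near `y`. -/
def OkaAt {κ ι : Type} [Fintype ι] (Φ : κ → ι → E → ℂ) (y : E) : Prop :=
  ∃ (β : Type) (_ : Fintype β) (σ : ι → β → E → ℂ), (∀ j b, AnalyticAt ℂ (σ j b) y) ∧
    (∀ᶠ p in 𝓝 y, ∀ k b, ∑ j, Φ k j p * σ j b p = 0) ∧ ∀ᶠ z in 𝓝 y, LocGen Φ σ z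

/-- The Weierstrass step of the induction over the dimension. -/
theorem okaAt_regular [FiniteDimensional ℂ E] {ι : Type} [Fintype ι] {y : E} {t₀ : ℂ}
    (IH : ∀ (κ ι : Type) [Fintype κ] [Fintype ι] (Φ : κ → ι → E → ℂ),
      (∀ k j, AnalyticAt ℂ (Φ k j) y) → OkaAt Φ y)
    (φ : ι → E × ℂ → ℂ) (hφ : ∀ j, AnalyticAt ℂ (φ j) (y, t₀)) (j₀ : ι) (d : ℕ) (u : ℂ → ℂ)
    (hu : AnalyticAt ℂ u t₀) (hu0 : u t₀ ≠ 0)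
    (hfu : ∀ᶠ t in 𝓝 t₀, φ j₀ (y, t) = (t - t₀) ^ d * u t) :
    OkaAt (fun _ : Unit => φ) (y, t₀) := by
  classical
  choose q r hq hr hφe using fun j => weierstrass_exists (hφ j₀) (hφ j) d u hu hu0 hfu
  obtain ⟨qW, ρ, hqW, hρ, hWe⟩ := weierstrass_exists (g := fun p => p.2 ^ d) (hφ j₀)
    (analyticAt_snd.pow d) d u hu hu0 hfu
  set w : Fin d → E → ℂ := fun i x => - ρ i x with hw
  have hwa : ∀ i, AnalyticAt ℂ (w i) y := fun i => (hρ i).neg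
  set W : E × ℂ → ℂ := fun p => p.2 ^ d + ∑ i, w i p.1 * p.2 ^ (i : ℕ) with hW
  set R : ι → E × ℂ → ℂ := fun j p => ∑ i, r j i p.1 * p.2 ^ (i : ℕ) with hR
  have hWe' : ∀ᶠ p in 𝓝 (y, t₀), W p = φ j₀ p * qW p := by
    filter_upwards [hWe] with p hp
    simp only [hW, hw, neg_mul, Finset.sum_neg_distrib]
    rw [hp]; ring
  -- `qW` is a unit: otherwise `W (y, ·)` would vanish to order `> d` at `t₀`
  have hqW0 : qW (y, t₀) ≠ 0 := by
    intro h0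
    set P : ℂ[X] := X ^ d + ∑ i, C (w i y) * X ^ (i : ℕ) with hP
    have hdeg : (∑ i, C (w i y) * X ^ (i : ℕ) : ℂ[X]).degree < (d : WithBot ℕ) :=
      (degree_sum_le _ _).trans_lt ((Finset.sup_lt_iff (WithBot.bot_lt_coe _)).2 fun i _ =>
        (degree_C_mul_X_pow_le _ _).trans_lt (WithBot.coe_lt_coe.2 i.2))
    have hPm : P.Monic := monic_X_pow_add hdeg
    have hs : AnalyticAt ℂ (fun t => qW (y, t)) t₀ :=
      AnalyticAt.fun_comp (g := qW) (f := fun t => (y, t)) hqW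
        (analyticAt_const.prod analyticAt_id)
    have hsl : ContinuousAt (dslope (fun t => qW (y, t)) t₀) t₀ :=
      continuousAt_dslope_same.2 hs.differentiableAt
    refine hPm.ne_zero (poly_eq_zero_of_order t₀ (d + 1) P ?_
      (fun t => u t * dslope (fun t => qW (y, t)) t₀ t) (hu.continuousAt.mul hsl) ?_)
    · refine (degree_add_le _ _).trans_lt (max_lt ?_ ?_)
      · rw [degree_X_pow]; exact_mod_cast Nat.lt_succ_self d
      · exact hdeg.trans (by exact_mod_cast Nat.lt_succ_self d)
    · have ht : Tendsto (fun t : ℂ => (y, t)) (𝓝 t₀) (𝓝 (y, t₀)) := by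
        exact (Continuous.prodMk_right y).tendsto t₀
      refine Eventually.filter_mono nhdsWithin_le_nhds ?_
      filter_upwards [hfu, ht.eventually hWe'] with t h1 h2
      have h3 : P.eval t = W (y, t) := by simp [hP, hW, eval_finset_sum]
      have h4 := sub_smul_dslope (fun t => qW (y, t)) t₀ t
      simp only [smul_eq_mul, h0, sub_zero] at h4
      rw [h3, h2, h1, ← h4]; ring
  -- the linear system for polynomial relations of degree `< d`
  set Ψ : Fin (d + d) → (ι × Fin d) ⊕ Fin d → E → ℂ := fun k => Sum.elim
    (fun ji x => R ji.1 (x, ((k : ℕ) : ℂ)) * ((k : ℕ) : ℂ) ^ (ji.2 : ℕ))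
    (fun i x => W (x, ((k : ℕ) : ℂ)) * ((k : ℕ) : ℂ) ^ (i : ℕ)) with hΨ
  have hΨsum : ∀ k x (s : (ι × Fin d) ⊕ Fin d → ℂ), ∑ l, Ψ k l x * s l =
      ∑ j, R j (x, ((k : ℕ) : ℂ)) * (∑ i, s (Sum.inl (j, i)) * ((k : ℕ) : ℂ) ^ (i : ℕ)) +
      W (x, ((k : ℕ) : ℂ)) * (∑ i, s (Sum.inr i) * ((k : ℕ) : ℂ) ^ (i : ℕ)) := by
    intro k x s
    rw [Fintype.sum_sum_type, Fintype.sum_prod_type]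
    congr 1
    · refine Finset.sum_congr rfl fun j _ => ?_
      rw [Finset.mul_sum]
      refine Finset.sum_congr rfl fun i _ => ?_
      simp only [hΨ, Sum.elim_inl]; ring
    · rw [Finset.mul_sum]
      refine Finset.sum_congr rfl fun i _ => ?_
      simp only [hΨ, Sum.elim_inr]; ring
  have hRa : ∀ j (s : ℂ), AnalyticAt ℂ (fun x => R j (x, s)) y := fun j s =>
    Finset.analyticAt_fun_sum _ fun i _ => (hr j i).mul (analyticAt_const (v := s ^ (i : ℕ)))
  have hWa : ∀ (s : ℂ), AnalyticAt ℂ (fun x => W (x, s)) y := fun s =>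
    (analyticAt_const (v := s ^ d)).add (Finset.analyticAt_fun_sum _ fun i _ =>
      (hwa i).mul (analyticAt_const (v := s ^ (i : ℕ))))
  obtain ⟨β, _, σ, hσ, hσ0, hσg⟩ := IH _ _ Ψ (by
    rintro k (⟨j, i⟩ | i)
    · exact (hRa j _).mul analyticAt_const
    · exact (hWa _).mul analyticAt_const)
  -- generating relations for the `R j` and `W`
  set τ : ι → ι ⊕ β → E × ℂ → ℂ := fun j => Sum.elim (fun l p => if l = j then W p else 0)
    (fun b p => ∑ i, σ (Sum.inl (j, i)) b p.1 * p.2 ^ (i : ℕ)) with hτ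
  set τW : ι ⊕ β → E × ℂ → ℂ := Sum.elim (fun l p => - R l p)
    (fun b p => ∑ i, σ (Sum.inr i) b p.1 * p.2 ^ (i : ℕ)) with hτW
  have hRa' : ∀ j, AnalyticAt ℂ (R j) (y, t₀) := fun j => analyticAt_poly (hr j)
  have hWa' : AnalyticAt ℂ W (y, t₀) := (analyticAt_snd.pow d).add (analyticAt_poly hwa)
  have hτa : ∀ j b, AnalyticAt ℂ (τ j b) (y, t₀) := by
    rintro j (l | b)
    · simp only [hτ, Sum.elim_inl]
      split_ifs
      · exact hWa'
      · exact analyticAt_const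
    · exact analyticAt_poly fun i => hσ _ _
  have hτWa : ∀ b, AnalyticAt ℂ (τW b) (y, t₀) := by
    rintro (l | b)
    · exact (hRa' l).neg
    · exact analyticAt_poly fun i => hσ _ _
  have hfst : Tendsto (fun p : E × ℂ => p.1) (𝓝 (y, t₀)) (𝓝 y) := continuous_fst.tendsto _
  have hτ0 : ∀ᶠ p in 𝓝 (y, t₀), ∀ b, ∑ j, R j p * τ j b p + W p * τW b p = 0 := by
    filter_upwards [hfst.eventually hσ0] with p hp
    rintro (l | b)
    · simp only [hτ, hτW, Sum.elim_inl, mul_ite, mul_zero]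
      rw [Finset.sum_ite_eq]
      simp only [Finset.mem_univ, if_true]; ring
    · exact poly_vanish (fun j i => r j i p.1) (fun j i => σ (Sum.inl (j, i)) b p.1)
        (fun i => w i p.1) (fun i => σ (Sum.inr i) b p.1)
        (fun k => (hΨsum k p.1 (fun l => σ l b p.1)).symm.trans (hp k b)) p.2
  refine ⟨ι ⊕ β, inferInstance, fun j b p => τ j b p -
    (if j₀ = j then ∑ k, q k p * τ k b p - qW p * τW b p else 0), ?_, ?_, ?_⟩
  · intro j b
    refine (hτa j b).sub ?_
    split_ifs
    · exact (Finset.analyticAt_fun_sum _ fun k _ => (hq k).mul (hτa k b)).sub (hqW.mul (hτWa b))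
    · exact analyticAt_const
  · filter_upwards [hτ0, eventually_all.2 hφe, hWe'] with p h1 h2 h3 _ b
    have h4 : ∑ j, φ j p * τ j b p = φ j₀ p * ∑ k, q k p * τ k b p + ∑ j, R j p * τ j b p := by
      rw [Finset.mul_sum, ← Finset.sum_add_distrib]
      refine Finset.sum_congr rfl fun j _ => ?_
      have := h2 j
      change φ j p = φ j₀ p * q j p + R j p at this
      rw [this]; ring
    simp only [mul_sub, mul_ite, mul_zero, Finset.sum_sub_distrib]
    rw [Finset.sum_ite_eq, h4]
    simp only [Finset.mem_univ, if_true]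
    have := h1 b
    rw [h3] at this
    linear_combination this
  · have hev : ∀ᶠ p in 𝓝 (y, t₀), (∀ j, AnalyticAt ℂ (q j) p) ∧ AnalyticAt ℂ qW p ∧ qW p ≠ 0 ∧
        (∀ j, φ j p = φ j₀ p * q j p + R j p) ∧ W p = φ j₀ p * qW p := by
      filter_upwards [eventually_all.2 fun j => (hq j).eventually_analyticAt,
        hqW.eventually_analyticAt, hqW.continuousAt.eventually_ne hqW0, eventually_all.2 hφe, hWe']
        with p h1 h2 h3 h4 h5
      exact ⟨h1, h2, h3, h4, h5⟩
    filter_upwards [hev.eventually_nhds, hfst.eventually hσg,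
      hfst.eventually (eventually_all.2 fun i => (hwa i).eventually_analyticAt),
      hfst.eventually (eventually_all.2 fun j => eventually_all.2 fun i =>
        (hr j i).eventually_analyticAt)] with z hz hzg hzw hzr g hg hrel
    obtain ⟨hzq, hzqW, hz0, -⟩ := hz.self_of_nhds
    obtain ⟨Q, c, a, aW, hQ, hc, ha, haW, hpol, hge⟩ := poly_rel (x := z.1) (t₀ := z.2) w hzw r hzr g
      hg (fun p => (qW p)⁻¹ * ∑ j, q j p * g j p)
      ((hzqW.inv hz0).mul (Finset.analyticAt_fun_sum _ fun j _ => (hzq j).mul (hg j))) (by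
        filter_upwards [hz, hrel] with p ⟨_, _, h0, h1, h2⟩ h3
        have h4 := h3 ()
        change ∑ j, R j p * g j p + W p * ((qW p)⁻¹ * ∑ j, q j p * g j p) = 0
        have h5 : ∑ j, φ j p * g j p = φ j₀ p * ∑ j, q j p * g j p + ∑ j, R j p * g j p := by
          rw [Finset.mul_sum, ← Finset.sum_add_distrib]
          refine Finset.sum_congr rfl fun j _ => ?_
          rw [h1 j]; ring
        have h6 : W p * ((qW p)⁻¹ * ∑ j, q j p * g j p) = φ j₀ p * ∑ j, q j p * g j p := by
          rw [h2]; field_simp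
        rw [h6]; linear_combination h4 - h5)
    obtain ⟨c₀, hc₀, hce⟩ := hzg (Sum.elim (fun ji => a ji.1 ji.2) aW) (by
      rintro (⟨j, i⟩ | i)
      · exact ha j i
      · exact haW i) (by
      refine eventually_all.2 fun k => ?_
      filter_upwards [hpol ((k : ℕ) : ℂ)] with x hx
      exact (hΨsum k x (fun l => (Sum.elim (fun ji : ι × Fin d => a ji.1 ji.2) aW) l x)).trans hx)
    have hfz : Tendsto (fun p : E × ℂ => p.1) (𝓝 z) (𝓝 z.1) := continuous_fst.tendsto _
    refine ⟨Sum.elim Q (fun b p => c p * c₀ b p.1), ?_, ?_⟩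
    · rintro (l | b)
      · exact hQ l
      · exact hc.mul (hc₀ b).fstPull
    · filter_upwards [hge, hfz.eventually hce, hz] with p ⟨h1, h2⟩ h3 ⟨_, _, h0, _⟩
      have e1 : ∀ j, g j p = ∑ b, τ j b p * (Sum.elim Q (fun b p => c p * c₀ b p.1) : ι ⊕ β → E × ℂ → ℂ) b p := by
        intro j
        rw [Fintype.sum_sum_type, h1 j]
        congr 1
        · simp only [hτ, Sum.elim_inl, ite_mul, zero_mul]
          rw [Finset.sum_ite_eq']
          simp [hW]
        · have : ∀ i, a j i p.1 = ∑ b, σ (Sum.inl (j, i)) b p.1 * c₀ b p.1 :=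
            fun i => h3 (Sum.inl (j, i))
          simp only [hτ, Sum.elim_inr, this, Finset.sum_mul, Finset.mul_sum]
          rw [Finset.sum_comm]
          exact Finset.sum_congr rfl fun b _ => Finset.sum_congr rfl fun i _ => by ring
      have e2 : (qW p)⁻¹ * ∑ j, q j p * g j p = ∑ b, τW b p * (Sum.elim Q (fun b p => c p * c₀ b p.1) : ι ⊕ β → E × ℂ → ℂ) b p := by
        rw [Fintype.sum_sum_type, h2]
        congr 1
        · simp only [hτW, Sum.elim_inl, neg_mul, Finset.sum_neg_distrib]
          rfl
        · have : ∀ i, aW i p.1 = ∑ b, σ (Sum.inr i) b p.1 * c₀ b p.1 :=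
            fun i => h3 (Sum.inr i)
          simp only [hτW, Sum.elim_inr, this, Finset.sum_mul, Finset.mul_sum]
          rw [Finset.sum_comm]
          exact Finset.sum_congr rfl fun b _ => Finset.sum_congr rfl fun i _ => by ring
      intro j
      simp only [sub_mul, Finset.sum_sub_distrib]
      rw [← e1 j]
      by_cases hj : j₀ = j
      · simp only [hj, if_true, sub_mul, Finset.sum_mul, Finset.sum_sub_distrib]
        have e3 : ∑ x, qW p * τW x p * (Sum.elim Q (fun b p => c p * c₀ b p.1) : ι ⊕ β → E × ℂ → ℂ) x p = ∑ j, q j p * g j p := by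
          simp only [mul_assoc]
          rw [← Finset.mul_sum, ← e2]
          field_simp
        rw [e3, Finset.sum_comm]
        have e4 : ∑ k, ∑ b, q k p * τ k b p * (Sum.elim Q (fun b p => c p * c₀ b p.1) : ι ⊕ β → E × ℂ → ℂ) b p = ∑ j, q j p * g j p := by
          refine Finset.sum_congr rfl fun k _ => ?_
          simp only [mul_assoc]
          rw [← Finset.mul_sum, ← e1 k]
        rw [e4]; ring
      · simp [hj]
end

end

/-! ### Oka's coherence theorem -/

section

open Set Filter Topology Metric

section
variable {E : Type} [NormedAddCommGroup E] [NormedSpace ℂ E]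

theorem OkaAt.of_equiv {E₂ : Type} [NormedAddCommGroup E₂] [NormedSpace ℂ E₂] (e : E₂ ≃L[ℂ] E)
    {κ ι : Type} [Fintype ι] {Φ : κ → ι → E → ℂ} {y : E₂}
    (h : OkaAt (fun k j x => Φ k j (e x)) y) : OkaAt Φ (e y) := by
  obtain ⟨β, _, σ, hσ, hσ0, hg⟩ := h
  have hs : Tendsto e.symm (𝓝 (e y)) (𝓝 y) := by
    simpa using e.symm.continuous.tendsto (e y)
  refine ⟨β, inferInstance, fun j b x => σ j b (e.symm x), fun j b => ?_, ?_, ?_⟩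
  · refine AnalyticAt.fun_comp (g := σ j b) (f := e.symm) ?_ (e.symm.analyticAt _)
    simpa using hσ j b
  · filter_upwards [hs.eventually hσ0] with p hp k b
    simpa using hp k b
  · filter_upwards [hs.eventually hg] with z hz g hga hrel
    have hs' : Tendsto e (𝓝 (e.symm z)) (𝓝 z) := by
      simpa using e.continuous.tendsto (e.symm z)
    have hs'' : Tendsto e.symm (𝓝 z) (𝓝 (e.symm z)) := e.symm.continuous.tendsto _
    obtain ⟨c, hc, hce⟩ := hz (fun j x => g j (e x)) (fun j => by
      refine AnalyticAt.fun_comp (g := g j) (f := e) ?_ (e.analyticAt _)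
      simpa using hga j) (hs'.eventually hrel)
    refine ⟨fun b x => c b (e.symm x), fun b => ?_, ?_⟩
    · exact AnalyticAt.fun_comp (g := c b) (f := e.symm) (hc b) (e.symm.analyticAt _)
    · filter_upwards [hs''.eventually hce] with p hp j
      simpa using hp j

theorem okaAt_zero {κ ι : Type} [Fintype ι] {Φ : κ → ι → E → ℂ} {y : E}
    (h : ∀ᶠ p in 𝓝 y, ∀ k j, Φ k j p = 0) : OkaAt Φ y := by
  classical
  refine ⟨ι, inferInstance, fun j b _ => if j = b then 1 else 0, fun j b => analyticAt_const, ?_, ?_⟩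
  · filter_upwards [h] with p hp k b
    simp [hp]
  · exact Eventually.of_forall fun z g hg _ => ⟨g, hg, Eventually.of_forall fun p j => by simp⟩

/-- If one of the functions is a unit then the relations are generated by the Koszul relations. -/
theorem okaAt_unit {ι : Type} [Fintype ι] {φ : ι → E → ℂ} {y : E} (hφ : ∀ j, AnalyticAt ℂ (φ j) y)
    (j₀ : ι) (h0 : φ j₀ y ≠ 0) : OkaAt (fun _ : Unit => φ) y := by
  classical
  refine ⟨ι, inferInstance, fun j i p => (if i = j then φ j₀ p else 0) - (if j₀ = j then φ i p else 0),
    fun j b => ?_, ?_, ?_⟩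
  · refine AnalyticAt.sub ?_ ?_
    · split_ifs
      · exact hφ _
      · exact analyticAt_const
    · split_ifs
      · exact hφ _
      · exact analyticAt_const
  · refine Eventually.of_forall fun p _ b => ?_
    simp only [mul_sub, mul_ite, mul_zero, Finset.sum_sub_distrib]
    rw [Finset.sum_ite_eq, Finset.sum_ite_eq]
    simp [mul_comm]
  · filter_upwards [(hφ j₀).eventually_analyticAt.and ((hφ j₀).continuousAt.eventually_ne h0)]
      with z hz g hg hrel
    refine ⟨fun i p => (φ j₀ p)⁻¹ * g i p, fun i => (hz.1.inv hz.2).mul (hg i), ?_⟩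
    filter_upwards [hrel, hz.1.continuousAt.eventually_ne hz.2] with p h1 h2 j
    have h3 := h1 ()
    simp only [sub_mul, ite_mul, zero_mul, Finset.sum_sub_distrib]
    rw [Finset.sum_ite_eq']
    by_cases hj : j₀ = j
    · simp only [hj, if_true, Finset.mem_univ]
      have : ∑ i, φ i p * ((φ j p)⁻¹ * g i p) = 0 := by
        rw [← mul_zero (φ j p)⁻¹, ← h3, Finset.mul_sum]
        exact Finset.sum_congr rfl fun i _ => by ring
      rw [this]
      subst hj
      field_simp
      ring
    · simp [hj]
      field_simp

/-- Reduction of a system of several equations to single equations: the solutions of the last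
equations are parametrized by their generators, which are then inserted into the first one. -/
theorem okaAt_of_rows {y : E} (H : ∀ (ι : Type) [Fintype ι] (φ : ι → E → ℂ),
    (∀ j, AnalyticAt ℂ (φ j) y) → OkaAt (fun _ : Unit => φ) y) (k : ℕ) (ι : Type) [Fintype ι]
    (Φ : Fin k → ι → E → ℂ) (hΦ : ∀ k j, AnalyticAt ℂ (Φ k j) y) : OkaAt Φ y := by
  induction k with
  | zero => exact okaAt_zero (Eventually.of_forall fun p k => k.elim0)
  | succ k ih =>
    obtain ⟨β, _, σ, hσ, hσ0, hσg⟩ := ih (fun l => Φ l.succ) fun l => hΦ l.succ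
    have hφ : ∀ b, AnalyticAt ℂ (fun p => ∑ j, Φ 0 j p * σ j b p) y := fun b =>
      Finset.analyticAt_fun_sum _ fun j _ => (hΦ 0 j).mul (hσ j b)
    obtain ⟨γ, _, τ, hτ, hτ0, hτg⟩ := H β (fun b p => ∑ j, Φ 0 j p * σ j b p) hφ
    have hcomm : ∀ (l : Fin (k + 1)) (p : E) (v : β → ℂ),
        ∑ j, Φ l j p * ∑ b, σ j b p * v b = ∑ b, (∑ j, Φ l j p * σ j b p) * v b := by
      intro l p v
      simp only [Finset.mul_sum, Finset.sum_mul]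
      rw [Finset.sum_comm]
      exact Finset.sum_congr rfl fun b _ => Finset.sum_congr rfl fun i _ => by ring
    refine ⟨γ, inferInstance, fun j c p => ∑ b, σ j b p * τ b c p, fun j c =>
      Finset.analyticAt_fun_sum _ fun b _ => (hσ j b).mul (hτ b c), ?_, ?_⟩
    · filter_upwards [hσ0, hτ0] with p h1 h2 l c
      rw [hcomm]
      refine Fin.cases ?_ (fun l => ?_) l
      · exact h2 () c
      · exact Finset.sum_eq_zero fun b _ => by rw [h1 l b, zero_mul]
    · filter_upwards [hσg, hτg] with z h1 h2 g hg hrel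
      obtain ⟨c, hc, hce⟩ := h1 g hg (hrel.mono fun p hp l => hp l.succ)
      obtain ⟨c', hc', hce'⟩ := h2 c hc (by
        filter_upwards [hrel, hce] with p h3 h4 _
        rw [← hcomm, ← h3 0]
        exact Finset.sum_congr rfl fun j _ => by rw [h4 j])
      refine ⟨c', hc', ?_⟩
      filter_upwards [hce, hce'] with p h3 h4 j
      rw [h3 j]
      simp only [h4, Finset.mul_sum, Finset.sum_mul]
      rw [Finset.sum_comm]
      exact Finset.sum_congr rfl fun b _ => Finset.sum_congr rfl fun i _ => by ring

theorem okaAt_of_rows' {y : E} (H : ∀ (ι : Type) [Fintype ι] (φ : ι → E → ℂ),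
    (∀ j, AnalyticAt ℂ (φ j) y) → OkaAt (fun _ : Unit => φ) y) (κ ι : Type) [Fintype κ] [Fintype ι]
    (Φ : κ → ι → E → ℂ) (hΦ : ∀ k j, AnalyticAt ℂ (Φ k j) y) : OkaAt Φ y := by
  let e := Fintype.equivFin κ
  obtain ⟨β, _, σ, hσ, hσ0, hσg⟩ := okaAt_of_rows H _ ι (fun l => Φ (e.symm l)) fun l => hΦ _
  refine ⟨β, inferInstance, σ, hσ, ?_, ?_⟩
  · filter_upwards [hσ0] with p hp k b
    simpa using hp (e k) b
  · filter_upwards [hσg] with z hz g hg hrel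
    exact hz g hg (hrel.mono fun p hp l => hp _)

/-- A function that vanishes along all lines through `y` vanishes near `y`. -/
theorem exists_line {f : E → ℂ} {y : E} (hf : AnalyticAt ℂ f y) (h : ¬ ∀ᶠ p in 𝓝 y, f p = 0) :
    ∃ v : E, ¬ ∀ᶠ t : ℂ in 𝓝 0, f (y + t • v) = 0 := by
  by_contra! hv
  apply h
  obtain ⟨r, hr, hb⟩ := Metric.eventually_nhds_iff_ball.1 hf.eventually_analyticAt
  refine Metric.eventually_nhds_iff_ball.2 ⟨r, hr, fun p hp => ?_⟩
  have hlin : ∀ t : ℂ, AnalyticAt ℂ (fun t : ℂ => y + t • (p - y)) t := fun t =>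
    analyticAt_const.add (analyticAt_id.smul analyticAt_const)
  set S : Set ℂ := (fun t : ℂ => y + t • (p - y)) ⁻¹' ball y r with hS
  have hSc : Convex ℝ S := by
    intro a ha b hb u v hu hv huv
    simp only [hS, mem_preimage, mem_ball, dist_eq_norm, add_sub_cancel_left] at *
    have : (u • a + v • b) • (p - y) = u • (a • (p - y)) + v • (b • (p - y)) := by
      rw [add_smul, smul_assoc, smul_assoc]
    rw [this]
    have := (convex_ball (0 : E) r) (x := a • (p - y)) (by simpa using ha)
      (y := b • (p - y)) (by simpa using hb) hu hv huv
    simpa using this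
  have han : AnalyticOnNhd ℂ (fun t : ℂ => f (y + t • (p - y))) S := fun t ht =>
    AnalyticAt.fun_comp (g := f) (f := fun t : ℂ => y + t • (p - y)) (hb _ ht) (hlin t)
  have h0 : (0 : ℂ) ∈ S := by simp [hS, hr]
  have h1 : (1 : ℂ) ∈ S := by simpa [hS] using hp
  have := han.eqOn_zero_of_preconnected_of_eventuallyEq_zero hSc.isPreconnected h0 (hv (p - y)) h1
  simpa using this

end

/-- **Oka's coherence theorem** in `ℂⁿ`. -/
theorem oka_pi (n : ℕ) (y : Fin n → ℂ) (κ ι : Type) [Fintype κ] [Fintype ι]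
    (Φ : κ → ι → (Fin n → ℂ) → ℂ) (hΦ : ∀ k j, AnalyticAt ℂ (Φ k j) y) : OkaAt Φ y := by
  induction n generalizing κ ι with
  | zero =>
    refine okaAt_of_rows' (fun ι _ φ hφ => ?_) κ ι Φ hΦ
    by_cases h : ∃ j, φ j y ≠ 0
    · obtain ⟨j, hj⟩ := h
      exact okaAt_unit hφ j hj
    · push Not at h
      exact okaAt_zero (Eventually.of_forall fun p _ j => by rw [Subsingleton.elim p y]; exact h j)
  | succ n ih =>
    refine okaAt_of_rows' (fun ι _ φ hφ => ?_) κ ι Φ hΦ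
    by_cases h : ∃ j, φ j y ≠ 0
    · obtain ⟨j, hj⟩ := h
      exact okaAt_unit hφ j hj
    push Not at h
    by_cases h' : ∃ j, ¬ ∀ᶠ p in 𝓝 y, φ j p = 0
    swap
    · push Not at h'
      exact okaAt_zero ((eventually_all.2 h').mono fun p hp _ => hp)
    obtain ⟨j₀, hj₀⟩ := h'
    obtain ⟨v, hv⟩ := exists_line (hφ j₀) hj₀
    have hv0 : v ≠ 0 := by
      rintro rfl
      exact hv (by simp [h j₀])
    -- linear coordinates in which `v` is the last basis vector
    obtain ⟨e, he⟩ : ∃ e : ((Fin n → ℂ) × ℂ) ≃L[ℂ] (Fin (n + 1) → ℂ), e (0, 1) = v := by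
      let e₀ : ((Fin n → ℂ) × ℂ) ≃L[ℂ] (Fin (n + 1) → ℂ) :=
        ContinuousLinearEquiv.ofFinrankEq (by simp)
      obtain ⟨A, hA⟩ := SeparatingDual.exists_continuousLinearEquiv_apply_eq (R := ℂ)
        (x := e₀ (0, 1)) (y := v) (by simp) hv0
      exact ⟨e₀.trans A, hA⟩
    obtain ⟨⟨y', t₀⟩, rfl⟩ := e.surjective y
    refine OkaAt.of_equiv e (Φ := fun _ : Unit => φ) ?_
    have hφe : ∀ j, AnalyticAt ℂ (fun p => φ j (e p)) (y', t₀) := fun j =>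
      AnalyticAt.fun_comp (g := φ j) (f := e) (hφ j) (e.analyticAt _)
    have hsl : AnalyticAt ℂ (fun t => φ j₀ (e (y', t))) t₀ :=
      AnalyticAt.fun_comp (g := fun p => φ j₀ (e p)) (f := fun t => (y', t)) (hφe j₀)
        (analyticAt_const.prod analyticAt_id)
    obtain ⟨d, u, hu, hu0, hue⟩ := hsl.exists_eventuallyEq_pow_smul_nonzero_iff.2 (by
      intro h0
      apply hv
      have ht : Tendsto (fun t : ℂ => t₀ + t) (𝓝 0) (𝓝 t₀) := by
        exact (continuous_add_left t₀).tendsto' 0 t₀ (add_zero t₀)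
      filter_upwards [ht.eventually h0] with t h1
      rw [← h1, ← he, ← map_smul, ← map_add]
      simp)
    exact okaAt_regular (fun κ ι _ _ Φ hΦ => ih y' κ ι Φ hΦ) (fun j p => φ j (e p)) hφe j₀ d u hu hu0 hue

end

/-! ### Cauchy's formula for rectangles -/

section

open Set Filter Topology Metric Complex MeasureTheory

theorem log_corner {z : ℂ} (h1 : 0 < z.re) (h2 : 0 < z.im) :
    log z - log (-I * z) = (Real.pi / 2 : ℝ) * I := by
  have hz : -I * z ≠ 0 := by
    intro h
    have := congrArg Complex.re h
    simp at this
    exact h2.ne' this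
  have ha : |(-I * z).arg| < Real.pi / 2 := by
    rw [abs_arg_lt_pi_div_two_iff]
    left; simpa using h2
  have : log (I * (-I * z)) = log I + log (-I * z) := by
    rw [abs_lt] at ha
    apply log_mul I_ne_zero hz
    rw [arg_I]
    constructor <;> linarith [Real.pi_pos]
  have h3 : I * (-I * z) = z := by rw [← mul_assoc]; simp
  rw [h3] at this
  rw [this, log_I]
  push_cast; ring

/-- The integral of `dζ / ζ` along a segment in the half plane `Re (κ ζ) > 0`. -/
theorem edge_log (p ω κ : ℂ) (hκ : κ ≠ 0) (a b : ℝ) (hab : a ≤ b)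
    (h : ∀ τ ∈ Icc a b, 0 < (κ * (p + τ * ω)).re) :
    ∫ τ : ℝ in a..b, (ω * (p + τ * ω)⁻¹) = log (κ * (p + b * ω)) - log (κ * (p + a * ω)) := by
  have hne : ∀ τ ∈ Icc a b, p + τ * ω ≠ 0 := fun τ hτ h0 => by
    have := h τ hτ
    simp [h0] at this
  have hder : ∀ τ ∈ uIcc a b, HasDerivAt (fun τ : ℝ => log (κ * (p + τ * ω)))
      (ω * (p + τ * ω)⁻¹) τ := by
    intro τ hτ
    rw [uIcc_of_le hab] at hτ
    have h1 : HasDerivAt (fun τ : ℝ => κ * (p + τ * ω)) (κ * ω) τ := by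
      have := ((((hasDerivAt_id τ).ofReal_comp).mul_const ω).const_add p).const_mul κ
      simpa using this
    have h2 := h1.clog_real (Or.inl (h τ hτ))
    convert h2 using 1
    field_simp [hne τ hτ]
  refine intervalIntegral.integral_eq_sub_of_hasDerivAt hder ?_
  refine ContinuousOn.intervalIntegrable ?_
  rw [uIcc_of_le hab]
  exact continuousOn_const.mul (ContinuousOn.inv₀ (by fun_prop) hne)

/-- `∮ dζ / (ζ - w) = 2πi` around a rectangle containing `w`. -/
theorem rect_inv {a b c d : ℝ} {w : ℂ} (h1 : a < w.re) (h2 : w.re < b) (h3 : c < w.im)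
    (h4 : w.im < d) :
    (∫ x : ℝ in a..b, ((x : ℂ) + c * I - w)⁻¹) - (∫ x : ℝ in a..b, ((x : ℂ) + d * I - w)⁻¹) +
      I * (∫ y : ℝ in c..d, ((b : ℂ) + y * I - w)⁻¹) -
      I * (∫ y : ℝ in c..d, ((a : ℂ) + y * I - w)⁻¹) = 2 * Real.pi * I := by
  have e1 := edge_log (c * I - w) 1 I I_ne_zero a b (by linarith) (fun τ _ => by simp; linarith)
  have e2 := edge_log (d * I - w) 1 (-I) (by simp) a b (by linarith) (fun τ _ => by simp; linarith)
  have e3 := edge_log (b - w) I 1 one_ne_zero c d (by linarith) (fun τ _ => by simp; linarith)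
  have e4 := edge_log (a - w) I (-1) (by simp) c d (by linarith) (fun τ _ => by simp; linarith)
  have f1 : (∫ x : ℝ in a..b, ((x : ℂ) + c * I - w)⁻¹) =
      ∫ τ : ℝ in a..b, (1 * ((c * I - w) + τ * 1 : ℂ)⁻¹) := by
    congr 1; ext x; rw [one_mul]; congr 1; ring
  have f2 : (∫ x : ℝ in a..b, ((x : ℂ) + d * I - w)⁻¹) =
      ∫ τ : ℝ in a..b, (1 * ((d * I - w) + τ * 1 : ℂ)⁻¹) := by
    congr 1; ext x; rw [one_mul]; congr 1; ring
  have f3 : I * (∫ y : ℝ in c..d, ((b : ℂ) + y * I - w)⁻¹) =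
      ∫ τ : ℝ in c..d, (I * ((b - w) + τ * I : ℂ)⁻¹) := by
    rw [← intervalIntegral.integral_const_mul]
    congr 1; ext x; congr 2; ring
  have f4 : I * (∫ y : ℝ in c..d, ((a : ℂ) + y * I - w)⁻¹) =
      ∫ τ : ℝ in c..d, (I * ((a - w) + τ * I : ℂ)⁻¹) := by
    rw [← intervalIntegral.integral_const_mul]
    congr 1; ext x; congr 2; ring
  rw [f1, f2, f3, f4, e1, e2, e3, e4]
  have k1 := log_corner (z := b + d * I - w) (by simp; linarith) (by simp; linarith)
  have k2 := log_corner (z := I * (b + c * I - w)) (by simp; linarith) (by simp; linarith)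
  have k3 := log_corner (z := -I * (a + d * I - w)) (by simp; linarith) (by simp; linarith)
  have k4 := log_corner (z := -1 * (a + c * I - w)) (by simp; linarith) (by simp; linarith)
  have hII : ∀ z : ℂ, -I * (I * z) = z := fun z => by rw [← mul_assoc]; simp
  have hII' : ∀ z : ℂ, -I * (-I * z) = -1 * z := fun z => by rw [← mul_assoc]; simp
  have hII'' : ∀ z : ℂ, -I * (-1 * z) = I * z := fun z => by ring
  rw [hII] at k2
  rw [hII'] at k3
  rw [hII''] at k4
  have g1 : (c * I - w + b * 1 : ℂ) = b + c * I - w := by ring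
  have g2 : (c * I - w + a * 1 : ℂ) = a + c * I - w := by ring
  have g3 : (d * I - w + b * 1 : ℂ) = b + d * I - w := by ring
  have g4 : (d * I - w + a * 1 : ℂ) = a + d * I - w := by ring
  have g5 : (b - w + c * I : ℂ) = b + c * I - w := by ring
  have g6 : (b - w + d * I : ℂ) = b + d * I - w := by ring
  have g7 : (a - w + c * I : ℂ) = a + c * I - w := by ring
  have g8 : (a - w + d * I : ℂ) = a + d * I - w := by ring
  rw [g1, g2, g3, g4, g5, g6, g7, g8, one_mul, one_mul]
  push_cast at k1 k2 k3 k4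
  linear_combination k1 + k2 + k3 + k4

/-- Cauchy's integral formula for a rectangle. -/
theorem cauchy_rect {F : Type} [NormedAddCommGroup F] [NormedSpace ℂ F] [CompleteSpace F]
    {a b c d : ℝ} {w : ℂ} (h1 : a < w.re) (h2 : w.re < b) (h3 : c < w.im) (h4 : w.im < d)
    {f : ℂ → F} (hf : ∀ z : ℂ, z.re ∈ Icc a b → z.im ∈ Icc c d → DifferentiableAt ℂ f z) :
    (∫ x : ℝ in a..b, ((x : ℂ) + c * I - w)⁻¹ • f (x + c * I)) -
      (∫ x : ℝ in a..b, ((x : ℂ) + d * I - w)⁻¹ • f (x + d * I)) +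
      I • (∫ y : ℝ in c..d, ((b : ℂ) + y * I - w)⁻¹ • f (b + y * I)) -
      I • (∫ y : ℝ in c..d, ((a : ℂ) + y * I - w)⁻¹ • f (a + y * I)) = (2 * Real.pi * I : ℂ) • f w := by
  have hab : a ≤ b := by linarith
  have hcd : c ≤ d := by linarith
  have hwf : DifferentiableAt ℂ f w := hf w ⟨h1.le, h2.le⟩ ⟨h3.le, h4.le⟩
  have hrect : ∀ z ∈ uIcc a b ×ℂ uIcc c d, DifferentiableAt ℂ f z := by
    intro z hz
    rw [mem_reProdIm, uIcc_of_le hab, uIcc_of_le hcd] at hz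
    exact hf z hz.1 hz.2
  have key := integral_boundary_rect_eq_zero_of_differentiable_on_off_countable (dslope f w)
    (a + c * I) (b + d * I) {w} (countable_singleton w) (by
      simp only [add_re, ofReal_re, mul_re, I_re, mul_zero, ofReal_im, I_im, mul_one, sub_self,
        add_zero, add_im, mul_im, zero_add]
      rw [continuousOn_dslope]
      · exact ⟨fun z hz => (hrect z hz).continuousAt.continuousWithinAt, hwf⟩
      · rw [uIcc_of_le hab, uIcc_of_le hcd]
        exact mem_of_superset ((isOpen_Ioo.reProdIm isOpen_Ioo).mem_nhds
          (mem_reProdIm.2 ⟨⟨h1, h2⟩, ⟨h3, h4⟩⟩))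
          (fun z hz => ⟨Ioo_subset_Icc_self hz.1, Ioo_subset_Icc_self hz.2⟩)) (by
      simp only [add_re, ofReal_re, mul_re, I_re, mul_zero, ofReal_im, I_im, mul_one, sub_self,
        add_zero, add_im, mul_im, zero_add, min_eq_left hab, max_eq_right hab, min_eq_left hcd,
        max_eq_right hcd]
      intro z hz
      rw [differentiableAt_dslope_of_ne hz.2]
      exact hf z (Ioo_subset_Icc_self hz.1.1) (Ioo_subset_Icc_self hz.1.2))
  simp only [add_re, ofReal_re, mul_re, I_re, mul_zero, ofReal_im, I_im, mul_one, sub_self,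
        add_zero, add_im, mul_im, zero_add] at key
  -- each edge avoids `w`, so the difference quotient splits
  have split : ∀ (γ : ℝ → ℂ) (α β : ℝ), α ≤ β → Continuous γ → (∀ τ ∈ Icc α β, γ τ ≠ w) →
      (∀ τ ∈ Icc α β, DifferentiableAt ℂ f (γ τ)) →
      ∫ τ in α..β, dslope f w (γ τ) = (∫ τ in α..β, (γ τ - w)⁻¹ • f (γ τ)) -
        (∫ τ in α..β, (γ τ - w)⁻¹) • f w := by
    intro γ α β hαβ hγ hne hd
    have hc1 : ContinuousOn (fun τ => (γ τ - w)⁻¹) (Icc α β) :=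
      ContinuousOn.inv₀ (by fun_prop) fun τ hτ => sub_ne_zero.2 (hne τ hτ)
    have hc2 : ContinuousOn (fun τ => f (γ τ)) (Icc α β) := fun τ hτ =>
      (ContinuousAt.comp (f := γ) (g := f) (hd τ hτ).continuousAt
        hγ.continuousAt).continuousWithinAt
    rw [← intervalIntegral.integral_smul_const, ← intervalIntegral.integral_sub]
    · refine intervalIntegral.integral_congr fun τ hτ => ?_
      rw [uIcc_of_le hαβ] at hτ
      rw [dslope_of_ne _ (hne τ hτ), slope_def_module, smul_sub]
    · exact ContinuousOn.intervalIntegrable (by rw [uIcc_of_le hαβ]; exact hc1.smul hc2)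
    · exact ContinuousOn.intervalIntegrable
        (by rw [uIcc_of_le hαβ]; exact hc1.smul continuousOn_const)
  rw [split (fun x => x + c * I) a b hab (by fun_prop), split (fun x => x + d * I) a b hab (by fun_prop),
    split (fun y => b + y * I) c d hcd (by fun_prop), split (fun y => a + y * I) c d hcd (by fun_prop)] at key
  · rw [← rect_inv h1 h2 h3 h4]
    rw [← sub_eq_zero, ← key]
    simp only [smul_sub, sub_smul, add_smul, mul_smul]
    abel
  · intro τ _ h
    have := congrArg Complex.re h
    simp at this; linarith
  · intro τ hτ
    exact hf _ (by simpa using hab) (by simpa using hτ)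
  · intro τ _ h
    have := congrArg Complex.re h
    simp at this; linarith
  · intro τ hτ
    exact hf _ (by simpa using hab) (by simpa using hτ)
  · intro τ _ h
    have := congrArg Complex.im h
    simp at this; linarith
  · intro τ hτ
    exact hf _ (by simpa using hτ) (by simpa using hcd)
  · intro τ _ h
    have := congrArg Complex.im h
    simp at this; linarith
  · intro τ hτ
    exact hf _ (by simpa using hτ) (by simpa using hcd)

end

/-! ### Open boxes and path integrals in one coordinate -/

section

open Set Filter Topology Metric Complex MeasureTheory

section
variable {n : ℕ} {F : Type} [NormedAddCommGroup F] [NormedSpace ℂ F] [CompleteSpace F]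

/-- An open rectangle: the `r`-neighbourhood (in the real and imaginary parts) of the closed
rectangle with corners `l` and `u`. -/
def rectNhd (l u : ℂ) (r : ℝ) : Set ℂ :=
  {z | (l.re - r < z.re ∧ z.re < u.re + r) ∧ (l.im - r < z.im ∧ z.im < u.im + r)}

/-- Products of open rectangles. -/
def oBox (l u : Fin n → ℂ) (r : ℝ) : Set (Fin n → ℂ) := {z | ∀ i, z i ∈ rectNhd (l i) (u i) r}

theorem isOpen_rectNhd (l u : ℂ) (r : ℝ) : IsOpen (rectNhd l u r) := by
  have : rectNhd l u r = (re ⁻¹' Ioo (l.re - r) (u.re + r)) ∩ (im ⁻¹' Ioo (l.im - r) (u.im + r)) := rfl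
  rw [this]
  exact (isOpen_Ioo.preimage continuous_re).inter (isOpen_Ioo.preimage continuous_im)

theorem oBox_eq (l u : Fin n → ℂ) (r : ℝ) : oBox l u r = univ.pi fun i => rectNhd (l i) (u i) r := by
  ext z; simp [oBox]

theorem isOpen_oBox (l u : Fin n → ℂ) (r : ℝ) : IsOpen (oBox l u r) := by
  rw [oBox_eq]
  exact isOpen_set_pi finite_univ fun i _ => isOpen_rectNhd _ _ _

theorem rectNhd_mono {l u l' u' : ℂ} {r r' : ℝ} (h1 : l.re - r ≤ l'.re - r') (h2 : u'.re + r' ≤ u.re + r)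
    (h3 : l.im - r ≤ l'.im - r') (h4 : u'.im + r' ≤ u.im + r) : rectNhd l' u' r' ⊆ rectNhd l u r :=
  fun _ hz => ⟨⟨h1.trans_lt hz.1.1, hz.1.2.trans_le h2⟩, ⟨h3.trans_lt hz.2.1, hz.2.2.trans_le h4⟩⟩

theorem oBox_mono_r {l u : Fin n → ℂ} {r r' : ℝ} (h : r' ≤ r) : oBox l u r' ⊆ oBox l u r :=
  fun _ hz i => rectNhd_mono (by linarith) (by linarith) (by linarith) (by linarith) (hz i)

theorem update_mem_pi {D : Fin n → Set ℂ} {j : Fin n} {D' : Set ℂ} {z : Fin n → ℂ}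
    (hz : z ∈ univ.pi (Function.update D j D')) {ζ : ℂ} (hζ : ζ ∈ D j) :
    Function.update z j ζ ∈ univ.pi D := by
  intro i _
  by_cases h : i = j
  · subst h; simpa using hζ
  · have := hz i (mem_univ i)
    simpa [h] using this

theorem analyticAt_update_const (j : Fin n) (ζ : ℂ) (z : Fin n → ℂ) :
    AnalyticAt ℂ (fun z : Fin n → ℂ => Function.update z j ζ) z := by
  rw [analyticAt_pi_iff]
  intro i
  by_cases h : i = j
  · subst h; simp only [Function.update_self]; exact analyticAt_const
  · simp only [Function.update_of_ne h]
    exact (ContinuousLinearMap.proj (R := ℂ) (φ := fun _ : Fin n => ℂ) i).analyticAt z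

theorem analyticAt_update_snd (j : Fin n) (ζ : ℂ) (z : Fin n → ℂ) :
    AnalyticAt ℂ (fun ζ : ℂ => Function.update z j ζ) ζ := by
  rw [analyticAt_pi_iff]
  intro i
  by_cases h : i = j
  · subst h; simp only [Function.update_self]; exact analyticAt_id
  · simp only [Function.update_of_ne h]
    exact analyticAt_const

/-- Integrals over a path in the `j`-th coordinate against a kernel are analytic. -/
theorem edge_analytic {D : Fin n → Set ℂ} (hD : ∀ i, IsOpen (D i)) {j : Fin n} {D' : Set ℂ}
    (hD' : IsOpen D') {g : (Fin n → ℂ) → F} (hg : AnalyticOnNhd ℂ g (univ.pi D)) {γ : ℝ → ℂ}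
    (hγ : Continuous γ) {α β : ℝ} (hαβ : α ≤ β) (hγD : ∀ τ ∈ Icc α β, γ τ ∈ D j) {k : ℂ → ℝ → ℂ}
    (hk : ContinuousOn (Function.uncurry k) (D' ×ˢ Icc α β))
    (hka : ∀ τ ∈ Icc α β, AnalyticOnNhd ℂ (fun w => k w τ) D') :
    AnalyticOnNhd ℂ (fun z => ∫ τ in α..β, k (z j) τ • g (Function.update z j (γ τ)))
      (univ.pi (Function.update D j D')) := by
  have hop : IsOpen (univ.pi (Function.update D j D')) := by
    refine isOpen_set_pi finite_univ fun i _ => ?_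
    by_cases h : i = j
    · subst h; simpa using hD'
    · simpa [h] using hD i
  have hzj : ∀ z ∈ univ.pi (Function.update D j D'), z j ∈ D' := fun z hz => by
    simpa using hz j (mem_univ j)
  refine analyticOnNhd_intervalIntegral hop hαβ
    (fun z τ => k (z j) τ • g (Function.update z j (γ τ))) ?_ ?_
  · refine ContinuousOn.smul ?_ ?_
    · refine hk.comp (f := fun p : (Fin n → ℂ) × ℝ => (p.1 j, p.2)) (by fun_prop) ?_
      rintro ⟨z, τ⟩ ⟨hz, hτ⟩
      exact ⟨hzj z hz, hτ⟩
    · refine hg.continuousOn.comp (f := fun p : (Fin n → ℂ) × ℝ => Function.update p.1 j (γ p.2)) ?_ ?_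
      · exact (continuous_fst.update j (hγ.comp continuous_snd)).continuousOn
      · rintro ⟨z, τ⟩ ⟨hz, hτ⟩
        exact update_mem_pi hz (hγD τ hτ)
  · intro τ hτ z hz
    refine AnalyticAt.smul ?_ ?_
    · exact AnalyticAt.fun_comp (g := fun w => k w τ) (f := fun z : Fin n → ℂ => z j)
        (hka τ hτ _ (hzj z hz))
        ((ContinuousLinearMap.proj (R := ℂ) (φ := fun _ : Fin n => ℂ) j).analyticAt z)
    · exact AnalyticAt.fun_comp (g := g) (hg _ (update_mem_pi hz (hγD τ hτ)))
        (analyticAt_update_const j _ z)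

theorem edge_bound {D : Fin n → Set ℂ} {j : Fin n} {D' : Set ℂ}
    {g : (Fin n → ℂ) → F} {M : ℝ} (hM : ∀ z ∈ univ.pi D, ‖g z‖ ≤ M) {γ : ℝ → ℂ}
    {α β : ℝ} (hαβ : α ≤ β) (hγD : ∀ τ ∈ Icc α β, γ τ ∈ D j) {k : ℂ → ℝ → ℂ} {κ : ℝ}
    (hk : ∀ w ∈ D', ∀ τ ∈ Icc α β, ‖k w τ‖ ≤ κ) (hκ : 0 ≤ κ) :
    ∀ z ∈ univ.pi (Function.update D j D'),
      ‖∫ τ in α..β, k (z j) τ • g (Function.update z j (γ τ))‖ ≤ κ * M * (β - α) := by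
  intro z hz
  have hzj : z j ∈ D' := by simpa using hz j (mem_univ j)
  have := intervalIntegral.norm_integral_le_of_norm_le_const (a := α) (b := β) (C := κ * M)
    (f := fun τ => k (z j) τ • g (Function.update z j (γ τ))) (by
      intro τ hτ
      rw [uIoc_of_le hαβ] at hτ
      have hτ' := Ioc_subset_Icc_self hτ
      rw [norm_smul]
      exact mul_le_mul (hk _ hzj τ hτ') (hM _ (update_mem_pi hz (hγD τ hτ'))) (norm_nonneg _) hκ)
  rwa [abs_of_nonneg (by linarith)] at this

/-- The Cauchy kernel along a path at distance `≥ δ`. -/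
theorem edge_cauchy {D : Fin n → Set ℂ} (hD : ∀ i, IsOpen (D i)) {j : Fin n} {D' : Set ℂ}
    (hD' : IsOpen D') {g : (Fin n → ℂ) → F} (hg : AnalyticOnNhd ℂ g (univ.pi D)) {M : ℝ}
    (hM : ∀ z ∈ univ.pi D, ‖g z‖ ≤ M) {γ : ℝ → ℂ}
    (hγ : Continuous γ) {α β : ℝ} (hαβ : α ≤ β) (hγD : ∀ τ ∈ Icc α β, γ τ ∈ D j) {δ : ℝ} (hδ : 0 < δ)
    (hdist : ∀ w ∈ D', ∀ τ ∈ Icc α β, δ ≤ ‖γ τ - w‖) :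
    AnalyticOnNhd ℂ (fun z => ∫ τ in α..β, (γ τ - z j)⁻¹ • g (Function.update z j (γ τ)))
      (univ.pi (Function.update D j D')) ∧
    ∀ z ∈ univ.pi (Function.update D j D'),
      ‖∫ τ in α..β, (γ τ - z j)⁻¹ • g (Function.update z j (γ τ))‖ ≤ δ⁻¹ * M * (β - α) := by
  have hne : ∀ w ∈ D', ∀ τ ∈ Icc α β, γ τ - w ≠ 0 := fun w hw τ hτ => by
    have := hdist w hw τ hτ
    exact norm_pos_iff.1 (hδ.trans_le this)
  refine ⟨edge_analytic (k := fun w τ => (γ τ - w)⁻¹) hD hD' hg hγ hαβ hγD ?_ ?_,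
    edge_bound (k := fun w τ => (γ τ - w)⁻¹) hM hαβ hγD ?_ (inv_nonneg.2 hδ.le)⟩
  · refine ContinuousOn.inv₀ (f := fun p : ℂ × ℝ => γ p.2 - p.1) (by fun_prop) ?_
    rintro ⟨w, τ⟩ ⟨hw, hτ⟩
    exact hne w hw τ hτ
  · intro τ hτ w hw
    exact (analyticAt_const.sub analyticAt_id).inv (hne w hw τ hτ)
  · intro w hw τ hτ
    rw [norm_inv]
    exact inv_anti₀ hδ (hdist w hw τ hτ)

end

end

/-! ### Cousin's additive splitting -/

section

open Set Filter Topology Metric Complex MeasureTheory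

section
variable {n : ℕ} {F : Type} [NormedAddCommGroup F] [NormedSpace ℂ F] [CompleteSpace F]

/-- The lower corner `l` with the real part of its `j`-th coordinate replaced by `t`. -/
def setRe (j : Fin n) (t : ℝ) (l : Fin n → ℂ) : Fin n → ℂ := Function.update l j ⟨t, (l j).im⟩

@[simp] theorem setRe_self (j : Fin n) (t : ℝ) (l : Fin n → ℂ) : setRe j t l j = ⟨t, (l j).im⟩ := by
  simp [setRe]

theorem setRe_ne {j i : Fin n} (h : i ≠ j) (t : ℝ) (l : Fin n → ℂ) : setRe j t l i = l i := by
  simp [setRe, h]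

/-- `oBox` with smaller radius sits inside a product in which the `j`-th factor was exchanged. -/
theorem oBox_sub_pi {l u l' u' : Fin n → ℂ} {r r' : ℝ} (h : r' ≤ r) {j : Fin n}
    (hl : ∀ i, i ≠ j → l' i = l i) (hu : ∀ i, i ≠ j → u' i = u i) :
    oBox l' u' r' ⊆ univ.pi (Function.update (fun i => rectNhd (l i) (u i) r) j
      (rectNhd (l' j) (u' j) r')) := by
  intro z hz i _
  by_cases hi : i = j
  · subst hi; simpa using hz i
  · have := hz i
    rw [hl i hi, hu i hi] at this
    simp only [Function.update_of_ne hi]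
    exact rectNhd_mono (by linarith) (by linarith) (by linarith) (by linarith) this

/-- The Cauchy integral over the boundary of a rectangle in the `j`-th variable. -/
theorem cauchy_box {D : Fin n → Set ℂ} {j : Fin n} {g : (Fin n → ℂ) → F}
    (hg : AnalyticOnNhd ℂ g (univ.pi D)) {a b c d : ℝ}
    (hD : ∀ z : ℂ, z.re ∈ Icc a b → z.im ∈ Icc c d → z ∈ D j) {z : Fin n → ℂ}
    (hz : z ∈ univ.pi (Function.update D j univ))
    (h1 : a < (z j).re) (h2 : (z j).re < b) (h3 : c < (z j).im) (h4 : (z j).im < d) :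
    (2 * Real.pi * I) • g z =
    (∫ x in a..b, ((x:ℂ) + c * I - z j)⁻¹ • g (Function.update z j (x + c * I)))
    - (∫ x in a..b, ((x:ℂ) + d * I - z j)⁻¹ • g (Function.update z j (x + d * I)))
    + I • (∫ y in c..d, ((b:ℂ) + y * I - z j)⁻¹ • g (Function.update z j (b + y * I)))
    - I • (∫ y in c..d, ((a:ℂ) + y * I - z j)⁻¹ • g (Function.update z j (a + y * I))) := by
  have := cauchy_rect (f := fun ζ => g (Function.update z j ζ)) h1 h2 h3 h4 (by
    intro ζ hr hi
    exact (AnalyticAt.fun_comp (g := g) (hg _ (update_mem_pi hz (hD ζ hr hi)))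
      (analyticAt_update_snd j ζ z)).differentiableAt)
  rw [Function.update_eq_self] at this
  exact this.symm

/-- Additive splitting with bounds (Cousin). The Cauchy integral of `g` over the boundary of a
rectangle around the face is divided into the part over the right vertical edge together with the
horizontal ones, and the part over the left vertical edge. -/
theorem cousin_split (l u : Fin n → ℂ) (hlu : ∀ i, (l i).re ≤ (u i).re ∧ (l i).im ≤ (u i).im)
    (j : Fin n) (t : ℝ) {r r' : ℝ} (hr' : 0 < r') (hrr : r' < r) (hr1 : r ≤ 1)
    {g : (Fin n → ℂ) → F} (hg : AnalyticOnNhd ℂ g (oBox (setRe j t l) (setRe j t u) r)) {M : ℝ}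
    (hM : ∀ z ∈ oBox (setRe j t l) (setRe j t u) r, ‖g z‖ ≤ M) :
    ∃ g' g'' : (Fin n → ℂ) → F, AnalyticOnNhd ℂ g' (oBox l (setRe j t u) r') ∧
      AnalyticOnNhd ℂ g'' (oBox (setRe j t l) u r') ∧
      (∀ z ∈ oBox (setRe j t l) (setRe j t u) r', g z = g' z - g'' z) ∧
      (∀ z ∈ oBox l (setRe j t u) r', ‖g' z‖ ≤ ((u j).im - (l j).im + 6) / (r - r') * M) ∧
      (∀ z ∈ oBox (setRe j t l) u r', ‖g'' z‖ ≤ ((u j).im - (l j).im + 6) / (r - r') * M) := by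
  set D : Fin n → Set ℂ := fun i => rectNhd (setRe j t l i) (setRe j t u i) r with hDdef
  have hDo : ∀ i, IsOpen (D i) := fun i => isOpen_rectNhd _ _ _
  rw [oBox_eq] at hg hM
  set s := (r + r') / 2 with hs
  set δ := (r - r') / 2 with hδ
  have hδ0 : 0 < δ := by rw [hδ]; linarith
  set a := t - s with ha
  set b := t + s with hb
  set c := (l j).im - s with hc
  set d := (u j).im + s with hd
  have hH := (hlu j).2
  have hDj : ∀ z : ℂ, z.re ∈ Icc a b → z.im ∈ Icc c d → z ∈ D j := by
    intro z hz1 hz2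
    simp only [hDdef, setRe_self, rectNhd, mem_setOf_eq]
    simp only [mem_Icc, ha, hb, hc, hd, hs] at hz1 hz2
    refine ⟨⟨?_, ?_⟩, ?_, ?_⟩ <;> linarith
  have hab : a ≤ b := by rw [ha, hb, hs]; linarith
  have hcd : c ≤ d := by rw [hc, hd, hs]; linarith
  have eB := fun D' hD' => edge_cauchy (j := j) hDo (D' := D') hD' hg hM
    (γ := fun x : ℝ => (x:ℂ) + c * I)
    (by fun_prop) hab (fun τ hτ => hDj _ (by simpa using hτ) (by simpa using hcd)) hδ0
  have eT := fun D' hD' => edge_cauchy (j := j) hDo (D' := D') hD' hg hM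
    (γ := fun x : ℝ => (x:ℂ) + d * I)
    (by fun_prop) hab (fun τ hτ => hDj _ (by simpa using hτ) (by simpa using hcd)) hδ0
  have eR := fun D' hD' => edge_cauchy (j := j) hDo (D' := D') hD' hg hM
    (γ := fun y : ℝ => (b:ℂ) + y * I)
    (by fun_prop) hcd (fun τ hτ => hDj _ (by simpa using hab) (by simpa using hτ)) hδ0
  have eL := fun D' hD' => edge_cauchy (j := j) hDo (D' := D') hD' hg hM
    (γ := fun y : ℝ => (a:ℂ) + y * I)
    (by fun_prop) hcd (fun τ hτ => hDj _ (by simpa using hab) (by simpa using hτ)) hδ0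
  have habs : ∀ {p q : ℝ}, δ ≤ p - q → δ ≤ |p - q| := fun h => h.trans (le_abs_self _)
  have habs' : ∀ {p q : ℝ}, δ ≤ q - p → δ ≤ |p - q| := fun h =>
    h.trans (by rw [abs_sub_comm]; exact le_abs_self _)
  obtain ⟨aB, bB⟩ := eB (rectNhd (l j) (setRe j t u j) r') (isOpen_rectNhd _ _ _) (by
    intro w hw τ _
    refine le_trans ?_ (abs_im_le_norm _)
    have := hw.2.1
    simp only [sub_im, add_im, ofReal_im, mul_im, ofReal_re, I_im, I_re, mul_one, mul_zero, add_zero,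
      zero_add]
    refine habs' ?_
    rw [hc, hδ, hs]; linarith)
  obtain ⟨aT, bT⟩ := eT (rectNhd (l j) (setRe j t u j) r') (isOpen_rectNhd _ _ _) (by
    intro w hw τ _
    refine le_trans ?_ (abs_im_le_norm _)
    have := hw.2.2
    simp only [sub_im, add_im, ofReal_im, mul_im, ofReal_re, I_im, I_re, mul_one, mul_zero, add_zero,
      zero_add, setRe_self] at this ⊢
    refine habs ?_
    rw [hd, hδ, hs]; linarith)
  obtain ⟨aR, bR⟩ := eR (rectNhd (l j) (setRe j t u j) r') (isOpen_rectNhd _ _ _) (by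
    intro w hw τ _
    refine le_trans ?_ (abs_re_le_norm _)
    have := hw.1.2
    simp only [sub_re, add_re, ofReal_im, mul_re, ofReal_re, I_im, I_re, mul_one, mul_zero, add_zero,
      zero_add, setRe_self, sub_zero] at this ⊢
    refine habs ?_
    rw [hb, hδ, hs]; linarith)
  obtain ⟨aL, bL⟩ := eL (rectNhd (setRe j t l j) (u j) r') (isOpen_rectNhd _ _ _) (by
    intro w hw τ _
    refine le_trans ?_ (abs_re_le_norm _)
    have := hw.1.1
    simp only [sub_re, add_re, ofReal_im, mul_re, ofReal_re, I_im, I_re, mul_one, mul_zero, add_zero,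
      zero_add, setRe_self, sub_zero] at this ⊢
    refine habs' ?_
    rw [ha, hδ, hs]; linarith)
  have sub' : oBox l (setRe j t u) r' ⊆ univ.pi (Function.update D j
      (rectNhd (l j) (setRe j t u j) r')) :=
    oBox_sub_pi hrr.le (fun i hi => (setRe_ne hi t l).symm) (fun i hi => rfl)
  have sub'' : oBox (setRe j t l) u r' ⊆ univ.pi (Function.update D j
      (rectNhd (setRe j t l j) (u j) r')) :=
    oBox_sub_pi hrr.le (fun i hi => rfl) (fun i hi => (setRe_ne hi t u).symm)
  have hπ : (2 * Real.pi * I : ℂ) ≠ 0 := by simp [Real.pi_ne_zero]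
  have hnπ : ‖(2 * Real.pi * I : ℂ)⁻¹‖ ≤ 1 / 2 := by
    rw [norm_inv, one_div]
    refine inv_anti₀ (by norm_num) ?_
    simp only [norm_mul, Complex.norm_I, mul_one, Complex.norm_real, Real.norm_eq_abs,
      abs_of_pos Real.pi_pos, Complex.norm_ofNat]
    linarith [Real.pi_gt_three]
  refine ⟨fun z => (2 * Real.pi * I : ℂ)⁻¹ • (
      (∫ x in a..b, ((x:ℂ) + c * I - z j)⁻¹ • g (Function.update z j (x + c * I)))
    - (∫ x in a..b, ((x:ℂ) + d * I - z j)⁻¹ • g (Function.update z j (x + d * I)))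
    + I • (∫ y in c..d, ((b:ℂ) + y * I - z j)⁻¹ • g (Function.update z j (b + y * I)))),
    fun z => (2 * Real.pi * I : ℂ)⁻¹ •
      I • (∫ y in c..d, ((a:ℂ) + y * I - z j)⁻¹ • g (Function.update z j (a + y * I))),
    ?_, ?_, ?_, ?_, ?_⟩
  · intro z hz
    exact analyticAt_const.smul (((aB z (sub' hz)).sub (aT z (sub' hz))).add
      (analyticAt_const.smul (aR z (sub' hz))))
  · intro z hz
    exact analyticAt_const.smul (analyticAt_const.smul (aL z (sub'' hz)))
  · intro z hz
    have hzj := hz j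
    simp only [setRe_self, rectNhd, mem_setOf_eq] at hzj
    have := cauchy_box hg hDj (z := z) (by
      intro i _
      by_cases hi : i = j
      · subst hi; simp
      · simp only [Function.update_of_ne hi]
        exact rectNhd_mono (by linarith) (by linarith) (by linarith) (by linarith) (hz i))
      (by rw [ha, hs]; linarith) (by rw [hb, hs]; linarith) (by rw [hc, hs]; linarith)
      (by rw [hd, hs]; linarith)
    rw [← smul_sub, ← this, smul_smul, inv_mul_cancel₀ hπ, one_smul]
  · intro z hz
    have hM0 : 0 ≤ M := by
      obtain ⟨w, hw⟩ : (univ.pi D).Nonempty := ⟨setRe j t l, fun i _ => by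
        by_cases hi : i = j
        · subst hi; simp only [hDdef, setRe_self, rectNhd, mem_setOf_eq]
          refine ⟨⟨?_, ?_⟩, ?_, ?_⟩ <;> linarith
        · simp only [hDdef, setRe_ne hi, rectNhd, mem_setOf_eq]
          have := hlu i
          refine ⟨⟨?_, ?_⟩, ?_, ?_⟩ <;> linarith⟩
      exact (norm_nonneg _).trans (hM w hw)
    have h1 := bB z (sub' hz)
    have h2 := bT z (sub' hz)
    have h3 := bR z (sub' hz)
    rw [norm_smul]
    have h4 := (norm_add_le_of_le (norm_sub_le_of_le h1 h2)
      (show ‖I • (∫ y in c..d, ((b:ℂ) + y * I - z j)⁻¹ • g (Function.update z j (b + y * I)))‖ ≤ δ⁻¹ * M * (d - c)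
        by rw [norm_smul, Complex.norm_I, one_mul]; exact h3))
    refine (mul_le_mul hnπ h4 (norm_nonneg _) (by norm_num)).trans ?_
    have e1 : (b - a) + (b - a) + (d - c) ≤ (u j).im - (l j).im + 6 := by
      rw [hb, ha, hc, hd, hs]; linarith
    have e2 : ((u j).im - (l j).im + 6) / (r - r') * M =
      1 / 2 * (δ⁻¹ * M * ((u j).im - (l j).im + 6)) := by
      rw [hδ]; have : r - r' ≠ 0 := by linarith
      field_simp
    rw [e2]
    have e3 : 0 ≤ δ⁻¹ * M := by positivity
    nlinarith
  · intro z hz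
    have h1 := bL z (sub'' hz)
    have hM0 : 0 ≤ M := by
      obtain ⟨w, hw⟩ : (univ.pi D).Nonempty := ⟨setRe j t l, fun i _ => by
        by_cases hi : i = j
        · subst hi; simp only [hDdef, setRe_self, rectNhd, mem_setOf_eq]
          refine ⟨⟨?_, ?_⟩, ?_, ?_⟩ <;> linarith
        · simp only [hDdef, setRe_ne hi, rectNhd, mem_setOf_eq]
          have := hlu i
          refine ⟨⟨?_, ?_⟩, ?_, ?_⟩ <;> linarith⟩
      exact (norm_nonneg _).trans (hM w hw)
    rw [norm_smul, norm_smul, Complex.norm_I, one_mul]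
    refine (mul_le_mul hnπ h1 (norm_nonneg _) (by norm_num)).trans ?_
    have e1 : (d - c) ≤ (u j).im - (l j).im + 6 := by
      rw [hc, hd, hs]; linarith
    have e2 : ((u j).im - (l j).im + 6) / (r - r') * M =
      1 / 2 * (δ⁻¹ * M * ((u j).im - (l j).im + 6)) := by
      rw [hδ]; have : r - r' ≠ 0 := by linarith
      field_simp
    rw [e2]
    have e3 : 0 ≤ δ⁻¹ * M := by positivity
    nlinarith

end

end

/-! ### Runge approximation on boxes -/

section

open Set Filter Topology Metric Complex MeasureTheory

section
variable {n : ℕ} {F : Type} [NormedAddCommGroup F] [NormedSpace ℂ F] [CompleteSpace F]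

theorem analytic_dslope_exp (s : ℂ) : AnalyticAt ℂ (dslope Complex.exp 0) s := by
  have h : Differentiable ℂ (dslope Complex.exp 0) := by
    rw [← differentiableOn_univ]
    exact (Complex.differentiableOn_dslope univ_mem).2 Complex.differentiable_exp.differentiableOn
  exact h.analyticAt s

/-- The entire function `(1 - exp (θT(w-ζ)))/(ζ-w)` of `w` is close to the Cauchy kernel
on half planes. -/
theorem kernel_error {θ w ζ : ℂ} (hθ : ‖θ‖ = 1) {T δ : ℝ} (hT : 0 < T) (hδ : 0 < δ)
    (h : (θ * (w - ζ)).re ≤ -δ) :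
    ‖θ * T * dslope Complex.exp 0 (θ * T * (w - ζ)) - (ζ - w)⁻¹‖ ≤ Real.exp (-(T * δ)) * δ⁻¹ := by
  have hn : δ ≤ ‖ζ - w‖ := by
    have h1 := Complex.abs_re_le_norm (θ * (w - ζ))
    rw [norm_mul, hθ, one_mul, norm_sub_rev] at h1
    have h2 := neg_abs_le (θ * (w - ζ)).re
    linarith
  have hne : ζ - w ≠ 0 := norm_pos_iff.1 (hδ.trans_le hn)
  have hne' : w - ζ ≠ 0 := by rw [← neg_sub]; exact neg_ne_zero.2 hne
  have hθ0 : θ ≠ 0 := by rw [← norm_pos_iff, hθ]; exact one_pos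
  have hT0 : (T : ℂ) ≠ 0 := by exact_mod_cast hT.ne'
  have h0 : θ * T * (w - ζ) ≠ 0 := mul_ne_zero (mul_ne_zero hθ0 hT0) hne'
  rw [dslope_of_ne _ h0, slope_def_field]
  have : θ * T * ((Complex.exp (θ * T * (w - ζ)) - Complex.exp 0) / (θ * T * (w - ζ) - 0)) - (ζ - w)⁻¹
      = - (Complex.exp (θ * T * (w - ζ)) * (ζ - w)⁻¹) := by
    rw [Complex.exp_zero, sub_zero]
    have e : w - ζ = -(ζ - w) := by ring
    rw [e]
    generalize Complex.exp (θ * T * (-(ζ - w))) = x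
    field_simp
    ring
  rw [this, norm_neg, norm_mul, norm_inv, Complex.norm_exp]
  refine mul_le_mul ?_ (inv_anti₀ hδ hn) (by positivity) (by positivity)
  rw [Real.exp_le_exp]
  have : (θ * T * (w - ζ)).re = T * (θ * (w - ζ)).re := by
    rw [mul_right_comm, mul_comm, Complex.re_ofReal_mul]
  rw [this]; nlinarith

/-- A Cauchy integral over a path is approximated, on sets separated from the path by a line, by
functions entire in the `j`-th variable. -/
theorem runge_edge {D : Fin n → Set ℂ} (hD : ∀ i, IsOpen (D i)) {j : Fin n}
    {g : (Fin n → ℂ) → F} (hg : AnalyticOnNhd ℂ g (univ.pi D)) {γ : ℝ → ℂ}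
    (hγ : Continuous γ) {α β : ℝ} (hαβ : α ≤ β) (hγD : ∀ τ ∈ Icc α β, γ τ ∈ D j)
    {S : Set (Fin n → ℂ)} (hS : S ⊆ univ.pi D) {M : ℝ}
    (hM : ∀ z ∈ S, ∀ τ ∈ Icc α β, ‖g (Function.update z j (γ τ))‖ ≤ M)
    {θ : ℂ} (hθ : ‖θ‖ = 1) {δ : ℝ} (hδ : 0 < δ)
    (hdist : ∀ z ∈ S, ∀ τ ∈ Icc α β, (θ * (z j - γ τ)).re ≤ -δ) {ε : ℝ} (hε : 0 < ε) :
    ∃ h : (Fin n → ℂ) → F, AnalyticOnNhd ℂ h (univ.pi (Function.update D j univ)) ∧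
      ∀ z ∈ S, ‖h z - ∫ τ in α..β, (γ τ - z j)⁻¹ • g (Function.update z j (γ τ))‖ ≤ ε := by
  obtain ⟨T, hT, hTε⟩ : ∃ T : ℝ, 0 < T ∧ Real.exp (-(T * δ)) * (δ⁻¹ * M * (β - α)) ≤ ε := by
    have h1 : Tendsto (fun T : ℝ => Real.exp (-(T * δ)) * (δ⁻¹ * M * (β - α))) atTop (𝓝 (0 * _)) :=
      ((Real.tendsto_exp_neg_atTop_nhds_zero.comp
        (tendsto_id.atTop_mul_const hδ))).mul tendsto_const_nhds
    rw [zero_mul] at h1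
    obtain ⟨T, h2, h3⟩ := ((h1.eventually_lt_const hε).and (eventually_gt_atTop 0)).exists
    exact ⟨T, h3, h2.le⟩
  have hcd : Continuous (dslope Complex.exp 0) :=
    continuous_iff_continuousAt.2 fun s => (analytic_dslope_exp s).continuousAt
  refine ⟨fun z => ∫ τ in α..β, (θ * T * dslope Complex.exp 0 (θ * T * (z j - γ τ))) •
    g (Function.update z j (γ τ)), ?_, ?_⟩
  · refine edge_analytic (k := fun w τ => θ * T * dslope Complex.exp 0 (θ * T * (w - γ τ)))
      hD isOpen_univ hg hγ hαβ hγD ?_ ?_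
    · refine Continuous.continuousOn ?_
      exact continuous_const.mul (hcd.comp (continuous_const.mul
        (continuous_fst.sub (hγ.comp continuous_snd))))
    · intro τ hτ w hw
      exact analyticAt_const.mul (AnalyticAt.fun_comp (g := dslope Complex.exp 0)
        (analytic_dslope_exp _) (analyticAt_const.mul (analyticAt_id.sub analyticAt_const)))
  · intro z hz
    have hzD := hS hz
    have cg : ContinuousOn (fun τ => g (Function.update z j (γ τ))) (Icc α β) := by
      refine hg.continuousOn.comp (f := fun τ => Function.update z j (γ τ))
        (continuous_const.update j hγ).continuousOn ?_
      intro τ hτ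
      refine update_mem_pi (D' := univ) ?_ (hγD τ hτ)
      intro i _
      by_cases h : i = j
      · subst h; simp
      · simpa [h] using hzD i (mem_univ i)
    have hne : ∀ τ ∈ Icc α β, γ τ - z j ≠ 0 := fun τ hτ h0 => by
      have := hdist z hz τ hτ
      rw [← neg_sub, h0] at this
      simp at this; linarith
    rw [← intervalIntegral.integral_sub]
    · have := intervalIntegral.norm_integral_le_of_norm_le_const (a := α) (b := β)
        (C := Real.exp (-(T * δ)) * δ⁻¹ * M)
        (f := fun τ => (θ * T * dslope Complex.exp 0 (θ * T * (z j - γ τ))) •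
          g (Function.update z j (γ τ)) - (γ τ - z j)⁻¹ • g (Function.update z j (γ τ))) (by
          intro τ hτ
          rw [uIoc_of_le hαβ] at hτ
          have hτ' := Ioc_subset_Icc_self hτ
          rw [← sub_smul, norm_smul]
          exact mul_le_mul (kernel_error hθ hT hδ (hdist z hz τ hτ')) (hM z hz τ hτ')
            (norm_nonneg _) (by positivity))
      rw [abs_of_nonneg (by linarith)] at this
      refine this.trans (le_trans (le_of_eq ?_) hTε)
      ring
    · refine ContinuousOn.intervalIntegrable ?_
      rw [uIcc_of_le hαβ]
      exact (continuous_const.mul (hcd.comp (continuous_const.mul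
        (continuous_const.sub hγ)))).continuousOn.smul cg
    · refine ContinuousOn.intervalIntegrable ?_
      rw [uIcc_of_le hαβ]
      exact ((hγ.sub continuous_const).continuousOn.inv₀ hne).smul cg

/-- The closed box with corners `l`, `u`. -/
def cBox (l u : Fin n → ℂ) : Set (Fin n → ℂ) :=
  univ.pi fun i => Icc (l i).re (u i).re ×ℂ Icc (l i).im (u i).im

theorem isCompact_cBox (l u : Fin n → ℂ) : IsCompact (cBox l u) :=
  isCompact_univ_pi fun _ => IsCompact.reProdIm isCompact_Icc isCompact_Icc

/-- One coordinate of the Runge approximation. -/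
theorem runge_step (l u : Fin n → ℂ) (hlu : ∀ i, (l i).re ≤ (u i).re ∧ (l i).im ≤ (u i).im)
    {r r' : ℝ} (hr' : 0 < r') (hrr : r' < r) {D : Fin n → Set ℂ} (hD : ∀ i, IsOpen (D i))
    (hDr : ∀ i, rectNhd (l i) (u i) r ⊆ D i) (j : Fin n)
    {g : (Fin n → ℂ) → F} (hg : AnalyticOnNhd ℂ g (univ.pi D)) {ε : ℝ} (hε : 0 < ε) :
    ∃ h : (Fin n → ℂ) → F, AnalyticOnNhd ℂ h (univ.pi (Function.update D j univ)) ∧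
      ∀ z ∈ oBox l u r', ‖h z - g z‖ ≤ ε := by
  set s := (r + r') / 2 with hs
  set δ := (r - r') / 2 with hδ
  have hδ0 : 0 < δ := by rw [hδ]; linarith
  set a := (l j).re - s with ha
  set b := (u j).re + s with hb
  set c := (l j).im - s with hc
  set d := (u j).im + s with hd
  have hH := (hlu j)
  have hrect : ∀ i (z : ℂ), z.re ∈ Icc ((l i).re - s) ((u i).re + s) →
      z.im ∈ Icc ((l i).im - s) ((u i).im + s) → z ∈ D i := by
    intro i z hz1 hz2
    refine hDr i ?_
    simp only [rectNhd, mem_setOf_eq]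
    simp only [mem_Icc, hs] at hz1 hz2
    refine ⟨⟨?_, ?_⟩, ?_, ?_⟩ <;> linarith
  have hab : a ≤ b := by rw [ha, hb, hs]; linarith
  have hcd : c ≤ d := by rw [hc, hd, hs]; linarith
  have hrj : ∀ z : ℂ, z.re ∈ Icc a b → z.im ∈ Icc c d → z ∈ D j := hrect j
  set S := oBox l u r' with hS
  -- a compact set containing all points where the integrands are evaluated
  obtain ⟨M, hM⟩ : ∃ M, ∀ z ∈ S, ∀ ζ : ℂ, ζ.re ∈ Icc a b → ζ.im ∈ Icc c d →
      ‖g (Function.update z j ζ)‖ ≤ M := by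
    set Q := cBox (fun i => l i - ⟨s, s⟩) (fun i => u i + ⟨s, s⟩) with hQ
    have hQD : Q ⊆ univ.pi D := by
      intro z hz i _
      have := hz i (mem_univ i)
      rw [mem_reProdIm] at this
      exact hrect i _ (by simpa using this.1) (by simpa using this.2)
    obtain ⟨M, hM⟩ := (isCompact_cBox _ _).exists_bound_of_continuousOn (hg.continuousOn.mono hQD)
    refine ⟨M, fun z hz ζ h1 h2 => hM _ fun i _ => ?_⟩
    rw [mem_reProdIm]
    by_cases hi : i = j
    · subst hi
      rw [Function.update_self]
      exact ⟨by simpa [ha, hb] using h1, by simpa [hc, hd] using h2⟩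
    · simp only [Function.update_of_ne hi]
      have := hz i
      simp only [rectNhd, mem_setOf_eq] at this
      simp only [sub_re, add_re, sub_im, add_im, mem_Icc, hs]
      refine ⟨⟨?_, ?_⟩, ?_, ?_⟩ <;> linarith
  have hSD : S ⊆ univ.pi D := by
    intro z hz i _
    refine hDr i (rectNhd_mono (by linarith) (by linarith) (by linarith) (by linarith) (hz i))
  have hε4 : 0 < ε / 4 := by linarith
  obtain ⟨hB, aB, bB⟩ := runge_edge (j := j) hD hg (γ := fun x : ℝ => (x:ℂ) + c * I)
    (by fun_prop) hab (fun τ hτ => hrj _ (by simpa using hτ) (by simpa using hcd)) hSD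
    (fun z hz τ hτ => hM z hz _ (by simpa using hτ) (by simpa using hcd)) (θ := I) (by simp) hδ0 (by
      intro z hz τ hτ
      have := (hz j).2.1
      simp only [mul_re, I_re, I_im, sub_im, add_im, mul_im, ofReal_re, ofReal_im]
      rw [hc, hδ, hs]; linarith) hε4
  obtain ⟨hT, aT, bT⟩ := runge_edge (j := j) hD hg (γ := fun x : ℝ => (x:ℂ) + d * I)
    (by fun_prop) hab (fun τ hτ => hrj _ (by simpa using hτ) (by simpa using hcd)) hSD
    (fun z hz τ hτ => hM z hz _ (by simpa using hτ) (by simpa using hcd)) (θ := -I) (by simp) hδ0 (by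
      intro z hz τ hτ
      have := (hz j).2.2
      simp only [mul_re, I_re, I_im, sub_im, add_im, mul_im, ofReal_re, ofReal_im, neg_re, neg_im]
      rw [hd, hδ, hs]; linarith) hε4
  obtain ⟨hR, aR, bR⟩ := runge_edge (j := j) hD hg (γ := fun y : ℝ => (b:ℂ) + y * I)
    (by fun_prop) hcd (fun τ hτ => hrj _ (by simpa using hab) (by simpa using hτ)) hSD
    (fun z hz τ hτ => hM z hz _ (by simpa using hab) (by simpa using hτ)) (θ := 1) (by simp) hδ0 (by
      intro z hz τ hτ
      have := (hz j).1.2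
      simp only [one_mul, mul_re, I_re, I_im, sub_re, add_re, ofReal_re, ofReal_im]
      rw [hb, hδ, hs]; linarith) hε4
  obtain ⟨hL, aL, bL⟩ := runge_edge (j := j) hD hg (γ := fun y : ℝ => (a:ℂ) + y * I)
    (by fun_prop) hcd (fun τ hτ => hrj _ (by simpa using hab) (by simpa using hτ)) hSD
    (fun z hz τ hτ => hM z hz _ (by simpa using hab) (by simpa using hτ)) (θ := -1) (by simp) hδ0 (by
      intro z hz τ hτ
      have := (hz j).1.1
      simp only [neg_mul, one_mul, neg_re, mul_re, I_re, I_im, sub_re, add_re, ofReal_re, ofReal_im]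
      rw [ha, hδ, hs]; linarith) hε4
  have hπ : (2 * Real.pi * I : ℂ) ≠ 0 := by simp [Real.pi_ne_zero]
  have hnπ : ‖(2 * Real.pi * I : ℂ)⁻¹‖ ≤ 1 := by
    rw [norm_inv]
    refine inv_le_one_of_one_le₀ ?_
    simp only [norm_mul, Complex.norm_I, mul_one, Complex.norm_real, Real.norm_eq_abs,
      abs_of_pos Real.pi_pos, Complex.norm_ofNat]
    linarith [Real.pi_gt_three]
  refine ⟨fun z => (2 * Real.pi * I : ℂ)⁻¹ • (hB z - hT z + I • hR z - I • hL z), ?_, ?_⟩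
  · intro z hz
    exact analyticAt_const.smul ((((aB z hz).sub (aT z hz)).add
      (analyticAt_const.smul (aR z hz))).sub (analyticAt_const.smul (aL z hz)))
  · intro z hz
    have hzj := hz j
    simp only [rectNhd, mem_setOf_eq] at hzj
    have key := cauchy_box hg (hrect j) (z := z) (by
      intro i _
      by_cases hi : i = j
      · subst hi; simp
      · simp only [Function.update_of_ne hi]
        exact hSD hz i (mem_univ i))
      (by rw [hs]; linarith) (by rw [hs]; linarith) (by rw [hs]; linarith)
      (by rw [hs]; linarith)
    have hgz : g z = (2 * Real.pi * I : ℂ)⁻¹ • ((2 * Real.pi * I : ℂ) • g z) := by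
      rw [smul_smul, inv_mul_cancel₀ hπ, one_smul]
    have b1 := bB z hz
    have b2 := bT z hz
    have b3 := bR z hz
    have b4 := bL z hz
    rw [hgz, key, ← smul_sub, norm_smul]
    refine (mul_le_of_le_one_left (norm_nonneg _) hnπ).trans ?_
    set iB := ∫ x in a..b, ((x:ℂ) + c * I - z j)⁻¹ • g (Function.update z j (x + c * I))
    set iT := ∫ x in a..b, ((x:ℂ) + d * I - z j)⁻¹ • g (Function.update z j (x + d * I))
    set iR := ∫ y in c..d, ((b:ℂ) + y * I - z j)⁻¹ • g (Function.update z j (b + y * I))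
    set iL := ∫ y in c..d, ((a:ℂ) + y * I - z j)⁻¹ • g (Function.update z j (a + y * I))
    have e : hB z - hT z + I • hR z - I • hL z - (iB - iT + I • iR - I • iL) =
      (hB z - iB) - (hT z - iT) + I • (hR z - iR) - I • (hL z - iL) := by
      simp only [smul_sub]; abel
    rw [e]
    have := norm_sub_le_of_le (norm_add_le_of_le (norm_sub_le_of_le b1 b2)
      (show ‖I • (hR z - iR)‖ ≤ ε / 4 by rwa [norm_smul, Complex.norm_I, one_mul]))
      (show ‖I • (hL z - iL)‖ ≤ ε / 4 by rwa [norm_smul, Complex.norm_I, one_mul])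
    linarith

/-- Runge approximation on boxes by entire functions. -/
theorem runge (l u : Fin n → ℂ) (hlu : ∀ i, (l i).re ≤ (u i).re ∧ (l i).im ≤ (u i).im)
    {r r' : ℝ} (hr' : 0 < r') (hrr : r' < r)
    {g : (Fin n → ℂ) → F} (hg : AnalyticOnNhd ℂ g (oBox l u r)) {ε : ℝ} (hε : 0 < ε) :
    ∃ h : (Fin n → ℂ) → F, AnalyticOnNhd ℂ h univ ∧ ∀ z ∈ oBox l u r', ‖h z - g z‖ ≤ ε := by
  have main : ∀ S : Finset (Fin n), ∀ ε > 0, ∃ h : (Fin n → ℂ) → F,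
      AnalyticOnNhd ℂ h (univ.pi fun i => if i ∈ S then univ else rectNhd (l i) (u i) r) ∧
      ∀ z ∈ oBox l u r', ‖h z - g z‖ ≤ ε := by
    intro S
    induction S using Finset.induction_on with
    | empty =>
      intro ε hε
      refine ⟨g, ?_, fun z _ => by simpa using hε.le⟩
      simpa [← oBox_eq] using hg
    | insert j S hj ih =>
      intro ε hε
      obtain ⟨h₀, a₀, b₀⟩ := ih (ε / 2) (by linarith)
      obtain ⟨h, a1, b1⟩ := runge_step l u hlu hr' hrr (fun i => by
        by_cases hi : i ∈ S
        · simp [hi]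
        · simp only [hi, if_false]; exact isOpen_rectNhd _ _ _) (fun i => by
        by_cases hi : i ∈ S
        · simp [hi]
        · simp [hi]) j a₀ (half_pos hε)
      refine ⟨h, ?_, fun z hz => ?_⟩
      · convert a1 using 2
        funext i
        by_cases hi : i = j
        · subst hi; simp
        · simp [hi]
      · have := norm_add_le_of_le (b1 z hz) (b₀ z hz)
        simpa using this
  obtain ⟨h, a, b⟩ := main Finset.univ ε hε
  exact ⟨h, by simpa using a, b⟩

end

end

/-! ### Cartan's lemma -/

section

open Set Filter Topology Metric Complex MeasureTheory

section
variable {n : ℕ} {𝔅 : Type} [NormedRing 𝔅] [NormedAlgebra ℂ 𝔅] [CompleteSpace 𝔅]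

/-- Partial products `(1 + e 0) (1 + e 1) ⋯ (1 + e (k-1))`. -/
def partProd {V : Type} (e : ℕ → V → 𝔅) : ℕ → V → 𝔅
  | 0 => fun _ => 1
  | k + 1 => fun z => partProd e k z * (1 + e k z)

/-- Convergence of infinite products of analytic functions with values in a Banach algebra. -/
theorem cartan_prod {U : Set (Fin n → ℂ)} (hU : IsOpen U) {e : ℕ → (Fin n → ℂ) → 𝔅}
    (he : ∀ k, AnalyticOnNhd ℂ (e k) U) (hb : ∀ k, ∀ z ∈ U, ‖e k z‖ ≤ 1 / 8 / 2 ^ k) :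
    ∃ A : (Fin n → ℂ) → 𝔅, AnalyticOnNhd ℂ A U ∧ (∀ z ∈ U, ‖A z - 1‖ ≤ 1 / 2) ∧
      ∀ z ∈ U, Tendsto (fun k => partProd e k z) atTop (𝓝 (A z)) := by
  have hstep : ∀ k, ∀ z ∈ U, ‖partProd e k z - 1‖ ≤ 1 / 2 - 1 / 2 / 2 ^ k := by
    intro k
    induction k with
    | zero => intro z _; simp [partProd]
    | succ k ih =>
      intro z hz
      have h1 := ih z hz
      have h2 := hb k z hz
      have e1 : partProd e (k + 1) z - 1 =
        (partProd e k z - 1) + ((partProd e k z - 1) * e k z + e k z) := by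
        simp only [partProd]; noncomm_ring
      rw [e1]
      have h3 : ‖(partProd e k z - 1) * e k z + e k z‖ ≤ 1 * ‖e k z‖ + ‖e k z‖ :=
        norm_add_le_of_le ((norm_mul_le _ _).trans (mul_le_mul_of_nonneg_right (h1.trans (by
          have : (0:ℝ) ≤ 1 / 2 / 2 ^ k := by positivity
          linarith)) (norm_nonneg _))) le_rfl
      have h4 := norm_add_le_of_le h1 h3
      have h5 : (1:ℝ) / 2 / 2 ^ (k + 1) = 1 / 4 / 2 ^ k := by rw [pow_succ]; field_simp; norm_num
      have h6 : (1:ℝ) / 8 / 2 ^ k = 1 / 2 * (1 / 4 / 2 ^ k) := by field_simp; norm_num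
      have h7 : (1:ℝ) / 2 / 2 ^ k = 2 * (1 / 4 / 2 ^ k) := by field_simp; norm_num
      rw [h5]; rw [h6] at h2; rw [h7] at h4
      linarith
  have hstep' : ∀ k, ∀ z ∈ U, ‖partProd e k z - 1‖ ≤ 1 / 2 := fun k z hz =>
    (hstep k z hz).trans (by
      have : (0:ℝ) ≤ 1 / 2 / 2 ^ k := by positivity
      linarith)
  have hdist : ∀ z ∈ U, ∀ k, dist (partProd e k z) (partProd e (k + 1) z) ≤ 1 / 2 / 2 / 2 ^ k := by
    intro z hz k
    have e1 : partProd e (k + 1) z - partProd e k z =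
        ((partProd e k z - 1) * e k z + e k z) := by
      simp only [partProd]; noncomm_ring
    rw [dist_comm, dist_eq_norm, e1]
    have h3 : ‖(partProd e k z - 1) * e k z + e k z‖ ≤ 1 * ‖e k z‖ + ‖e k z‖ :=
        norm_add_le_of_le ((norm_mul_le _ _).trans (mul_le_mul_of_nonneg_right ((hstep' k z hz).trans
          (by norm_num)) (norm_nonneg _))) le_rfl
    have h2 := hb k z hz
    have h6 : (1:ℝ) / 2 / 2 / 2 ^ k = 2 * (1 / 8 / 2 ^ k) := by field_simp; norm_num
    rw [h6]; linarith
  have hlim : ∀ z, ∃ a, z ∈ U → Tendsto (fun k => partProd e k z) atTop (𝓝 a) := by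
    intro z
    by_cases hz : z ∈ U
    · obtain ⟨a, ha⟩ := cauchySeq_tendsto_of_complete (cauchySeq_of_le_geometric_two (hdist z hz))
      exact ⟨a, fun _ => ha⟩
    · exact ⟨0, fun h => absurd h hz⟩
  choose A hA using hlim
  have hAn : ∀ k, AnalyticOnNhd ℂ (partProd e k) U := by
    intro k
    induction k with
    | zero => exact fun z _ => analyticAt_const
    | succ k ih => exact fun z hz => (ih z hz).mul (analyticAt_const.add (he k z hz))
  refine ⟨A, ?_, ?_, hA⟩
  · refine analyticOnNhd_of_tendstoLocallyUniformlyOn hU hAn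
      (TendstoUniformlyOn.tendstoLocallyUniformlyOn ?_)
    rw [Metric.tendstoUniformlyOn_iff]
    intro ε hε
    have h1 : Tendsto (fun k : ℕ => (1:ℝ) / 2 / 2 ^ k) atTop (𝓝 0) :=
      tendsto_const_nhds.div_atTop (tendsto_pow_atTop_atTop_of_one_lt (by norm_num))
    filter_upwards [h1.eventually_lt_const hε] with k hk z hz
    have := dist_le_of_le_geometric_two_of_tendsto (hdist z hz) (hA z hz) k
    rw [dist_comm]
    exact this.trans_lt hk
  · intro z hz
    exact le_of_tendsto (((hA z hz).sub_const 1).norm) (Eventually.of_forall fun k => hstep' k z hz)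

theorem isUnit_one_add {x : 𝔅} (hx : ‖x‖ < 1) : IsUnit (1 + x) := by
  have := isUnit_one_sub_of_norm_lt_one (x := -x) (by simpa using hx)
  simpa using this

theorem analyticAt_ringInverse {V : Type} [NormedAddCommGroup V] [NormedSpace ℂ V] {f : V → 𝔅} {z : V}
    (hf : AnalyticAt ℂ f z) (hu : IsUnit (f z)) : AnalyticAt ℂ (fun z => Ring.inverse (f z)) z := by
  obtain ⟨v, hv⟩ := hu
  exact AnalyticAt.fun_comp (g := Ring.inverse) (hv ▸ analyticAt_inverse v) hf

theorem norm_inverse_mul_le {x y : 𝔅} (hx : ‖x‖ ≤ 1 / 2) : ‖Ring.inverse (1 + x) * y‖ ≤ 2 * ‖y‖ := by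
  have hu := isUnit_one_add (x := x) (by linarith)
  set w := Ring.inverse (1 + x) * y with hw
  have h1 : (1 + x) * w = y := by
    rw [hw, ← mul_assoc, Ring.mul_inverse_cancel _ hu, one_mul]
  have h2 : w = y - x * w := by rw [← h1]; noncomm_ring
  have h3 : ‖w‖ ≤ ‖y‖ + ‖x‖ * ‖w‖ := by
    conv_lhs => rw [h2]
    exact norm_sub_le_of_le le_rfl (norm_mul_le _ _)
  nlinarith [norm_nonneg w]

/-- One Newton step of the multiplicative splitting. -/
theorem cartan_step (l u : Fin n → ℂ) (hlu : ∀ i, (l i).re ≤ (u i).re ∧ (l i).im ≤ (u i).im)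
    (j : Fin n) (t : ℝ) {r r' : ℝ} (hr' : 0 < r') (hrr : r' < r) (hr1 : r ≤ 1)
    {e : (Fin n → ℂ) → 𝔅} (he : AnalyticOnNhd ℂ e (oBox (setRe j t l) (setRe j t u) r)) {M : ℝ}
    (hM : ∀ z ∈ oBox (setRe j t l) (setRe j t u) r, ‖e z‖ ≤ M) {κ : ℝ}
    (hκ : ((u j).im - (l j).im + 6) / (r - r') * M ≤ κ) (hκ2 : κ ≤ 1 / 2) (hM0 : 0 ≤ M)
    (htu : t ≤ (u j).re) (hlt : (l j).re ≤ t) :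
    ∃ e' e'' e1 : (Fin n → ℂ) → 𝔅, AnalyticOnNhd ℂ e' (oBox l (setRe j t u) r') ∧
      AnalyticOnNhd ℂ e'' (oBox (setRe j t l) u r') ∧
      (∀ z ∈ oBox l (setRe j t u) r', ‖e' z‖ ≤ κ) ∧
      (∀ z ∈ oBox (setRe j t l) u r', ‖e'' z‖ ≤ κ) ∧
      AnalyticOnNhd ℂ e1 (oBox (setRe j t l) (setRe j t u) r') ∧
      (∀ z ∈ oBox (setRe j t l) (setRe j t u) r', ‖e1 z‖ ≤ 2 * (M * κ)) ∧
      ∀ z ∈ oBox (setRe j t l) (setRe j t u) r', (1 + e z) * (1 + e'' z) = (1 + e' z) * (1 + e1 z) := by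
  obtain ⟨e', e'', a', a'', hsp, b', b''⟩ := cousin_split l u hlu j t hr' hrr hr1 he hM
  have s' : oBox (setRe j t l) (setRe j t u) r' ⊆ oBox l (setRe j t u) r' := by
    intro z hz i
    refine rectNhd_mono ?_ le_rfl ?_ le_rfl (hz i)
    all_goals
      by_cases hi : i = j
      · subst hi; simp [hlt]
      · simp [setRe_ne hi]
  have s'' : oBox (setRe j t l) (setRe j t u) r' ⊆ oBox (setRe j t l) u r' := by
    intro z hz i
    refine rectNhd_mono le_rfl ?_ le_rfl ?_ (hz i)
    all_goals
      by_cases hi : i = j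
      · subst hi; simp [htu]
      · simp [setRe_ne hi]
  have b1 : ∀ z ∈ oBox l (setRe j t u) r', ‖e' z‖ ≤ κ := fun z hz => (b' z hz).trans hκ
  have b2 : ∀ z ∈ oBox (setRe j t l) u r', ‖e'' z‖ ≤ κ := fun z hz => (b'' z hz).trans hκ
  have hu : ∀ z ∈ oBox (setRe j t l) (setRe j t u) r', IsUnit (1 + e' z) := fun z hz =>
    isUnit_one_add (lt_of_le_of_lt (b1 z (s' hz)) (by linarith))
  refine ⟨e', e'', fun z => Ring.inverse (1 + e' z) * (e z * e'' z), a', a'', b1, b2, ?_, ?_, ?_⟩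
  · intro z hz
    exact (analyticAt_ringInverse (f := fun z => 1 + e' z) (analyticAt_const.add (a' z (s' hz)))
      (hu z hz)).mul ((he z (oBox_mono_r hrr.le hz)).mul (a'' z (s'' hz)))
  · intro z hz
    refine (norm_inverse_mul_le ((b1 z (s' hz)).trans hκ2)).trans ?_
    refine mul_le_mul_of_nonneg_left ((norm_mul_le _ _).trans ?_) (by norm_num)
    exact mul_le_mul (hM z (oBox_mono_r hrr.le hz)) (b2 z (s'' hz)) (norm_nonneg _) hM0
  · intro z hz
    rw [mul_add (1 + e' z) 1, ← mul_assoc, Ring.mul_inverse_cancel _ (hu z hz), hsp z hz]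
    noncomm_ring

/-- Cartan's lemma: multiplicative splitting of matrices close to the identity. -/
theorem cartan (l u : Fin n → ℂ) (hlu : ∀ i, (l i).re ≤ (u i).re ∧ (l i).im ≤ (u i).im)
    (j : Fin n) (t : ℝ) (htu : t ≤ (u j).re) (hlt : (l j).re ≤ t) {r : ℝ} (hr : 0 < r) (hr1 : r ≤ 1) :
    ∃ η > 0, ∀ e : (Fin n → ℂ) → 𝔅, AnalyticOnNhd ℂ e (oBox (setRe j t l) (setRe j t u) r) →
      (∀ z ∈ oBox (setRe j t l) (setRe j t u) r, ‖e z‖ ≤ η) →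
      ∃ A B : (Fin n → ℂ) → 𝔅, AnalyticOnNhd ℂ A (oBox l (setRe j t u) (r / 2)) ∧
        AnalyticOnNhd ℂ B (oBox (setRe j t l) u (r / 2)) ∧
        (∀ z ∈ oBox l (setRe j t u) (r / 2), IsUnit (A z)) ∧
        (∀ z ∈ oBox (setRe j t l) u (r / 2), IsUnit (B z)) ∧
        ∀ z ∈ oBox (setRe j t l) (setRe j t u) (r / 2), (1 + e z) * B z = A z := by
  set C := (u j).im - (l j).im + 6 with hC
  have hC0 : 0 < C := by have := (hlu j).2; rw [hC]; linarith
  set η := r / (32 * C) with hη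
  have hη0 : 0 < η := by positivity
  have hηC : η * C * 32 = r := by rw [hη]; field_simp
  refine ⟨η, hη0, fun e he hb => ?_⟩
  -- the boxes shrink from radius `r` to `r / 2` while the errors decay like `η / 4 ^ k`
  set rk : ℕ → ℝ := fun k => r / 2 + r / 2 / 2 ^ k with hrk
  have hrkpos : ∀ k, 0 < rk k := fun k => by rw [hrk]; positivity
  have hrkgt : ∀ k, r / 2 ≤ rk k := fun k => by
    have : 0 ≤ r / 2 / 2 ^ k := by positivity
    simp only [hrk]; linarith
  have hrkdiff : ∀ k, rk k - rk (k + 1) = r / 4 / 2 ^ k := fun k => by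
    simp only [hrk, pow_succ]; field_simp; ring
  have hrklt : ∀ k, rk (k + 1) < rk k := fun k => by
    have := hrkdiff k
    have : 0 < r / 4 / 2 ^ k := by positivity
    linarith
  have hrk1 : ∀ k, rk k ≤ 1 := fun k => by
    have : r / 2 / 2 ^ k ≤ r / 2 := div_le_self (by positivity) (one_le_pow₀ (by norm_num))
    simp only [hrk]; linarith
  set P : ℕ → ((Fin n → ℂ) → 𝔅) → Prop := fun k e =>
    AnalyticOnNhd ℂ e (oBox (setRe j t l) (setRe j t u) (rk k)) ∧
    ∀ z ∈ oBox (setRe j t l) (setRe j t u) (rk k), ‖e z‖ ≤ η / 4 ^ k with hP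
  have step : ∀ k e, ∃ e' e'' e1 : (Fin n → ℂ) → 𝔅, P k e →
      AnalyticOnNhd ℂ e' (oBox l (setRe j t u) (rk (k + 1))) ∧
      AnalyticOnNhd ℂ e'' (oBox (setRe j t l) u (rk (k + 1))) ∧
      (∀ z ∈ oBox l (setRe j t u) (rk (k + 1)), ‖e' z‖ ≤ 1 / 8 / 2 ^ k) ∧
      (∀ z ∈ oBox (setRe j t l) u (rk (k + 1)), ‖e'' z‖ ≤ 1 / 8 / 2 ^ k) ∧
      P (k + 1) e1 ∧
      ∀ z ∈ oBox (setRe j t l) (setRe j t u) (rk (k + 1)),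
        (1 + e z) * (1 + e'' z) = (1 + e' z) * (1 + e1 z) := by
    intro k e
    by_cases hPe : P k e
    · obtain ⟨e', e'', e1, h1, h2, h3, h4, h5, h6, h7⟩ := cartan_step l u hlu j t (hrkpos (k + 1))
        (hrklt k) (hrk1 k) hPe.1 hPe.2 (κ := 1 / 8 / 2 ^ k) (by
          rw [hrkdiff, ← hC, hη]
          have h4 : (4:ℝ) ^ k = 2 ^ k * 2 ^ k := by rw [← mul_pow]; norm_num
          rw [h4]; apply le_of_eq; field_simp; ring) (by
          have : (1:ℝ) / 8 / 2 ^ k ≤ 1 / 8 := div_le_self (by positivity) (one_le_pow₀ (by norm_num))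
          linarith) (by positivity) htu hlt
      refine ⟨e', e'', e1, fun _ => ⟨h1, h2, h3, h4, ⟨h5, fun z hz => (h6 z hz).trans ?_⟩, h7⟩⟩
      have hk : (1:ℝ) / 8 / 2 ^ k ≤ 1 / 8 := div_le_self (by positivity) (one_le_pow₀ (by norm_num))
      have hx : 0 ≤ η / 4 ^ k := by positivity
      have : η / 4 ^ (k + 1) = η / 4 ^ k * (1 / 4) := by rw [pow_succ]; field_simp
      rw [this]; nlinarith
    · exact ⟨0, 0, 0, fun h => absurd h hPe⟩
  choose f' f'' f1 hf using step
  let E : ℕ → (Fin n → ℂ) → 𝔅 := fun k => Nat.rec e (fun k ek => f1 k ek) k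
  have hE : ∀ k, P k (E k) := by
    intro k
    induction k with
    | zero =>
      have : rk 0 = r := by simp [hrk]
      refine ⟨?_, ?_⟩
      · rw [this]; exact he
      · rw [this, pow_zero, div_one]; exact hb
    | succ k ih => exact (hf k (E k) ih).2.2.2.2.1
  have hU' : ∀ k, oBox l (setRe j t u) (r / 2) ⊆ oBox l (setRe j t u) (rk k) := fun k =>
    oBox_mono_r (hrkgt k)
  have hU'' : ∀ k, oBox (setRe j t l) u (r / 2) ⊆ oBox (setRe j t l) u (rk k) := fun k =>
    oBox_mono_r (hrkgt k)
  have hUF : ∀ k, oBox (setRe j t l) (setRe j t u) (r / 2) ⊆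
    oBox (setRe j t l) (setRe j t u) (rk k) := fun k => oBox_mono_r (hrkgt k)
  obtain ⟨A, aA, bA, cA⟩ := cartan_prod (e := fun k => f' k (E k))
    (isOpen_oBox l (setRe j t u) (r / 2))
    (fun k => (hf k (E k) (hE k)).1.mono (hU' _))
    (fun k z hz => (hf k (E k) (hE k)).2.2.1 z (hU' _ hz))
  obtain ⟨B, aB, bB, cB⟩ := cartan_prod (e := fun k => f'' k (E k))
    (isOpen_oBox (setRe j t l) u (r / 2))
    (fun k => (hf k (E k) (hE k)).2.1.mono (hU'' _))
    (fun k z hz => (hf k (E k) (hE k)).2.2.2.1 z (hU'' _ hz))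
  have hunit : ∀ x : 𝔅, ‖x - 1‖ ≤ 1 / 2 → IsUnit x := fun x hx => by
    have := isUnit_one_add (x := x - 1) (by linarith)
    simpa using this
  refine ⟨A, B, aA, aB, fun z hz => hunit _ (bA z hz), fun z hz => hunit _ (bB z hz), ?_⟩
  intro z hz
  have hz' : z ∈ oBox l (setRe j t u) (r / 2) := by
    intro i
    refine rectNhd_mono ?_ le_rfl ?_ le_rfl (hz i)
    all_goals
      by_cases hi : i = j
      · subst hi; simp [hlt]
      · simp [setRe_ne hi]
  have hz'' : z ∈ oBox (setRe j t l) u (r / 2) := by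
    intro i
    refine rectNhd_mono le_rfl ?_ le_rfl ?_ (hz i)
    all_goals
      by_cases hi : i = j
      · subst hi; simp [htu]
      · simp [setRe_ne hi]
  have key : ∀ k, (1 + e z) * partProd (fun k => f'' k (E k)) k z =
      partProd (fun k => f' k (E k)) k z * (1 + E k z) := by
    intro k
    induction k with
    | zero => simp [partProd, E]
    | succ k ih =>
      simp only [partProd]
      rw [← mul_assoc, ih, mul_assoc, mul_assoc, (hf k (E k) (hE k)).2.2.2.2.2 z (hUF _ hz)]
  have hE0 : Tendsto (fun k => E k z) atTop (𝓝 0) := by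
    refine squeeze_zero_norm (fun k => (hE k).2 z (hUF _ hz)) ?_
    exact tendsto_const_nhds.div_atTop (tendsto_pow_atTop_atTop_of_one_lt (by norm_num))
  have h1 := (cB z hz'').const_mul (1 + e z)
  have h2 := (cA z hz').mul ((tendsto_const_nhds (x := (1:𝔅))).add hE0)
  rw [add_zero, mul_one] at h2
  exact tendsto_nhds_unique (h1.congr key) h2

end

end

/-! ### Formulation of Theorems A and B -/

section

open Set Filter Topology Metric Complex

section
variable {n : ℕ}

/-- The columns of `σ` generate, at the point `z`, the germs of relations of `Φ`. -/
def Gen {V X Y Z : Type} [NormedAddCommGroup V] [NormedSpace ℂ V] [NormedAddCommGroup X]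
    [NormedSpace ℂ X] [NormedAddCommGroup Y] [NormedSpace ℂ Y] [NormedAddCommGroup Z] [NormedSpace ℂ Z]
    (Φ : V → X →L[ℂ] Y) (σ : V → Z →L[ℂ] X) (z : V) : Prop :=
  ∀ g : V → X, AnalyticAt ℂ g z → (∀ᶠ w in 𝓝 z, Φ w (g w) = 0) →
    ∃ c : V → Z, AnalyticAt ℂ c z ∧ ∀ᶠ w in 𝓝 z, g w = σ w (c w)

/-- `σ`, analytic near `K`, generates the relations of `Φ` at all points near `K`. -/
structure GensOn {V X Y Z : Type} [NormedAddCommGroup V] [NormedSpace ℂ V] [NormedAddCommGroup X]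
    [NormedSpace ℂ X] [NormedAddCommGroup Y] [NormedSpace ℂ Y] [NormedAddCommGroup Z] [NormedSpace ℂ Z]
    (Φ : V → X →L[ℂ] Y) (σ : V → Z →L[ℂ] X) (K : Set V) : Prop where
  an : AnalyticOnNhd ℂ σ K
  rel : ∀ z ∈ K, ∀ᶠ w in 𝓝 z, ∀ x, Φ w (σ w x) = 0
  gen : ∀ z ∈ K, ∀ᶠ w in 𝓝 z, Gen Φ σ w

/-- Theorem A for `K`: relations among finitely many functions are finitely generated near `K`. -/
def ThmA {V : Type} [NormedAddCommGroup V] [NormedSpace ℂ V] (K : Set V) : Prop :=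
  ∀ (p q : ℕ) (Φ : V → (Fin p → ℂ) →L[ℂ] (Fin q → ℂ)), AnalyticOnNhd ℂ Φ K →
    ∃ (m : ℕ) (σ : V → (Fin m → ℂ) →L[ℂ] (Fin p → ℂ)), GensOn Φ σ K

/-- Theorem B for `K`: locally solvable linear systems are solvable near `K`. -/
def ThmB {V : Type} [NormedAddCommGroup V] [NormedSpace ℂ V] (K : Set V) : Prop :=
  ∀ (m p : ℕ) (σ : V → (Fin m → ℂ) →L[ℂ] (Fin p → ℂ)) (g : V → Fin p → ℂ), AnalyticOnNhd ℂ σ K →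
    AnalyticOnNhd ℂ g K →
    (∀ z ∈ K, ∃ c : V → Fin m → ℂ, AnalyticAt ℂ c z ∧ ∀ᶠ w in 𝓝 z, g w = σ w (c w)) →
    ∃ c : V → Fin m → ℂ, AnalyticOnNhd ℂ c K ∧ ∀ z ∈ K, ∀ᶠ w in 𝓝 z, g w = σ w (c w)

theorem analyticAt_clm_comp {V X Y Z : Type} [NormedAddCommGroup V] [NormedSpace ℂ V]
    [NormedAddCommGroup X]
    [NormedSpace ℂ X] [NormedAddCommGroup Y] [NormedSpace ℂ Y] [NormedAddCommGroup Z] [NormedSpace ℂ Z]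
    {f : V → Y →L[ℂ] Z} {g : V → X →L[ℂ] Y} {z : V} (hf : AnalyticAt ℂ f z) (hg : AnalyticAt ℂ g z) :
    AnalyticAt ℂ (fun w => (f w).comp (g w)) z :=
  AnalyticAt.comp₂ (h := fun p : (Y →L[ℂ] Z) × (X →L[ℂ] Y) => p.1.comp p.2)
    (ContinuousLinearMap.analyticAt_bilinear (ContinuousLinearMap.compL ℂ X Y Z) _) hf hg

theorem gensOn_fin {V X Y Z : Type} [NormedAddCommGroup V] [NormedSpace ℂ V] [NormedAddCommGroup X]
    [NormedSpace ℂ X] [NormedAddCommGroup Y] [NormedSpace ℂ Y] [NormedAddCommGroup Z] [NormedSpace ℂ Z]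
    [FiniteDimensional ℂ Z]
    {Φ : V → X →L[ℂ] Y} {σ : V → Z →L[ℂ] X} {K : Set V} (h : GensOn Φ σ K) :
    ∃ (m : ℕ) (σ : V → (Fin m → ℂ) →L[ℂ] X), GensOn Φ σ K := by
  let L : (Fin (Module.finrank ℂ Z) → ℂ) ≃L[ℂ] Z :=
    ContinuousLinearEquiv.ofFinrankEq (by simp)
  refine ⟨_, fun w => (σ w).comp (L : (Fin (Module.finrank ℂ Z) → ℂ) →L[ℂ] Z),
    fun z hz => analyticAt_clm_comp (h.an z hz) analyticAt_const, ?_, ?_⟩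
  · intro z hz
    filter_upwards [h.rel z hz] with w hw x
    exact hw _
  · intro z hz
    filter_upwards [h.gen z hz] with w hw g hg hr
    obtain ⟨c, hc, hcg⟩ := hw g hg hr
    refine ⟨fun w => L.symm (c w), AnalyticAt.fun_comp (g := L.symm) (L.symm.analyticAt _) hc, ?_⟩
    filter_upwards [hcg] with v hv
    simpa using hv

theorem clm_pi_apply {p : ℕ} {ι : Type} [Fintype ι] [DecidableEq ι] (T : (ι → ℂ) →L[ℂ] (Fin p → ℂ))
    (x : ι → ℂ) : T x = ∑ i, x i • T (Pi.single i 1) := by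
  conv_lhs => rw [pi_eq_sum_univ' x]
  rw [map_sum]
  simp_rw [map_smul]

theorem clm_of_columns {V X ι : Type} [Fintype ι] [DecidableEq ι] [NormedAddCommGroup V]
    [NormedSpace ℂ V] [NormedAddCommGroup X] [NormedSpace ℂ X] (c : ι → V → X) :
    ∃ C : V → (ι → ℂ) →L[ℂ] X, (∀ z, (∀ i, AnalyticAt ℂ (c i) z) → AnalyticAt ℂ C z) ∧
      ∀ w x, C w x = ∑ i, x i • c i w := by
  refine ⟨fun w => ∑ i, ContinuousLinearMap.smulRightL ℂ (ι → ℂ) X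
    (ContinuousLinearMap.proj (R := ℂ) (φ := fun _ : ι => ℂ) i) (c i w), ?_, ?_⟩
  · intro z h
    refine Finset.analyticAt_fun_sum _ fun i _ => ?_
    exact AnalyticAt.fun_comp (g := ContinuousLinearMap.smulRightL ℂ (ι → ℂ) X
      (ContinuousLinearMap.proj (R := ℂ) (φ := fun _ : ι => ℂ) i))
      (ContinuousLinearMap.analyticAt _ _) (h i)
  · intro w x
    simp

/-- Theorem A at a point is Oka's theorem. -/
theorem ThmA_point (y : Fin n → ℂ) : ThmA ({y} : Set (Fin n → ℂ)) := by
  intro p q Φ hΦ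
  have hΦy := hΦ y rfl
  obtain ⟨β, _, σ, aσ, rσ, gσ⟩ := oka_pi n y (Fin q) (Fin p) (fun k j z => Φ z (Pi.single j 1) k) (by
    intro k j
    have := analyticAt_clm_app hΦy (analyticAt_const (v := (Pi.single j 1 : Fin p → ℂ)))
    exact (analyticAt_pi_iff.1 this) k)
  classical
  have hΦe : ∀ w (x : Fin p → ℂ) k, Φ w x k = ∑ j, Φ w (Pi.single j 1) k * x j := by
    intro w x k
    rw [clm_pi_apply]
    simp [mul_comm]
  obtain ⟨C, aC, eC⟩ := clm_of_columns (fun (b : β) (w : Fin n → ℂ) (j : Fin p) => σ j b w)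
  have eC' : ∀ w x j, C w x j = ∑ b, σ j b w * x b := by
    intro w x j
    rw [eC]; simp [mul_comm]
  refine gensOn_fin (σ := C) ⟨?_, ?_, ?_⟩
  · rintro z rfl
    exact aC _ fun b => analyticAt_pi_iff.2 fun j => aσ j b
  · rintro z rfl
    filter_upwards [rσ] with w hw x
    funext k
    rw [hΦe]
    simp_rw [eC', Finset.mul_sum]
    rw [Finset.sum_comm, Pi.zero_apply]
    refine Finset.sum_eq_zero fun b _ => ?_
    simp_rw [← mul_assoc]
    rw [← Finset.sum_mul, hw k b, zero_mul]
  · rintro z rfl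
    filter_upwards [gσ] with w hw g hg hr
    obtain ⟨c, hc, hcg⟩ := hw (fun j v => g v j) (analyticAt_pi_iff.1 hg) (by
      filter_upwards [hr] with v hv k
      rw [← hΦe, hv, Pi.zero_apply])
    refine ⟨fun v b => c b v, analyticAt_pi_iff.2 hc, ?_⟩
    filter_upwards [hcg] with v hv
    funext j
    rw [eC', hv j]

/-- At a point, local and global solvability agree. -/
theorem ThmB_point (y : Fin n → ℂ) : ThmB ({y} : Set (Fin n → ℂ)) := by
  intro m p σ g _ _ h
  obtain ⟨c, hc, h1⟩ := h y rfl
  exact ⟨c, by rintro z rfl; exact hc, by rintro z rfl; exact h1⟩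

/-! ### Neighbourhoods of closed boxes -/

theorem cBox_sub_oBox {l u : Fin n → ℂ} {r : ℝ} (hr : 0 < r) : cBox l u ⊆ oBox l u r := by
  intro z hz i
  have := hz i (mem_univ i)
  rw [mem_reProdIm] at this
  simp only [mem_Icc] at this
  simp only [rectNhd, mem_setOf_eq]
  refine ⟨⟨?_, ?_⟩, ?_, ?_⟩ <;> linarith

theorem exists_clamp {a b x r : ℝ} (hab : a ≤ b) (h1 : a - r < x) (h2 : x < b + r) (hr : 0 < r) :
    ∃ y ∈ Icc a b, |x - y| < r := by
  by_cases ha : x < a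
  · exact ⟨a, ⟨le_rfl, hab⟩, by rw [abs_lt]; constructor <;> linarith⟩
  · by_cases hb : b < x
    · exact ⟨b, ⟨hab, le_rfl⟩, by rw [abs_lt]; constructor <;> linarith⟩
    · exact ⟨x, ⟨by linarith, by linarith⟩, by simpa using hr⟩

theorem exists_oBox {l u : Fin n → ℂ} (hlu : ∀ i, (l i).re ≤ (u i).re ∧ (l i).im ≤ (u i).im)
    {P : (Fin n → ℂ) → Prop} (h : ∀ z ∈ cBox l u, ∀ᶠ w in 𝓝 z, P w) :
    ∃ r, 0 < r ∧ r ≤ 1 ∧ ∀ w ∈ oBox l u r, P w := by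
  have h1 : ∀ᶠ w in 𝓝ˢ (cBox l u), P w := eventually_nhdsSet_iff_forall.2 h
  obtain ⟨U, hU, hKU, hUP⟩ := eventually_nhdsSet_iff_exists.1 h1
  obtain ⟨δ, hδ, hsub⟩ := (isCompact_cBox l u).exists_thickening_subset_open hU hKU
  refine ⟨min 1 (δ / 2), by positivity, min_le_left _ _, fun w hw => hUP w (hsub ?_)⟩
  have hr : 0 < min 1 (δ / 2) := by positivity
  have : ∀ i, ∃ y ∈ Icc (l i).re (u i).re ×ℂ Icc (l i).im (u i).im, dist (w i) y < δ := by
    intro i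
    have hwi := hw i
    simp only [rectNhd, mem_setOf_eq] at hwi
    obtain ⟨a, ha, ha'⟩ := exists_clamp (hlu i).1 hwi.1.1 hwi.1.2 hr
    obtain ⟨b, hb, hb'⟩ := exists_clamp (hlu i).2 hwi.2.1 hwi.2.2 hr
    refine ⟨⟨a, b⟩, ⟨ha, hb⟩, ?_⟩
    rw [dist_eq_norm]
    refine (Complex.norm_le_abs_re_add_abs_im _).trans_lt ?_
    simp only [sub_re, sub_im]
    have := min_le_right 1 (δ / 2)
    linarith
  choose y hy hy' using this
  rw [Metric.mem_thickening_iff]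
  exact ⟨y, fun i _ => hy i, (dist_pi_lt_iff hδ).2 hy'⟩

theorem oBox_nhds {l u : Fin n → ℂ} {r : ℝ} (hr : 0 < r) {z : Fin n → ℂ} (hz : z ∈ cBox l u) :
    ∀ᶠ w in 𝓝 z, w ∈ oBox l u r := (isOpen_oBox l u r).mem_nhds (cBox_sub_oBox hr hz)

/-- Gluing along the face where the real part of the `j`-th coordinate is `t`. -/
theorem glue_re {F : Type} (l u : Fin n → ℂ) (j : Fin n) (t : ℝ) {h' h'' : (Fin n → ℂ) → F}
    (h : ∀ z ∈ cBox (setRe j t l) (setRe j t u), h' =ᶠ[𝓝 z] h'') :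
    ∃ f : (Fin n → ℂ) → F, (∀ z ∈ cBox l (setRe j t u), f =ᶠ[𝓝 z] h') ∧
      (∀ z ∈ cBox (setRe j t l) u, f =ᶠ[𝓝 z] h'') := by
  classical
  have hcont : Continuous fun w : Fin n → ℂ => (w j).re := continuous_re.comp (continuous_apply j)
  refine ⟨fun z => if (z j).re ≤ t then h' z else h'' z, fun z hz => ?_, fun z hz => ?_⟩
  · have hzt : (z j).re ≤ t := by simpa using ((hz j (mem_univ j)).1).2
    rcases hzt.lt_or_eq with hlt | heq
    · filter_upwards [hcont.continuousAt.eventually_lt_const hlt] with w hw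
      simp [hw.le]
    · have hzF : z ∈ cBox (setRe j t l) (setRe j t u) := by
        intro i _
        have := hz i (mem_univ i)
        by_cases hi : i = j
        · subst hi
          rw [mem_reProdIm] at this ⊢
          simpa [heq] using this.2
        · simpa [setRe_ne hi] using this
      filter_upwards [h z hzF] with w hw
      simp [hw]
  · have hzt : t ≤ (z j).re := by simpa using ((hz j (mem_univ j)).1).1
    rcases hzt.lt_or_eq with hlt | heq
    · filter_upwards [hcont.continuousAt.eventually_const_lt hlt] with w hw
      simp [not_le.2 hw]
    · have hzF : z ∈ cBox (setRe j t l) (setRe j t u) := by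
        intro i _
        have := hz i (mem_univ i)
        by_cases hi : i = j
        · subst hi
          rw [mem_reProdIm] at this ⊢
          simpa [← heq] using this.2
        · simpa [setRe_ne hi] using this
      filter_upwards [h z hzF] with w hw
      simp [hw]

theorem cBox_union (l u : Fin n → ℂ) (j : Fin n) (t : ℝ) {z : Fin n → ℂ} (hz : z ∈ cBox l u) :
    z ∈ cBox l (setRe j t u) ∨ z ∈ cBox (setRe j t l) u := by
  rcases le_total (z j).re t with h | h
  · left
    intro i _
    have := hz i (mem_univ i)
    by_cases hi : i = j
    · subst hi
      rw [mem_reProdIm] at this ⊢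
      simpa using ⟨⟨this.1.1, h⟩, this.2⟩
    · simpa [setRe_ne hi] using this
  · right
    intro i _
    have := hz i (mem_univ i)
    by_cases hi : i = j
    · subst hi
      rw [mem_reProdIm] at this ⊢
      simpa using ⟨⟨h, this.1.2⟩, this.2⟩
    · simpa [setRe_ne hi] using this

end

end

/-! ### Gluing along a face -/

section

open Set Filter Topology Metric Complex

section
variable {n : ℕ}

/-- Upper unipotent block operators. -/
def NU {X Y : Type} [NormedAddCommGroup X] [NormedSpace ℂ X] [NormedAddCommGroup Y] [NormedSpace ℂ Y]
    (x : Y →L[ℂ] X) : (X × Y) →L[ℂ] (X × Y) :=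
  (ContinuousLinearMap.inl ℂ X Y).comp (x.comp (ContinuousLinearMap.snd ℂ X Y))

/-- Lower unipotent block operators. -/
def NL {X Y : Type} [NormedAddCommGroup X] [NormedSpace ℂ X] [NormedAddCommGroup Y] [NormedSpace ℂ Y]
    (y : X →L[ℂ] Y) : (X × Y) →L[ℂ] (X × Y) :=
  (ContinuousLinearMap.inr ℂ X Y).comp (y.comp (ContinuousLinearMap.fst ℂ X Y))

section
variable {X Y : Type} [NormedAddCommGroup X] [NormedSpace ℂ X] [NormedAddCommGroup Y] [NormedSpace ℂ Y]

@[simp] theorem NU_apply (x : Y →L[ℂ] X) (v : X × Y) : NU x v = (x v.2, 0) := rfl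
@[simp] theorem NL_apply (y : X →L[ℂ] Y) (v : X × Y) : NL y v = (0, y v.1) := rfl

theorem continuous_NU : Continuous (NU : (Y →L[ℂ] X) → _) := by
  unfold NU; fun_prop

theorem continuous_NL : Continuous (NL : (X →L[ℂ] Y) → _) := by
  unfold NL; fun_prop

theorem analyticAt_NU {V : Type} [NormedAddCommGroup V] [NormedSpace ℂ V] {f : V → Y →L[ℂ] X} {z : V}
    (hf : AnalyticAt ℂ f z) : AnalyticAt ℂ (fun w => NU (f w)) z :=
  analyticAt_clm_comp analyticAt_const (analyticAt_clm_comp hf analyticAt_const)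

theorem analyticAt_NL {V : Type} [NormedAddCommGroup V] [NormedSpace ℂ V] {f : V → X →L[ℂ] Y} {z : V}
    (hf : AnalyticAt ℂ f z) : AnalyticAt ℂ (fun w => NL (f w)) z :=
  analyticAt_clm_comp analyticAt_const (analyticAt_clm_comp hf analyticAt_const)

theorem small_unip {η : ℝ} (hη : 0 < η) : ∃ δ > 0, ∀ (x : Y →L[ℂ] X) (y : X →L[ℂ] Y), ‖x‖ ≤ δ → ‖y‖ ≤ δ →
    ‖(1 + NU x) * (1 + NL y) - 1‖ ≤ η := by
  have hc : Continuous fun p : (Y →L[ℂ] X) × (X →L[ℂ] Y) =>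
      ‖(1 + NU p.1) * (1 + NL p.2) - 1‖ := by
    have h1 := (continuous_NU (X := X) (Y := Y)).comp (continuous_fst (Y := X →L[ℂ] Y))
    have h2 := (continuous_NL (X := X) (Y := Y)).comp (continuous_snd (X := Y →L[ℂ] X))
    exact (((continuous_const.add h1).mul (continuous_const.add h2)).sub continuous_const).norm
  have h0 : ∀ᶠ p in 𝓝 (0 : (Y →L[ℂ] X) × (X →L[ℂ] Y)), ‖(1 + NU p.1) * (1 + NL p.2) - 1‖ < η := by
    refine hc.continuousAt.eventually_lt_const ?_
    have e1 : NU (0 : Y →L[ℂ] X) = 0 := by ext v <;> simp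
    have e2 : NL (0 : X →L[ℂ] Y) = 0 := by ext v <;> simp
    simpa [e1, e2] using hη
  obtain ⟨δ, hδ, h⟩ := Metric.eventually_nhds_iff.1 h0
  refine ⟨δ / 2, by positivity, fun x y hx hy => (h (y := (x, y)) ?_).le⟩
  rw [dist_zero_right, Prod.norm_mk]
  exact max_lt (by linarith) (by linarith)
end

theorem face_sub' {l u : Fin n → ℂ} {j : Fin n} {t : ℝ} (hlt : (l j).re ≤ t) :
    cBox (setRe j t l) (setRe j t u) ⊆ cBox l (setRe j t u) := by
  intro z hz i _
  have := hz i (mem_univ i)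
  by_cases hi : i = j
  · subst hi
    rw [mem_reProdIm] at this ⊢
    simp only [setRe_self] at this ⊢
    exact ⟨⟨hlt.trans this.1.1, this.1.2⟩, this.2⟩
  · simpa [setRe_ne hi] using this

theorem face_sub'' {l u : Fin n → ℂ} {j : Fin n} {t : ℝ} (htu : t ≤ (u j).re) :
    cBox (setRe j t l) (setRe j t u) ⊆ cBox (setRe j t l) u := by
  intro z hz i _
  have := hz i (mem_univ i)
  by_cases hi : i = j
  · subst hi
    rw [mem_reProdIm] at this ⊢
    simp only [setRe_self] at this ⊢
    exact ⟨⟨this.1.1, this.1.2.trans htu⟩, this.2⟩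
  · simpa [setRe_ne hi] using this

theorem face_le {l u : Fin n → ℂ} (hlu : ∀ i, (l i).re ≤ (u i).re ∧ (l i).im ≤ (u i).im)
    (j : Fin n) (s t : ℝ) (hst : s ≤ t) :
    ∀ i, (setRe j s l i).re ≤ (setRe j t u i).re ∧ (setRe j s l i).im ≤ (setRe j t u i).im := by
  intro i
  by_cases hi : i = j
  · subst hi; simpa using ⟨hst, (hlu i).2⟩
  · simpa [setRe_ne hi] using hlu i

/-- Matrix version of Theorem B. -/
theorem ThmB.matrix {K : Set (Fin n → ℂ)} (hB : ThmB K) {m m' p q : ℕ}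
    {Φ : (Fin n → ℂ) → (Fin p → ℂ) →L[ℂ] (Fin q → ℂ)}
    {σ : (Fin n → ℂ) → (Fin m → ℂ) →L[ℂ] (Fin p → ℂ)} (h : GensOn Φ σ K)
    {τ : (Fin n → ℂ) → (Fin m' → ℂ) →L[ℂ] (Fin p → ℂ)} (hτ : AnalyticOnNhd ℂ τ K)
    (hτΦ : ∀ z ∈ K, ∀ᶠ w in 𝓝 z, ∀ x, Φ w (τ w x) = 0) :
    ∃ C : (Fin n → ℂ) → (Fin m' → ℂ) →L[ℂ] (Fin m → ℂ), AnalyticOnNhd ℂ C K ∧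
      ∀ z ∈ K, ∀ᶠ w in 𝓝 z, ∀ x, τ w x = σ w (C w x) := by
  have : ∀ i : Fin m', ∃ c : (Fin n → ℂ) → Fin m → ℂ, AnalyticOnNhd ℂ c K ∧
      ∀ z ∈ K, ∀ᶠ w in 𝓝 z, τ w (Pi.single i 1) = σ w (c w) := by
    intro i
    have ha : AnalyticOnNhd ℂ (fun w => τ w (Pi.single i 1)) K := fun z hz =>
      analyticAt_clm_app (hτ z hz) analyticAt_const
    refine hB m p σ _ h.an ha fun z hz => ?_
    refine (h.gen z hz).self_of_nhds _ (ha z hz) ?_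
    filter_upwards [hτΦ z hz] with w hw
    exact hw _
  choose c hc hc' using this
  obtain ⟨C, aC, eC⟩ := clm_of_columns c
  refine ⟨C, fun z hz => aC z fun i => hc i z hz, fun z hz => ?_⟩
  filter_upwards [eventually_all.2 fun i => hc' i z hz] with w hw x
  rw [clm_pi_apply, eC, map_sum]
  simp_rw [map_smul, hw]

/-- Gluing of generators. On the common face the two systems of generators express each other by
matrices `C` and `D`; after enlarging both by zeros they differ there by the invertible matrix
`(1 + C) (1 - D)`, in unipotent block form. Approximating `C` and `D` by entire `Ct` and `Dt`
makes the transition matrix close to the identity, so that Cartan's lemma splits it. -/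
theorem glueA (l u : Fin n → ℂ) (hlu : ∀ i, (l i).re ≤ (u i).re ∧ (l i).im ≤ (u i).im)
    (j : Fin n) (t : ℝ) (htu : t ≤ (u j).re) (hlt : (l j).re ≤ t)
    (hB : ThmB (cBox (setRe j t l) (setRe j t u))) {p q : ℕ}
    {Φ : (Fin n → ℂ) → (Fin p → ℂ) →L[ℂ] (Fin q → ℂ)}
    (h1 : ∃ (m : ℕ) (σ : (Fin n → ℂ) → (Fin m → ℂ) →L[ℂ] (Fin p → ℂ)), GensOn Φ σ (cBox l (setRe j t u)))
    (h2 : ∃ (m : ℕ) (σ : (Fin n → ℂ) → (Fin m → ℂ) →L[ℂ] (Fin p → ℂ)), GensOn Φ σ (cBox (setRe j t l) u)) :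
    ∃ (m : ℕ) (σ : (Fin n → ℂ) → (Fin m → ℂ) →L[ℂ] (Fin p → ℂ)), GensOn Φ σ (cBox l u) := by
  obtain ⟨m', σ', g'⟩ := h1
  obtain ⟨m'', σ'', g''⟩ := h2
  set Fc := cBox (setRe j t l) (setRe j t u) with hFc
  have s' : Fc ⊆ cBox l (setRe j t u) := face_sub' hlt
  have s'' : Fc ⊆ cBox (setRe j t l) u := face_sub'' htu
  have gF' : GensOn Φ σ' Fc := ⟨g'.an.mono s', fun z hz => g'.rel z (s' hz), fun z hz => g'.gen z (s' hz)⟩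
  have gF'' : GensOn Φ σ'' Fc :=
    ⟨g''.an.mono s'', fun z hz => g''.rel z (s'' hz), fun z hz => g''.gen z (s'' hz)⟩
  obtain ⟨C, aC, eC⟩ := hB.matrix gF' gF''.an gF''.rel
  obtain ⟨D, aD, eD⟩ := hB.matrix gF'' gF'.an gF'.rel
  have hluF := face_le hlu j t t le_rfl
  obtain ⟨r, hr, hr1, hall⟩ := exists_oBox hluF (P := fun w => AnalyticAt ℂ C w ∧ AnalyticAt ℂ D w ∧
    (∀ x, σ'' w x = σ' w (C w x)) ∧ ∀ x, σ' w x = σ'' w (D w x)) (fun z hz =>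
      (aC z hz).eventually_analyticAt.and ((aD z hz).eventually_analyticAt.and
        ((eC z hz).and (eD z hz))))
  obtain ⟨η, hη, hcartan⟩ := cartan (𝔅 := ((Fin m' → ℂ) × (Fin m'' → ℂ)) →L[ℂ]
    ((Fin m' → ℂ) × (Fin m'' → ℂ))) l u hlu j t htu hlt (r := r / 2) (by linarith) (by linarith)
  obtain ⟨δ, hδ, hsmall⟩ := small_unip (X := Fin m' → ℂ) (Y := Fin m'' → ℂ) hη
  obtain ⟨Ct, aCt, bCt⟩ := runge _ _ hluF (r := r) (r' := r / 2) (by linarith) (by linarith)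
    (fun z hz => (hall z hz).1) hδ
  obtain ⟨Dt, aDt, bDt⟩ := runge _ _ hluF (r := r) (r' := r / 2) (by linarith) (by linarith)
    (fun z hz => (hall z hz).2.1) hδ
  have hsub : oBox (setRe j t l) (setRe j t u) (r / 2) ⊆ oBox (setRe j t l) (setRe j t u) r :=
    oBox_mono_r (by linarith)
  obtain ⟨A, B, aA, aB, uA, uB, hAB⟩ := hcartan
    (fun w => (1 + NU (C w - Ct w)) * (1 + NL (Dt w - D w)) - 1) (by
      intro z hz
      have hz' := hall z (hsub hz)
      exact ((analyticAt_const.add (analyticAt_NU (hz'.1.sub (aCt z trivial)))).mul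
        (analyticAt_const.add (analyticAt_NL ((aDt z trivial).sub hz'.2.1)))).sub analyticAt_const) (by
      intro z hz
      refine hsmall _ _ ?_ (bDt z hz)
      rw [norm_sub_rev]; exact bCt z hz)
  -- the modified generators, which agree near the face
  let S' : (Fin n → ℂ) → ((Fin m' → ℂ) × (Fin m'' → ℂ)) →L[ℂ] (Fin p → ℂ) := fun w =>
    ((σ' w).comp (ContinuousLinearMap.fst ℂ _ _)).comp ((1 + NU (Ct w)).comp (A w))
  let S'' : (Fin n → ℂ) → ((Fin m' → ℂ) × (Fin m'' → ℂ)) →L[ℂ] (Fin p → ℂ) := fun w =>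
    ((σ'' w).comp (ContinuousLinearMap.snd ℂ _ _)).comp ((1 + NL (Dt w)).comp (B w))
  have hSS : ∀ w ∈ oBox (setRe j t l) (setRe j t u) (r / 2 / 2), S' w = S'' w := by
    intro w hw
    have hw1 := oBox_mono_r (show r / 2 / 2 ≤ r by linarith) hw
    obtain ⟨-, -, e1, e2⟩ := hall w hw1
    have e3 := hAB w hw
    rw [add_sub_cancel] at e3
    refine ContinuousLinearMap.ext fun x => ?_
    simp only [S', S'', ContinuousLinearMap.comp_apply, ← e3, ContinuousLinearMap.mul_apply,
      ContinuousLinearMap.add_apply, ContinuousLinearMap.one_apply, NU_apply, NL_apply,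
      ContinuousLinearMap.coe_fst', ContinuousLinearMap.coe_snd', Prod.fst_add, Prod.snd_add, map_add,
      ContinuousLinearMap.sub_apply, map_sub, map_zero, add_zero, zero_add, ← e1, e2 (B w x).1]
    abel
  obtain ⟨f, hf', hf''⟩ := glue_re l u j t (h' := S') (h'' := S'') (fun z hz => by
    filter_upwards [oBox_nhds (r := r / 2 / 2) (by positivity) hz] with w hw
    exact hSS w hw)
  have aS' : ∀ z ∈ cBox l (setRe j t u), AnalyticAt ℂ S' z := fun z hz =>
    analyticAt_clm_comp (analyticAt_clm_comp (g'.an z hz) analyticAt_const)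
      (analyticAt_clm_comp (analyticAt_const.add (analyticAt_NU (aCt z trivial)))
        (aA z (cBox_sub_oBox (by positivity) hz)))
  have aS'' : ∀ z ∈ cBox (setRe j t l) u, AnalyticAt ℂ S'' z := fun z hz =>
    analyticAt_clm_comp (analyticAt_clm_comp (g''.an z hz) analyticAt_const)
      (analyticAt_clm_comp (analyticAt_const.add (analyticAt_NL (aDt z trivial)))
        (aB z (cBox_sub_oBox (by positivity) hz)))
  refine gensOn_fin (σ := f) ⟨?_, ?_, ?_⟩
  · intro z hz
    rcases cBox_union l u j t hz with hz | hz
    · exact (aS' z hz).congr (hf' z hz).symm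
    · exact (aS'' z hz).congr (hf'' z hz).symm
  · intro z hz
    rcases cBox_union l u j t hz with hz | hz
    · filter_upwards [hf' z hz, g'.rel z hz] with w h1 h2 x
      rw [h1]; exact h2 _
    · filter_upwards [hf'' z hz, g''.rel z hz] with w h1 h2 x
      rw [h1]; exact h2 _
  · intro z hz
    rcases cBox_union l u j t hz with hz | hz
    · filter_upwards [(hf' z hz).eventually_nhds, g'.gen z hz,
        oBox_nhds (r := r / 2 / 2) (by positivity) hz] with w h1 h2 h3 g hg hr
      obtain ⟨c, hc, hcg⟩ := h2 g hg hr
      refine ⟨fun v => Ring.inverse (A v) (c v, 0), analyticAt_clm_app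
        (analyticAt_ringInverse (aA w h3) (uA w h3)) (hc.prod analyticAt_const), ?_⟩
      filter_upwards [h1, hcg, (isOpen_oBox _ _ _).mem_nhds h3] with v h4 h5 h6
      rw [h4, h5]
      have : A v (Ring.inverse (A v) (c v, 0)) = (c v, 0) := by
        rw [← ContinuousLinearMap.mul_apply, Ring.mul_inverse_cancel _ (uA v h6)]; rfl
      simp [S', this]
    · filter_upwards [(hf'' z hz).eventually_nhds, g''.gen z hz,
        oBox_nhds (r := r / 2 / 2) (by positivity) hz] with w h1 h2 h3 g hg hr
      obtain ⟨c, hc, hcg⟩ := h2 g hg hr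
      refine ⟨fun v => Ring.inverse (B v) (0, c v), analyticAt_clm_app
        (analyticAt_ringInverse (aB w h3) (uB w h3)) (analyticAt_const.prod hc), ?_⟩
      filter_upwards [h1, hcg, (isOpen_oBox _ _ _).mem_nhds h3] with v h4 h5 h6
      rw [h4, h5]
      have : B v (Ring.inverse (B v) (0, c v)) = (0, c v) := by
        rw [← ContinuousLinearMap.mul_apply, Ring.mul_inverse_cancel _ (uB v h6)]; rfl
      simp [S'', this]

/-- Gluing of solutions of a linear system. On the common face the two solutions differ by a
combination of generators of the homogeneous relations, whose coefficients are split additively. -/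
theorem glueB (l u : Fin n → ℂ) (hlu : ∀ i, (l i).re ≤ (u i).re ∧ (l i).im ≤ (u i).im)
    (j : Fin n) (t : ℝ) (htu : t ≤ (u j).re) (hlt : (l j).re ≤ t)
    (hB : ThmB (cBox (setRe j t l) (setRe j t u))) {m p k : ℕ}
    {σ : (Fin n → ℂ) → (Fin m → ℂ) →L[ℂ] (Fin p → ℂ)} {g : (Fin n → ℂ) → Fin p → ℂ}
    {ρ : (Fin n → ℂ) → (Fin k → ℂ) →L[ℂ] (Fin m → ℂ)} (hρ : GensOn σ ρ (cBox l u))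
    (h1 : ∃ c : (Fin n → ℂ) → Fin m → ℂ, AnalyticOnNhd ℂ c (cBox l (setRe j t u)) ∧
      ∀ z ∈ cBox l (setRe j t u), ∀ᶠ w in 𝓝 z, g w = σ w (c w))
    (h2 : ∃ c : (Fin n → ℂ) → Fin m → ℂ, AnalyticOnNhd ℂ c (cBox (setRe j t l) u) ∧
      ∀ z ∈ cBox (setRe j t l) u, ∀ᶠ w in 𝓝 z, g w = σ w (c w)) :
    ∃ c : (Fin n → ℂ) → Fin m → ℂ, AnalyticOnNhd ℂ c (cBox l u) ∧
      ∀ z ∈ cBox l u, ∀ᶠ w in 𝓝 z, g w = σ w (c w) := by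
  obtain ⟨c', ac', ec'⟩ := h1
  obtain ⟨c'', ac'', ec''⟩ := h2
  set Fc := cBox (setRe j t l) (setRe j t u) with hFc
  have s' : Fc ⊆ cBox l (setRe j t u) := face_sub' hlt
  have s'' : Fc ⊆ cBox (setRe j t l) u := face_sub'' htu
  have t' : cBox l (setRe j t u) ⊆ cBox l u := by
    intro z hz i _
    have := hz i (mem_univ i)
    by_cases hi : i = j
    · subst hi
      rw [mem_reProdIm] at this ⊢
      simp only [setRe_self] at this
      exact ⟨⟨this.1.1, this.1.2.trans htu⟩, this.2⟩
    · simpa [setRe_ne hi] using this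
  have t'' : cBox (setRe j t l) u ⊆ cBox l u := by
    intro z hz i _
    have := hz i (mem_univ i)
    by_cases hi : i = j
    · subst hi
      rw [mem_reProdIm] at this ⊢
      simp only [setRe_self] at this
      exact ⟨⟨hlt.trans this.1.1, this.1.2⟩, this.2⟩
    · simpa [setRe_ne hi] using this
  obtain ⟨d, ad, ed⟩ := hB k m ρ (fun w => c' w - c'' w) (hρ.an.mono (s'.trans t'))
    (fun z hz => (ac' z (s' hz)).sub (ac'' z (s'' hz))) (fun z hz => by
      refine (hρ.gen z (t' (s' hz))).self_of_nhds _ ((ac' z (s' hz)).sub (ac'' z (s'' hz))) ?_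
      filter_upwards [ec' z (s' hz), ec'' z (s'' hz)] with w h1 h2
      rw [map_sub, ← h1, ← h2, sub_self])
  have hluF := face_le hlu j t t le_rfl
  obtain ⟨r, hr, hr1, hall⟩ := exists_oBox hluF (P := fun w => ∃ _ : AnalyticAt ℂ d w,
    c' w - c'' w = ρ w (d w)) (fun z hz => by
      filter_upwards [(ad z hz).eventually_analyticAt, ed z hz] with w h1 h2
      exact ⟨h1, h2⟩)
  -- a bound for `d` on a smaller box
  obtain ⟨M, hM⟩ := ((isCompact_cBox (setRe j t l) (setRe j t u))).exists_bound_of_continuousOn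
    ad.continuousOn
  obtain ⟨r₂, hr₂, hr₂1, hM₂⟩ := exists_oBox hluF (P := fun w => ‖d w‖ ≤ M + 1) (fun z hz => by
    have := (ad z hz).continuousAt.norm.eventually_lt_const (show ‖d z‖ < M + 1 by
      linarith [hM z hz])
    filter_upwards [this] with w hw using hw.le)
  set r₀ := min r r₂ with hr₀
  have hr₀0 : 0 < r₀ := lt_min hr hr₂
  obtain ⟨d', d'', ad', ad'', hd, -, -⟩ := cousin_split l u hlu j t (r := r₀) (r' := r₀ / 2)
    (by positivity) (by linarith) ((min_le_left _ _).trans hr1) (g := d)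
    (fun z hz => (hall z (oBox_mono_r (min_le_left _ _) hz)).1)
    (fun z hz => hM₂ z (oBox_mono_r (min_le_right _ _) hz))
  obtain ⟨f, hf', hf''⟩ := glue_re l u j t (h' := fun w => c' w - ρ w (d' w))
    (h'' := fun w => c'' w - ρ w (d'' w)) (fun z hz => by
    filter_upwards [oBox_nhds (r := r₀ / 2) (by positivity) hz] with w hw
    have e1 := hd w hw
    have e2 := (hall w (oBox_mono_r (by linarith [min_le_left r r₂]) hw)).2
    rw [e1, map_sub, sub_eq_sub_iff_add_eq_add] at e2
    rw [sub_eq_sub_iff_add_eq_add, add_comm (c'' w), ← e2])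
  refine ⟨f, ?_, ?_⟩
  · intro z hz
    rcases cBox_union l u j t hz with hz' | hz'
    · exact ((ac' z hz').sub (analyticAt_clm_app (hρ.an z hz)
        (ad' z (cBox_sub_oBox (by positivity) hz')))).congr (hf' z hz').symm
    · exact ((ac'' z hz').sub (analyticAt_clm_app (hρ.an z hz)
        (ad'' z (cBox_sub_oBox (by positivity) hz')))).congr (hf'' z hz').symm
  · intro z hz
    rcases cBox_union l u j t hz with hz' | hz'
    · filter_upwards [hf' z hz', hρ.rel z hz, ec' z hz'] with w h1 h2 h3
      rw [h1, map_sub, h2, sub_zero, h3]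
    · filter_upwards [hf'' z hz', hρ.rel z hz, ec'' z hz'] with w h1 h2 h3
      rw [h1, map_sub, h2, sub_zero, h3]

end

end

/-! ### Theorems A and B on closed boxes -/

section

open Set Filter Topology Metric Complex

section
variable {n : ℕ}

/-- A property of intervals that holds for short intervals and is inherited by concatenation holds
for the whole interval. -/
theorem chain_Icc {a b : ℝ} (hab : a ≤ b) {Q : ℝ → ℝ → Prop}
    (hloc : ∀ t ∈ Icc a b, ∃ ε > 0, ∀ s s', |s - t| < ε → |s' - t| < ε → s ≤ s' → Q s s')
    (hglue : ∀ s t u, a ≤ s → s ≤ t → t ≤ u → u ≤ b → Q s t → Q t u → Q s u) : Q a b := by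
  choose! ε hε hQ using hloc
  obtain ⟨t, h0, hm, ⟨N, hN⟩, hsub⟩ := exists_monotone_Icc_subset_open_cover_Icc hab
    (c := fun i : Icc a b => {s : Icc a b | |(s:ℝ) - i| < ε i})
    (fun i => isOpen_lt (by fun_prop) continuous_const)
    (fun x _ => mem_iUnion.2 ⟨x, by simpa using hε x x.2⟩)
  have hstep : ∀ k, Q (t k) (t (k + 1)) := fun k => by
    obtain ⟨i, hi⟩ := hsub k
    have hk := hm (Nat.le_succ k)
    exact hQ i i.2 _ _ (hi ⟨le_rfl, hk⟩) (hi ⟨hk, le_rfl⟩) hk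
  have main : ∀ k, Q (t 0) (t (k + 1)) := by
    intro k
    induction k with
    | zero => exact hstep 0
    | succ k ih =>
      exact hglue _ _ _ (t 0).2.1 (hm (Nat.zero_le _)) (hm (Nat.le_succ _)) (t _).2.2 ih (hstep _)
  have := main N
  rwa [h0, hN (N + 1) (by omega)] at this

@[simp] theorem setRe_setRe (j : Fin n) (s t : ℝ) (l : Fin n → ℂ) :
    setRe j t (setRe j s l) = setRe j t l := by
  simp [setRe]

theorem setRe_eq_self (j : Fin n) (l : Fin n → ℂ) : setRe j (l j).re l = l := by
  simp [setRe]

theorem slab_sub {l u : Fin n → ℂ} {j : Fin n} {s s' t ε : ℝ} (hε : 0 < ε) (hs : |s - t| < ε)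
    (hs' : |s' - t| < ε) :
    cBox (setRe j s l) (setRe j s' u) ⊆ oBox (setRe j t l) (setRe j t u) ε := by
  intro z hz i
  have := hz i (mem_univ i)
  rw [mem_reProdIm] at this
  rw [abs_lt] at hs hs'
  by_cases hi : i = j
  · subst hi
    simp only [setRe_self, mem_Icc] at this
    simp only [rectNhd, mem_setOf_eq, setRe_self]
    refine ⟨⟨?_, ?_⟩, ?_, ?_⟩ <;> linarith
  · simp only [setRe_ne hi, mem_Icc] at this
    simp only [rectNhd, mem_setOf_eq, setRe_ne hi]
    refine ⟨⟨?_, ?_⟩, ?_, ?_⟩ <;> linarith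

theorem slab_sub_box {l u : Fin n → ℂ} {j : Fin n} {s s' : ℝ} (hs : (l j).re ≤ s)
    (hs' : s' ≤ (u j).re) : cBox (setRe j s l) (setRe j s' u) ⊆ cBox l u := by
  intro z hz i _
  have := hz i (mem_univ i)
  rw [mem_reProdIm] at this ⊢
  by_cases hi : i = j
  · subst hi
    simp only [setRe_self] at this
    exact ⟨⟨hs.trans this.1.1, this.1.2.trans hs'⟩, this.2⟩
  · simpa [setRe_ne hi] using this

/-- Theorem A for a box follows from Theorems A and B for its slices in a real direction. -/
theorem slice_reA (l u : Fin n → ℂ) (hlu : ∀ i, (l i).re ≤ (u i).re ∧ (l i).im ≤ (u i).im)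
    (j : Fin n) (hA : ∀ t ∈ Icc (l j).re (u j).re, ThmA (cBox (setRe j t l) (setRe j t u)))
    (hB : ∀ t ∈ Icc (l j).re (u j).re, ThmB (cBox (setRe j t l) (setRe j t u))) :
    ThmA (cBox l u) := by
  intro p q Φ hΦ
  have key := chain_Icc (hlu j).1 (Q := fun s t => ∃ (m : ℕ) (σ : (Fin n → ℂ) → (Fin m → ℂ) →L[ℂ]
      (Fin p → ℂ)), GensOn Φ σ (cBox (setRe j s l) (setRe j t u))) ?_ ?_
  · simpa only [setRe_eq_self] using key
  · intro t ht
    obtain ⟨m, σ, h⟩ := hA t ht p q Φ (hΦ.mono (slab_sub_box ht.1 ht.2))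
    obtain ⟨r, hr, -, hall⟩ := exists_oBox (face_le hlu j t t le_rfl)
      (P := fun w => AnalyticAt ℂ σ w ∧ (∀ x, Φ w (σ w x) = 0) ∧ Gen Φ σ w) (fun z hz =>
        (h.an z hz).eventually_analyticAt.and ((h.rel z hz).and (h.gen z hz)))
    refine ⟨r, hr, fun s s' h1 h2 _ => ⟨m, σ, ?_⟩⟩
    have hsub := slab_sub (l := l) (u := u) (j := j) hr h1 h2
    have hnear : ∀ z ∈ cBox (setRe j s l) (setRe j s' u), ∀ᶠ w in 𝓝 z,
        w ∈ oBox (setRe j t l) (setRe j t u) r := fun z hz => (isOpen_oBox _ _ _).mem_nhds (hsub hz)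
    exact ⟨fun z hz => (hall z (hsub hz)).1,
      fun z hz => (hnear z hz).mono fun w hw => (hall w hw).2.1,
      fun z hz => (hnear z hz).mono fun w hw => (hall w hw).2.2⟩
  · intro s t v h1 h2 h3 h4 k1 k2
    refine glueA (setRe j s l) (setRe j v u) (face_le hlu j s v (h2.trans h3)) j t (by simpa using h3)
      (by simpa using h2) ?_ ?_ ?_
    · simpa using hB t ⟨h1.trans h2, h3.trans h4⟩
    · simpa using k1
    · simpa using k2

/-- Theorem B for a box follows from Theorem A for the box and Theorem B for its slices. -/
theorem slice_reB (l u : Fin n → ℂ) (hlu : ∀ i, (l i).re ≤ (u i).re ∧ (l i).im ≤ (u i).im)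
    (j : Fin n) (hA : ThmA (cBox l u))
    (hB : ∀ t ∈ Icc (l j).re (u j).re, ThmB (cBox (setRe j t l) (setRe j t u))) :
    ThmB (cBox l u) := by
  intro m p σ g hσ hg hloc
  obtain ⟨k, ρ, hρ⟩ := hA m p σ hσ
  have key := chain_Icc (hlu j).1 (Q := fun s t => ∃ c : (Fin n → ℂ) → Fin m → ℂ,
      AnalyticOnNhd ℂ c (cBox (setRe j s l) (setRe j t u)) ∧
      ∀ z ∈ cBox (setRe j s l) (setRe j t u), ∀ᶠ w in 𝓝 z, g w = σ w (c w)) ?_ ?_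
  · simpa only [setRe_eq_self] using key
  · intro t ht
    have hs := slab_sub_box (l := l) (u := u) ht.1 ht.2
    obtain ⟨c, hc, hcg⟩ := hB t ht m p σ g (hσ.mono hs) (hg.mono hs) (fun z hz => hloc z (hs hz))
    obtain ⟨r, hr, -, hall⟩ := exists_oBox (face_le hlu j t t le_rfl)
      (P := fun w => AnalyticAt ℂ c w ∧ g w = σ w (c w)) (fun z hz =>
        (hc z hz).eventually_analyticAt.and (hcg z hz))
    refine ⟨r, hr, fun s s' h1 h2 _ => ⟨c, ?_⟩⟩
    have hsub := slab_sub (l := l) (u := u) (j := j) hr h1 h2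
    exact ⟨fun z hz => (hall z (hsub hz)).1,
      fun z hz => ((isOpen_oBox _ _ _).eventually_mem (hsub hz)).mono fun w hw => (hall w hw).2⟩
  · intro s t v h1 h2 h3 h4 k1 k2
    have hs := slab_sub_box (l := l) (u := u) (j := j) h1 h4
    refine glueB (setRe j s l) (setRe j v u) (face_le hlu j s v (h2.trans h3)) j t (by simpa using h3)
      (by simpa using h2) ?_ (ρ := ρ) ⟨hρ.an.mono hs, fun z hz => hρ.rel z (hs hz),
        fun z hz => hρ.gen z (hs hz)⟩ ?_ ?_
    · simpa using hB t ⟨h1.trans h2, h3.trans h4⟩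
    · simpa using k1
    · simpa using k2

theorem ThmA.preimage {V : Type} [NormedAddCommGroup V] [NormedSpace ℂ V] {K : Set V} (h : ThmA K)
    (T : V ≃L[ℂ] V) : ThmA (T ⁻¹' K) := by
  intro p q Φ hΦ
  obtain ⟨m, σ, hσ⟩ := h p q (fun w => Φ (T.symm w)) (fun z hz =>
    AnalyticAt.fun_comp (g := Φ) (hΦ _ (by simpa using hz)) (T.symm.analyticAt z))
  refine ⟨m, fun w => σ (T w), fun z hz => AnalyticAt.fun_comp (g := σ) (hσ.an _ hz) (T.analyticAt z),
    fun z hz => ?_, fun z hz => ?_⟩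
  · filter_upwards [T.continuous.continuousAt.eventually (hσ.rel _ hz)] with w hw x
    simpa using hw x
  · filter_upwards [T.continuous.continuousAt.eventually (hσ.gen _ hz)] with w hw g hg hr
    have hT : Tendsto T.symm (𝓝 (T w)) (𝓝 w) := by
      simpa using T.symm.continuous.tendsto (T w)
    obtain ⟨c, hc, hcg⟩ := hw (fun v => g (T.symm v))
      (AnalyticAt.fun_comp (g := g) (by simpa using hg) (T.symm.analyticAt _)) (hT.eventually hr)
    refine ⟨fun v => c (T v), AnalyticAt.fun_comp (g := c) hc (T.analyticAt _), ?_⟩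
    filter_upwards [T.continuous.continuousAt.eventually hcg] with v hv
    simpa using hv

theorem ThmB.preimage {V : Type} [NormedAddCommGroup V] [NormedSpace ℂ V] {K : Set V} (h : ThmB K)
    (T : V ≃L[ℂ] V) : ThmB (T ⁻¹' K) := by
  intro m p σ g hσ hg hloc
  obtain ⟨c, hc, hcg⟩ := h m p (fun w => σ (T.symm w)) (fun w => g (T.symm w)) (fun z hz =>
    AnalyticAt.fun_comp (g := σ) (hσ _ (by simpa using hz)) (T.symm.analyticAt z)) (fun z hz =>
    AnalyticAt.fun_comp (g := g) (hg _ (by simpa using hz)) (T.symm.analyticAt z)) (fun z hz => by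
      obtain ⟨c, hc, hcg⟩ := hloc (T.symm z) (by simpa using hz)
      exact ⟨fun w => c (T.symm w), AnalyticAt.fun_comp (g := c) hc (T.symm.analyticAt _),
        T.symm.continuous.continuousAt.eventually hcg⟩)
  refine ⟨fun w => c (T w), fun z hz => AnalyticAt.fun_comp (g := c) (hc _ hz) (T.analyticAt _),
    fun z hz => ?_⟩
  filter_upwards [T.continuous.continuousAt.eventually (hcg _ hz)] with v hv
  simpa using hv

/-- Multiplication of the `j`-th coordinate by `I`. -/
noncomputable def rotE (j : Fin n) : (Fin n → ℂ) ≃L[ℂ] (Fin n → ℂ) :=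
  ContinuousLinearEquiv.piCongrRight fun i =>
    if i = j then ContinuousLinearEquiv.unitsEquivAut ℂ (Units.mk0 I I_ne_zero)
    else ContinuousLinearEquiv.refl ℂ ℂ

theorem rotE_self (j : Fin n) (z : Fin n → ℂ) : rotE j z j = I * z j := by
  simp [rotE, mul_comm]

theorem rotE_ne {i j : Fin n} (h : i ≠ j) (z : Fin n → ℂ) : rotE j z i = z i := by
  simp [rotE, h]

/-- The lower corner of the box rotated by `I` in the `j`-th coordinate. -/
def rotL (j : Fin n) (l u : Fin n → ℂ) : Fin n → ℂ := Function.update l j ⟨-(u j).im, (l j).re⟩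

/-- The upper corner of the box rotated by `I` in the `j`-th coordinate. -/
def rotU (j : Fin n) (l u : Fin n → ℂ) : Fin n → ℂ := Function.update u j ⟨-(l j).im, (u j).re⟩

theorem rot_preimage (j : Fin n) (l u : Fin n → ℂ) :
    rotE j ⁻¹' cBox (rotL j l u) (rotU j l u) = cBox l u := by
  ext z
  simp only [mem_preimage, cBox, mem_univ_pi, mem_reProdIm]
  refine forall_congr' fun i => ?_
  by_cases hi : i = j
  · subst hi
    simp [rotE_self, rotL, rotU]
    tauto
  · simp [rotE_ne hi, rotL, rotU, hi]

/-- The corner `l` with the imaginary part of its `j`-th coordinate replaced by `t`. -/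
def setIm (j : Fin n) (t : ℝ) (l : Fin n → ℂ) : Fin n → ℂ := Function.update l j ⟨(l j).re, t⟩

/-- The imaginary directions are reduced to the real ones by multiplication with `I`. -/
theorem slice_im (l u : Fin n → ℂ) (hlu : ∀ i, (l i).re ≤ (u i).re ∧ (l i).im ≤ (u i).im)
    (j : Fin n) (h : ∀ t ∈ Icc (l j).im (u j).im, ThmA (cBox (setIm j t l) (setIm j t u)) ∧
      ThmB (cBox (setIm j t l) (setIm j t u))) :
    ThmA (cBox l u) ∧ ThmB (cBox l u) := by
  have hle : ∀ i, (rotL j l u i).re ≤ (rotU j l u i).re ∧ (rotL j l u i).im ≤ (rotU j l u i).im := by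
    intro i
    by_cases hi : i = j
    · subst hi; simpa [rotL, rotU] using ⟨(hlu i).2, (hlu i).1⟩
    · simpa [rotL, rotU, hi] using hlu i
  have hface : ∀ t, cBox (setRe j t (rotL j l u)) (setRe j t (rotU j l u)) =
      (rotE j).symm ⁻¹' cBox (setIm j (-t) l) (setIm j (-t) u) := by
    intro t
    have e1 : setRe j t (rotL j l u) = rotL j (setIm j (-t) l) (setIm j (-t) u) := by
      funext i
      by_cases hi : i = j
      · subst hi; simp [rotL, setIm]
      · simp [rotL, setIm, setRe, hi]
    have e2 : setRe j t (rotU j l u) = rotU j (setIm j (-t) l) (setIm j (-t) u) := by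
      funext i
      by_cases hi : i = j
      · subst hi; simp [rotU, setIm]
      · simp [rotU, setIm, setRe, hi]
    rw [e1, e2, ← rot_preimage j (setIm j (-t) l), ← preimage_comp]
    ext z; simp
  have hAB : ∀ t ∈ Icc (rotL j l u j).re (rotU j l u j).re,
      ThmA (cBox (setRe j t (rotL j l u)) (setRe j t (rotU j l u))) ∧
      ThmB (cBox (setRe j t (rotL j l u)) (setRe j t (rotU j l u))) := by
    intro t ht
    have ht' : -t ∈ Icc (l j).im (u j).im := by
      simp only [rotL, rotU, Function.update_self, mem_Icc] at ht ⊢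
      constructor <;> linarith
    rw [hface]
    exact ⟨(h _ ht').1.preimage _, (h _ ht').2.preimage _⟩
  have hA := slice_reA _ _ hle j (fun t ht => (hAB t ht).1) (fun t ht => (hAB t ht).2)
  have hB := slice_reB _ _ hle j hA (fun t ht => (hAB t ht).2)
  rw [← rot_preimage j l u]
  exact ⟨hA.preimage _, hB.preimage _⟩

/-- Theorems A and B for all closed boxes. -/
theorem thmAB (l u : Fin n → ℂ) (hlu : ∀ i, (l i).re ≤ (u i).re ∧ (l i).im ≤ (u i).im) :
    ThmA (cBox l u) ∧ ThmB (cBox l u) := by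
  have main : ∀ S : Finset (Fin n × Bool), ∀ l u : Fin n → ℂ,
      (∀ i, (l i).re ≤ (u i).re ∧ (l i).im ≤ (u i).im) →
      (∀ i, (i, false) ∉ S → (l i).re = (u i).re) → (∀ i, (i, true) ∉ S → (l i).im = (u i).im) →
      ThmA (cBox l u) ∧ ThmB (cBox l u) := by
    intro S
    induction S using Finset.induction_on with
    | empty =>
      intro l u hlu h1 h2
      have e : cBox l u = {l} := by
        ext z
        simp only [cBox, mem_univ_pi, mem_reProdIm, mem_singleton_iff]
        constructor
        · intro h
          funext i
          have := h i
          rw [← h1 i (by simp), ← h2 i (by simp), Icc_self, Icc_self] at this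
          exact Complex.ext this.1 this.2
        · rintro rfl i
          exact ⟨⟨le_rfl, (hlu i).1⟩, ⟨le_rfl, (hlu i).2⟩⟩
      rw [e]
      exact ⟨ThmA_point l, ThmB_point l⟩
    | insert jb S hj ih =>
      rcases jb with ⟨j, b⟩
      intro l u hlu h1 h2
      cases b with
      | false =>
        have hf : ∀ t ∈ Icc (l j).re (u j).re, ThmA (cBox (setRe j t l) (setRe j t u)) ∧
            ThmB (cBox (setRe j t l) (setRe j t u)) := by
          intro t _
          refine ih _ _ (face_le hlu j t t le_rfl) ?_ ?_
          · intro i hi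
            by_cases hij : i = j
            · subst hij; simp
            · simpa [setRe_ne hij] using h1 i (by simp [hij, hi])
          · intro i hi
            by_cases hij : i = j
            · subst hij; simpa using h2 i (by simp [hi])
            · simpa [setRe_ne hij] using h2 i (by simp [hi])
        have hA := slice_reA l u hlu j (fun t ht => (hf t ht).1) (fun t ht => (hf t ht).2)
        exact ⟨hA, slice_reB l u hlu j hA (fun t ht => (hf t ht).2)⟩
      | true =>
        refine slice_im l u hlu j fun t _ => ih _ _ ?_ ?_ ?_
        · intro i
          by_cases hij : i = j
          · subst hij; simpa [setIm] using (hlu i).1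
          · simpa [setIm, hij] using hlu i
        · intro i hi
          by_cases hij : i = j
          · subst hij; simpa [setIm] using h1 i (by simp [hi])
          · simpa [setIm, hij] using h1 i (by simp [hi])
        · intro i hi
          by_cases hij : i = j
          · subst hij; simp [setIm]
          · simpa [setIm, hij] using h2 i (by simp [hij, hi])
  exact main Finset.univ l u hlu (fun i h => absurd (Finset.mem_univ _) h)
    (fun i h => absurd (Finset.mem_univ _) h)

end

end

/-! ### Relations on a tube -/

section

open Set Filter Topology Metric Complex

section
variable {n : ℕ}

/-- The tube of half-width `s` around the real points of `ℂⁿ`. -/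
def tube (n : ℕ) (s : ℝ) : Set (Fin n → ℂ) := {z | ∀ i, |(z i).im| < s}

theorem isOpen_tube (s : ℝ) : IsOpen (tube n s) := by
  have : tube n s = ⋂ i, {z : Fin n → ℂ | |(z i).im| < s} := by
    ext z; simp [tube]
  rw [this]
  refine isOpen_iInter_of_finite fun i => ?_
  exact isOpen_lt (by fun_prop) continuous_const

/-- The box `|Re zᵢ| ≤ s`, `|Im zᵢ| ≤ 1/2`. -/
def tBox (n : ℕ) (s : ℝ) : Set (Fin n → ℂ) := cBox (fun _ => ⟨-s, -(1/2)⟩) (fun _ => ⟨s, 1/2⟩)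

theorem mem_tBox {s : ℝ} {z : Fin n → ℂ} :
    z ∈ tBox n s ↔ ∀ i, |(z i).re| ≤ s ∧ |(z i).im| ≤ 1/2 := by
  simp [tBox, cBox, mem_reProdIm, abs_le]

theorem tBox_corner {s : ℝ} (hs : 0 ≤ s) (i : Fin n) :
    ((fun _ => ⟨-s, -(1/2)⟩ : Fin n → ℂ) i).re ≤ ((fun _ => ⟨s, 1/2⟩ : Fin n → ℂ) i).re ∧
    ((fun _ => ⟨-s, -(1/2)⟩ : Fin n → ℂ) i).im ≤ ((fun _ => ⟨s, 1/2⟩ : Fin n → ℂ) i).im := by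
  constructor
  · change -s ≤ s; linarith
  · change (-(1/2) : ℝ) ≤ 1/2; norm_num

/-- A relation near a box is approximated on that box by relations near any larger box. -/
theorem relation_extend {p q : ℕ} {Φ : (Fin n → ℂ) → (Fin p → ℂ) →L[ℂ] (Fin q → ℂ)}
    (hΦ : AnalyticOnNhd ℂ Φ (tube n 1)) {s t : ℝ} (hs : 0 ≤ s) (hst : s ≤ t)
    {h : (Fin n → ℂ) → Fin p → ℂ} (ha : AnalyticOnNhd ℂ h (tBox n s))
    (hr : ∀ z ∈ tBox n s, ∀ᶠ w in 𝓝 z, Φ w (h w) = 0) {ε : ℝ} (hε : 0 < ε) :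
    ∃ h' : (Fin n → ℂ) → Fin p → ℂ, AnalyticOnNhd ℂ h' (tBox n t) ∧
      (∀ z ∈ tBox n t, ∀ᶠ w in 𝓝 z, Φ w (h' w) = 0) ∧ ∀ z ∈ tBox n s, ‖h' z - h z‖ ≤ ε := by
  have ht : 0 ≤ t := hs.trans hst
  have hsub : tBox n s ⊆ tBox n t := fun z hz => mem_tBox.2 fun i =>
    ⟨(mem_tBox.1 hz i).1.trans hst, (mem_tBox.1 hz i).2⟩
  have htub : tBox n t ⊆ tube n 1 := fun z hz i => by
    have := (mem_tBox.1 hz i).2; linarith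
  obtain ⟨m, σ, hσ⟩ := (thmAB _ _ (tBox_corner (n := n) ht)).1 p q Φ (hΦ.mono htub)
  obtain ⟨c, hc, hcg⟩ := (thmAB _ _ (tBox_corner (n := n) hs)).2 m p σ h (hσ.an.mono hsub) ha
    fun z hz => (hσ.gen z (hsub hz)).self_of_nhds h (ha z hz) (hr z hz)
  obtain ⟨r, hr0, -, hr'⟩ := exists_oBox (tBox_corner (n := n) hs)
    (P := fun w => AnalyticAt ℂ c w) fun z hz => (hc z hz).eventually_analyticAt
  obtain ⟨B, hB⟩ := (isCompact_cBox (fun _ : Fin n => (⟨-s, -(1/2)⟩ : ℂ)) (fun _ => ⟨s, 1/2⟩)).exists_bound_of_continuousOn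
    (f := σ) fun z hz => (hσ.an z (hsub hz)).continuousAt.continuousWithinAt
  have hB' : 0 < |B| + 1 := by positivity
  obtain ⟨c', hc', hcc⟩ := runge _ _ (tBox_corner (n := n) hs) (half_pos hr0) (half_lt_self hr0)
    (g := c) (fun w hw => hr' w hw) (div_pos hε hB')
  refine ⟨fun w => σ w (c' w), fun z hz => analyticAt_clm_app (hσ.an z hz) (hc' z (mem_univ z)),
    fun z hz => ?_, fun z hz => ?_⟩
  · filter_upwards [hσ.rel z hz] with w hw using hw _
  · rw [(hcg z hz).self_of_nhds, ← map_sub]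
    have h1 := hcc z (cBox_sub_oBox (half_pos hr0) hz)
    calc ‖σ z (c' z - c z)‖ ≤ ‖σ z‖ * ‖c' z - c z‖ := (σ z).le_opNorm _
      _ ≤ (|B| + 1) * (ε / (|B| + 1)) := by
        gcongr
        exact (hB z hz).trans ((le_abs_self B).trans (by linarith))
      _ = ε := by field_simp

/-- Global relations on a tube: a germ of a relation whose `j`-th component does not vanish at a
point `x` of the inner tube yields a relation on the whole inner tube with this property. -/
theorem relation_tube {p q : ℕ} {Φ : (Fin n → ℂ) → (Fin p → ℂ) →L[ℂ] (Fin q → ℂ)}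
    (hΦ : AnalyticOnNhd ℂ Φ (tube n 1)) {x : Fin n → ℂ} (hx : x ∈ tube n (1/2))
    {v : (Fin n → ℂ) → Fin p → ℂ} (hv : AnalyticAt ℂ v x) (hvr : ∀ᶠ w in 𝓝 x, Φ w (v w) = 0)
    (j : Fin p) (hj : v x j ≠ 0) :
    ∃ h : (Fin n → ℂ) → Fin p → ℂ, AnalyticOnNhd ℂ h (tube n (1/2)) ∧
      (∀ z ∈ tube n (1/2), Φ z (h z) = 0) ∧ h x j ≠ 0 := by
  have key : ∀ z : Fin n → ℂ, ∃ N : ℕ, ∀ i, |(z i).re| < N := by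
    intro z
    obtain ⟨N, hN⟩ := exists_nat_gt (∑ i, |(z i).re|)
    exact ⟨N, fun i => (Finset.single_le_sum (f := fun i => |(z i).re|)
      (fun _ _ => abs_nonneg _) (Finset.mem_univ i)).trans_lt hN⟩
  obtain ⟨N, hN⟩ := key x
  let s : ℕ → ℝ := fun k => N + k
  have hs : ∀ k, 0 ≤ s k := fun k => by positivity
  have hss : ∀ k, s k ≤ s (k+1) := fun k => by simp [s]
  have hmono : Monotone s := monotone_nat_of_le_succ hss
  let R : ℕ → ((Fin n → ℂ) → Fin p → ℂ) → Prop := fun k h =>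
    AnalyticOnNhd ℂ h (tBox n (s k)) ∧ ∀ z ∈ tBox n (s k), ∀ᶠ w in 𝓝 z, Φ w (h w) = 0
  have hx0 : ∀ k, x ∈ tBox n (s k) := fun k => mem_tBox.2 fun i =>
    ⟨(hN i).le.trans (by simp [s]), (hx i).le⟩
  have htub : tBox n (s 0) ⊆ tube n 1 := fun z hz i => by
    have := (mem_tBox.1 hz i).2; linarith
  -- the starting relation is a constant combination of generators on the first box
  obtain ⟨h0, hR0, hj0⟩ : ∃ h0, R 0 h0 ∧ h0 x j ≠ 0 := by
    obtain ⟨m, σ, hσ⟩ := (thmAB _ _ (tBox_corner (n := n) (hs 0))).1 p q Φ (hΦ.mono htub)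
    obtain ⟨c, hc, hcg⟩ := (hσ.gen x (hx0 0)).self_of_nhds v hv hvr
    refine ⟨fun w => σ w (c x), ⟨fun z hz => analyticAt_clm_app (hσ.an z hz) analyticAt_const,
      fun z hz => ?_⟩, ?_⟩
    · filter_upwards [hσ.rel z hz] with w hw using hw _
    · simpa [hcg.self_of_nhds] using hj
  set C : ℝ := ‖h0 x j‖ / 2 with hC
  have hC0 : 0 < C := by have := norm_pos_iff.2 hj0; positivity
  -- the total change under all corrections is at most `C`, half of the component at `x`
  have step : ∀ k h, ∃ h', R k h → R (k+1) h' ∧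
      ∀ z ∈ tBox n (s k), ‖h' z - h z‖ ≤ C / 2 / 2 ^ k := by
    intro k h
    by_cases hR : R k h
    · obtain ⟨h', h1, h2, h3⟩ := relation_extend hΦ (hs k) (hss k) hR.1 hR.2
        (ε := C / 2 / 2 ^ k) (by positivity)
      exact ⟨h', fun _ => ⟨⟨h1, h2⟩, h3⟩⟩
    · exact ⟨h, fun H => absurd H hR⟩
  choose S hS using step
  let H : ℕ → (Fin n → ℂ) → Fin p → ℂ := fun k => Nat.rec h0 (fun k h => S k h) k
  have hR : ∀ k, R k (H k) := by
    intro k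
    induction k with
    | zero => exact hR0
    | succ k ih => exact (hS k _ ih).1
  have hd : ∀ k, ∀ z ∈ tBox n (s k), dist (H k z) (H (k+1) z) ≤ C / 2 / 2 ^ k := by
    intro k z hz
    rw [dist_comm, dist_eq_norm]
    exact (hS k _ (hR k)).2 z hz
  let G : ℕ → Set (Fin n → ℂ) := fun k => {z | ∀ i, |(z i).re| < s k ∧ |(z i).im| < 1/2}
  have hGo : ∀ k, IsOpen (G k) := by
    intro k
    have : G k = ⋂ i, ({z : Fin n → ℂ | |(z i).re| < s k} ∩ {z : Fin n → ℂ | |(z i).im| < 1/2}) := by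
      ext z; simp [G]
    rw [this]
    refine isOpen_iInter_of_finite fun i => ?_
    exact (isOpen_lt (by fun_prop) continuous_const).inter (isOpen_lt (by fun_prop) continuous_const)
  have hGt : ∀ k i, G k ⊆ tBox n (s (k + i)) := fun k i z hz => mem_tBox.2 fun j =>
    ⟨(hz j).1.le.trans (hmono (Nat.le_add_right k i)), (hz j).2.le⟩
  have hGe : ∀ z ∈ tube n (1/2), ∃ k, z ∈ G k := by
    intro z hz
    obtain ⟨M, hM⟩ := key z
    refine ⟨M, fun i => ⟨(hM i).trans_le (by simp [s]), hz i⟩⟩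
  have hd' : ∀ k, ∀ z ∈ G k, ∀ i, dist (H (k + i) z) (H (k + (i+1)) z) ≤ (C / 2 ^ k) / 2 / 2 ^ i := by
    intro k z hz i
    refine (hd (k+i) z (hGt k i hz)).trans (le_of_eq ?_)
    rw [pow_add]; field_simp
  have hlim : ∀ k, ∀ z ∈ G k, ∃ a, Tendsto (fun i => H (k + i) z) atTop (𝓝 a) := fun k z hz =>
    cauchySeq_tendsto_of_complete (cauchySeq_of_le_geometric_two (hd' k z hz))
  have hlim' : ∀ z, ∃ a, z ∈ tube n (1/2) → Tendsto (fun i => H i z) atTop (𝓝 a) := by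
    intro z
    by_cases hz : z ∈ tube n (1/2)
    · obtain ⟨k, hk⟩ := hGe z hz
      obtain ⟨a, ha⟩ := hlim k z hk
      refine ⟨a, fun _ => ?_⟩
      rw [← tendsto_add_atTop_iff_nat k]
      simpa [add_comm] using ha
    · exact ⟨0, fun h => absurd h hz⟩
  choose h hh using hlim'
  have hGs : ∀ k, G k ⊆ tube n (1/2) := fun k z hz i => (hz i).2
  have hsh : ∀ k, ∀ z ∈ G k, Tendsto (fun i => H (k + i) z) atTop (𝓝 (h z)) := by
    intro k z hz
    have := hh z (hGs k hz)
    rw [← tendsto_add_atTop_iff_nat k] at this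
    simpa [add_comm] using this
  refine ⟨h, fun z hz => ?_, fun z hz => ?_, ?_⟩
  · obtain ⟨k, hk⟩ := hGe z hz
    refine analyticOnNhd_of_tendstoLocallyUniformlyOn (f := fun i => H (k + i)) (hGo k)
      (fun i => (hR (k+i)).1.mono (hGt k i)) ?_ z hk
    refine TendstoUniformlyOn.tendstoLocallyUniformlyOn ?_
    rw [Metric.tendstoUniformlyOn_iff]
    intro ε hε
    have h2 : Tendsto (fun i : ℕ => (C / 2 ^ k) / 2 ^ i) atTop (𝓝 0) := by
      have := (tendsto_pow_atTop_nhds_zero_of_lt_one (r := (1/2 : ℝ)) (by norm_num) (by norm_num)).const_mul (C / 2 ^ k)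
      simpa [div_eq_mul_inv] using this
    filter_upwards [h2.eventually (gt_mem_nhds hε)] with i hi w hw
    rw [dist_comm]
    exact (dist_le_of_le_geometric_two_of_tendsto (hd' k w hw) (hsh k w hw) i).trans_lt hi
  · obtain ⟨k, hk⟩ := hGe z hz
    have h1 : Tendsto (fun i => Φ z (H (k + i) z)) atTop (𝓝 (Φ z (h z))) :=
      ((Φ z).continuous.tendsto _).comp (hsh k z hk)
    have h2 : (fun i => Φ z (H (k + i) z)) = fun _ => 0 := by
      funext i
      exact ((hR (k+i)).2 z (hGt k i hk)).self_of_nhds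
    rw [h2] at h1
    exact (tendsto_nhds_unique h1 tendsto_const_nhds)
  · intro h0'
    have h1 : dist (H 0 x) (h x) ≤ C :=
      dist_le_of_le_geometric_two_of_tendsto₀ (fun i => hd i x (hx0 i)) (hh x hx)
    have h2 : ‖h0 x j‖ ≤ C := by
      have := (norm_le_pi_norm (H 0 x - h x) j)
      rw [Pi.sub_apply, h0', sub_zero, ← dist_eq_norm] at this
      exact this.trans h1
    rw [hC] at h2
    have := norm_pos_iff.2 hj0
    linarith

end

end

/-! ### Complexification -/

section

open Set Filter Topology Metric Complex

section
variable {n : ℕ}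

/-- The inclusion of the real points into `ℂⁿ`. -/
noncomputable def cx (n : ℕ) : (Fin n → ℝ) →L[ℝ] (Fin n → ℂ) :=
  ContinuousLinearMap.pi fun i => ofRealCLM.comp (ContinuousLinearMap.proj i)

@[simp] theorem cx_apply (y : Fin n → ℝ) (i : Fin n) : cx n y i = (y i : ℂ) := rfl

theorem dist_cx (x y : Fin n → ℝ) : dist (cx n x) (cx n y) = dist x y := by
  refine le_antisymm ((dist_pi_le_iff dist_nonneg).2 fun i => ?_)
    ((dist_pi_le_iff dist_nonneg).2 fun i => ?_)
  · have := dist_le_pi_dist x y i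
    simpa [Complex.dist_eq, ← ofReal_sub, Real.dist_eq] using this
  · have := dist_le_pi_dist (cx n x) (cx n y) i
    simpa [Complex.dist_eq, ← ofReal_sub, Real.dist_eq] using this

theorem dist_cx_re_le (z : Fin n → ℂ) (x : Fin n → ℝ) :
    dist (cx n fun i => (z i).re) (cx n x) ≤ dist z (cx n x) := by
  refine (dist_pi_le_iff dist_nonneg).2 fun i => ?_
  refine le_trans ?_ (dist_le_pi_dist z (cx n x) i)
  simp only [cx_apply, Complex.dist_eq, ← ofReal_sub, norm_real, Real.norm_eq_abs]
  simpa using abs_re_le_norm (z i - x i)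

/-- A real-analytic germ extends to a holomorphic function on a complex ball. -/
theorem complexify_local {f : (Fin n → ℝ) → ℝ} {x : Fin n → ℝ} (hf : AnalyticAt ℝ f x) :
    ∃ r > 0, ∃ F : (Fin n → ℂ) → ℂ, AnalyticOnNhd ℂ F (ball (cx n x) r) ∧
      ∀ y ∈ ball x r, F (cx n y) = f y := by
  obtain ⟨p, R, hp⟩ := hf
  obtain ⟨ρ, hρ0, hρ⟩ := ENNReal.lt_iff_exists_nnreal_btwn.1 hp.r_pos
  have hρ0' : (0:ℝ) < ρ := by exact_mod_cast hρ0
  obtain ⟨C, hC, hb⟩ := p.norm_mul_pow_le_of_lt_radius (hρ.trans_le hp.r_le)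
  set r : ℝ := ρ / (2 * (n + 1)) with hr
  have hr0 : 0 < r := by positivity
  -- the `k`-th homogeneous Taylor polynomial at complex arguments
  let P : ℕ → (Fin n → ℂ) → ℂ := fun k z => ∑ idx : Fin k → Fin n,
    (p k (fun j => Pi.single (idx j) 1) : ℂ) * ∏ j, (z (idx j) - x (idx j))
  have hPan : ∀ k z, AnalyticAt ℂ (P k) z := by
    intro k z
    refine Finset.analyticAt_fun_sum _ fun idx _ => analyticAt_const.mul ?_
    refine Finset.analyticAt_fun_prod _ fun j _ => AnalyticAt.sub ?_ analyticAt_const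
    exact (ContinuousLinearMap.proj (R := ℂ) (φ := fun _ : Fin n => ℂ) (idx j)).analyticAt _
  have hPb : ∀ k, ∀ z ∈ ball (cx n x) r, ‖P k z‖ ≤ C * (1/2) ^ k := by
    intro k z hz
    have h1 : ∀ idx : Fin k → Fin n,
        ‖(p k (fun j => Pi.single (idx j) 1) : ℂ) * ∏ j, (z (idx j) - x (idx j))‖ ≤ ‖p k‖ * r ^ k := by
      intro idx
      rw [norm_mul, norm_real, norm_prod]
      gcongr
      · refine ((p k).le_opNorm _).trans ?_
        refine mul_le_of_le_one_right (norm_nonneg _) (Finset.prod_le_one (fun _ _ => norm_nonneg _) ?_)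
        intro j _
        rw [Pi.norm_single]; simp
      · refine (Finset.prod_le_prod (fun _ _ => norm_nonneg _) (g := fun _ => r) fun j _ => ?_).trans ?_
        · have := (dist_le_pi_dist z (cx n x) (idx j)).trans (mem_ball.1 hz).le
          simpa [dist_eq_norm] using this
        · simp
    calc ‖P k z‖ ≤ ∑ idx : Fin k → Fin n, ‖p k‖ * r ^ k :=
          (norm_sum_le _ _).trans (Finset.sum_le_sum fun idx _ => h1 idx)
      _ = ‖p k‖ * (n * r) ^ k := by simp [mul_pow]; ring
      _ ≤ ‖p k‖ * (ρ / 2) ^ k := by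
        gcongr
        rw [hr, mul_div_assoc', div_le_div_iff₀ (by positivity) (by positivity)]
        nlinarith
      _ = (‖p k‖ * ρ ^ k) * (1/2) ^ k := by rw [div_pow, div_pow]; ring
      _ ≤ C * (1/2) ^ k := by gcongr; exact hb k
  have hsum : Summable fun k : ℕ => C * (1/2 : ℝ) ^ k :=
    (summable_geometric_of_lt_one (by norm_num) (by norm_num)).mul_left C
  have hPr : ∀ k y, P k (cx n y) = (p k (fun _ => y - x) : ℝ) := by
    intro k y
    have h1 : y - x = ∑ i, (y i - x i) • (Pi.single i 1 : Fin n → ℝ) := by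
      conv_lhs => rw [pi_eq_sum_univ' (y - x)]
      rfl
    have h2 : p k (fun _ => y - x) = ∑ idx : Fin k → Fin n,
        p k (fun j => (y (idx j) - x (idx j)) • (Pi.single (idx j) 1 : Fin n → ℝ)) := by
      conv_lhs => rw [h1]
      exact (p k).toMultilinearMap.map_sum _
    rw [h2]
    simp only [P, ofReal_sum]
    refine Finset.sum_congr rfl fun idx _ => ?_
    rw [(p k).map_smul_univ]
    simp [mul_comm]
  refine ⟨r, hr0, fun z => ∑' k, P k z, ?_, ?_⟩
  · refine analyticOnNhd_of_tendstoLocallyUniformlyOn (f := fun N z => ∑ k ∈ Finset.range N, P k z)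
      isOpen_ball (fun N z _ => Finset.analyticAt_fun_sum _ fun k _ => hPan k z) ?_
    exact (tendstoUniformlyOn_tsum_nat hsum hPb).tendstoLocallyUniformlyOn
  · intro y hy
    have h3 : y ∈ Metric.eball x R := by
      rw [Metric.mem_eball, edist_dist]
      refine lt_trans ?_ hρ
      rw [ENNReal.ofReal_lt_coe_iff dist_nonneg]
      refine (mem_ball.1 hy).trans_le ?_
      rw [hr]
      exact div_le_self hρ0'.le (by linarith [(Nat.cast_nonneg n : (0:ℝ) ≤ n)])
    have h4 := (hp.hasSum_sub h3)
    have h5 : HasSum (fun k => P k (cx n y)) (f y : ℂ) := by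
      simp_rw [hPr]
      exact_mod_cast h4
    exact h5.tsum_eq

/-- A holomorphic germ at a real point that vanishes on the real points is zero. -/
theorem eventually_zero_of_real {F : (Fin n → ℂ) → ℂ} {x : Fin n → ℝ} (hF : AnalyticAt ℂ F (cx n x))
    (h0 : ∀ᶠ y in 𝓝 x, F (cx n y) = 0) : ∀ᶠ z in 𝓝 (cx n x), F z = 0 := by
  obtain ⟨r, hr, hFr⟩ := Metric.eventually_nhds_iff_ball.1 (hF.eventually_analyticAt)
  obtain ⟨r', hr', h0r⟩ := Metric.eventually_nhds_iff_ball.1 h0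
  set ρ := min r r' with hρ
  have hρ0 : 0 < ρ := lt_min hr hr'
  -- the coordinates are freed from being real one after the other, by the identity theorem
  have key : ∀ S : Finset (Fin n), ∀ z ∈ ball (cx n x) ρ, (∀ i ∉ S, (z i).im = 0) → F z = 0 := by
    intro S
    induction S using Finset.induction_on with
    | empty =>
      intro z hz hi
      have hzr : z = cx n (fun i => (z i).re) := by
        funext i
        exact Complex.ext (by simp) (by simpa using hi i (by simp))
      rw [hzr]
      refine h0r _ ?_
      rw [mem_ball, ← dist_cx, ← hzr]
      exact (mem_ball.1 hz).trans_le (min_le_right _ _)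
    | insert i S hiS ih =>
      intro z hz hi
      have hup : ∀ t ∈ ball (x i : ℂ) ρ, Function.update z i t ∈ ball (cx n x) ρ := by
        intro t ht
        rw [mem_ball, dist_pi_lt_iff hρ0]
        intro j
        by_cases hj : j = i
        · subst hj; simpa using ht
        · rw [Function.update_of_ne hj]
          exact (dist_pi_lt_iff hρ0).1 hz j
      have hA : AnalyticOnNhd ℂ (fun t => F (Function.update z i t)) (ball (x i : ℂ) ρ) := by
        intro t ht
        refine AnalyticAt.fun_comp (g := F) (hFr _ (ball_subset_ball (min_le_left _ _) (hup t ht))) ?_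
        rw [analyticAt_pi_iff]
        intro j
        by_cases hj : j = i
        · subst hj; simp only [Function.update_self]; exact analyticAt_id
        · simp only [Function.update_of_ne hj]; exact analyticAt_const
      have hz0 : ∀ t : ℝ, (t : ℂ) ∈ ball (x i : ℂ) ρ → F (Function.update z i t) = 0 := by
        intro t ht
        refine ih _ (hup t ht) fun j hj => ?_
        by_cases hji : j = i
        · subst hji; simp
        · rw [Function.update_of_ne hji]
          exact hi j (by simp [hji, hj])
      have hfreq : ∃ᶠ t in 𝓝[≠] (x i : ℂ), F (Function.update z i t) = 0 := by
        have ht : Tendsto (fun t : ℝ => (t : ℂ)) (𝓝[≠] (x i)) (𝓝[≠] (x i : ℂ)) := by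
          refine tendsto_nhdsWithin_iff.2 ⟨?_, ?_⟩
          · exact (continuous_ofReal.tendsto _).mono_left nhdsWithin_le_nhds
          · filter_upwards [self_mem_nhdsWithin] with t ht
            simpa using ht
        have hev : ∀ᶠ t : ℝ in 𝓝[≠] (x i), F (Function.update z i (t:ℂ)) = 0 := by
          have h1 : ∀ᶠ t : ℝ in 𝓝 (x i), (t:ℂ) ∈ ball (x i : ℂ) ρ :=
            (continuous_ofReal.tendsto _).eventually (ball_mem_nhds _ hρ0)
          filter_upwards [nhdsWithin_le_nhds h1] with t ht using hz0 t ht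
        exact ht.frequently hev.frequently
      have := hA.eqOn_zero_of_preconnected_of_frequently_eq_zero (convex_ball _ _).isPreconnected
        (mem_ball_self hρ0) hfreq
      have h2 := this (show z i ∈ ball (x i : ℂ) ρ from (dist_pi_lt_iff hρ0).1 hz i)
      simpa using h2
  exact Metric.eventually_nhds_iff_ball.2 ⟨ρ, hρ0, fun z hz => key Finset.univ z hz (by simp)⟩

/-- A real-analytic function on `ℝⁿ` extends holomorphically to a neighbourhood of `ℝⁿ`. -/
theorem complexify {f : (Fin n → ℝ) → ℝ} (hf : ∀ x, AnalyticAt ℝ f x) :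
    ∃ (Ω : Set (Fin n → ℂ)) (F : (Fin n → ℂ) → ℂ), IsOpen Ω ∧ (∀ y, cx n y ∈ Ω) ∧
      AnalyticOnNhd ℂ F Ω ∧ ∀ y, F (cx n y) = f y := by
  choose r hr F hF hFf using fun x => complexify_local (hf x)
  have hag : ∀ x x' z, z ∈ ball (cx n x) (r x) → z ∈ ball (cx n x') (r x') → F x z = F x' z := by
    intro x x' z hz hz'
    set a : Fin n → ℝ := fun i => (z i).re
    -- two overlapping balls with real centres share a real point
    have ha : cx n a ∈ ball (cx n x) (r x) := (dist_cx_re_le z x).trans_lt hz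
    have ha' : cx n a ∈ ball (cx n x') (r x') := (dist_cx_re_le z x').trans_lt hz'
    have hW : IsPreconnected (ball (cx n x) (r x) ∩ ball (cx n x') (r x')) :=
      ((convex_ball _ _).inter (convex_ball _ _)).isPreconnected
    refine AnalyticOnNhd.eqOn_of_preconnected_of_eventuallyEq ((hF x).mono inter_subset_left)
      ((hF x').mono inter_subset_right) hW ⟨ha, ha'⟩ ?_ ⟨hz, hz'⟩
    have hB : a ∈ ball x (r x) := by rw [mem_ball, ← dist_cx]; exact ha
    have hB' : a ∈ ball x' (r x') := by rw [mem_ball, ← dist_cx]; exact ha'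
    have := eventually_zero_of_real (F := fun w => F x w - F x' w) ((hF x _ ha).sub (hF x' _ ha')) (by
      filter_upwards [isOpen_ball.mem_nhds hB, isOpen_ball.mem_nhds hB'] with y hy hy'
      rw [hFf x y hy, hFf x' y hy', sub_self])
    filter_upwards [this] with w hw using sub_eq_zero.1 hw
  have hch : ∀ z, ∃ x, (∃ x, z ∈ ball (cx n x) (r x)) → z ∈ ball (cx n x) (r x) := by
    intro z
    by_cases h : ∃ x, z ∈ ball (cx n x) (r x)
    · exact ⟨h.choose, fun _ => h.choose_spec⟩
    · exact ⟨0, fun h' => absurd h' h⟩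
  choose X hX using hch
  have heq : ∀ x, ∀ z ∈ ball (cx n x) (r x), F (X z) z = F x z := fun x z hz =>
    hag _ _ z (hX z ⟨x, hz⟩) hz
  refine ⟨⋃ x, ball (cx n x) (r x), fun z => F (X z) z, isOpen_iUnion fun _ => isOpen_ball,
    fun y => mem_iUnion.2 ⟨y, mem_ball_self (hr y)⟩, ?_, ?_⟩
  · intro z hz
    obtain ⟨x, hx⟩ := mem_iUnion.1 hz
    refine (hF x z hx).congr ?_
    filter_upwards [isOpen_ball.mem_nhds hx] with w hw using (heq x w hw).symm
  · intro y
    change F (X (cx n y)) (cx n y) = f y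
    rw [heq y _ (mem_ball_self (hr y)), hFf y y (mem_ball_self (hr y))]

end

end

/-! ### Estimates for one summand of the slow map -/

section

open Set Filter Topology Metric Complex

section
variable {n : ℕ}

/-- Bounds for an inverse square root `S` of `Z`, where `Re Z = L²`. -/
theorem inv_sqrt_bounds {Z S : ℂ} (h : S ^ 2 * Z = 1) {L : ℝ} (hL : 0 < L) (hX : Z.re = L ^ 2) :
    ‖S‖ ≤ 1 / L ∧ |S.im| ≤ |Z.im| * (1 / L) ^ 3 := by
  have hre := congrArg Complex.re h
  have him := congrArg Complex.im h
  simp only [pow_two, mul_re, mul_im, one_re, one_im] at hre him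
  set α := S.re
  set β := S.im
  set X := Z.re
  set Y := Z.im
  set s := α ^ 2 + β ^ 2 with hs
  have hXs : X * s ^ 2 = α ^ 2 - β ^ 2 := by
    rw [hs]; linear_combination (α ^ 2 - β ^ 2) * hre + 2 * α * β * him
  have hYs : Y * s ^ 2 = - (2 * α * β) := by
    rw [hs]; linear_combination (α ^ 2 - β ^ 2) * him - 2 * α * β * hre
  have hs0 : 0 < s := by
    rcases (show 0 ≤ s by positivity).eq_or_lt with h0 | h0
    · have h1 : α = 0 := by nlinarith [sq_nonneg α, sq_nonneg β]
      have h2 : β = 0 := by nlinarith [sq_nonneg α, sq_nonneg β]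
      rw [h1, h2] at hre; norm_num at hre
    · exact h0
  have hXle : X * s ≤ 1 := by
    have : X * s * s ≤ 1 * s := by nlinarith [sq_nonneg β]
    exact le_of_mul_le_mul_right this hs0
  have hsL : s ≤ (1 / L) ^ 2 := by
    rw [div_pow, one_pow, le_div_iff₀ (by positivity), ← hX, mul_comm]; exact hXle
  have hL' : 0 < 1 / L := by positivity
  constructor
  · rw [← abs_of_nonneg (norm_nonneg S), ← abs_of_pos hL', ← sq_le_sq]
    rw [← normSq_eq_norm_sq, normSq_apply]
    calc _ = s := by rw [hs]; ring
      _ ≤ _ := hsL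
  · have hX0 : 0 < X := by rw [hX]; positivity
    have hba : β ^ 2 ≤ α ^ 2 := by nlinarith [mul_pos hX0 (pow_pos hs0 2)]
    have h1 : s * β ^ 2 ≤ s * (Y ^ 2 * s ^ 3) := by
      have : Y ^ 2 * s ^ 4 = 4 * α ^ 2 * β ^ 2 := by
        linear_combination (Y * s ^ 2 - 2 * α * β) * hYs
      nlinarith [mul_nonneg (sq_nonneg α) (sq_nonneg β), mul_nonneg (sub_nonneg.2 hba) (sq_nonneg β)]
    have h2 : β ^ 2 ≤ Y ^ 2 * s ^ 3 := le_of_mul_le_mul_left h1 hs0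
    refine abs_le_of_sq_le_sq ?_ (by positivity)
    calc β ^ 2 ≤ Y ^ 2 * s ^ 3 := h2
      _ ≤ Y ^ 2 * ((1 / L) ^ 2) ^ 3 := by gcongr
      _ = (|Y| * (1 / L) ^ 3) ^ 2 := by rw [mul_pow, sq_abs]; ring

/-- The quadratic form `R² + ∑ wᵢ²`. -/
def qf (R : ℝ) (w : Fin n → ℂ) : ℂ := (R : ℂ) ^ 2 + ∑ i, w i ^ 2

/-- The inverse square root of `R² + ∑ wᵢ²`. -/
noncomputable def isq (R : ℝ) (w : Fin n → ℂ) : ℂ := qf R w ^ (-(1/2) : ℂ)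

theorem qf_re_im (R : ℝ) (w : Fin n → ℂ) :
    (qf R w).re = R ^ 2 + ∑ i, ((w i).re ^ 2 - (w i).im ^ 2) ∧
    (qf R w).im = ∑ i, 2 * (w i).re * (w i).im := by
  constructor
  · simp [qf, pow_two]
  · simp only [qf, pow_two, add_im, mul_im, ofReal_im, ofReal_re, im_sum]
    simp only [mul_zero, zero_mul, add_zero, zero_add]
    exact Finset.sum_congr rfl fun i _ => by ring

theorem qf_re_bound {R : ℝ} {w : Fin n → ℂ} (hw : w ∈ tube n 1) (i : Fin n) :
    R ^ 2 + (w i).re ^ 2 - n ≤ (qf R w).re := by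
  rw [(qf_re_im R w).1, Finset.sum_sub_distrib]
  have h1 := Finset.single_le_sum (f := fun i => (w i).re ^ 2) (fun _ _ => sq_nonneg _) (Finset.mem_univ i)
  have h2 : ∑ i, (w i).im ^ 2 ≤ ∑ i : Fin n, (1:ℝ) := Finset.sum_le_sum fun i _ => by
    have := hw i
    nlinarith [sq_abs (w i).im, abs_nonneg (w i).im]
  simp at h2 h1
  linarith

theorem qf_re_bound' {R : ℝ} {w : Fin n → ℂ} (hw : w ∈ tube n 1) :
    R ^ 2 - n ≤ (qf R w).re := by
  rw [(qf_re_im R w).1, Finset.sum_sub_distrib]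
  have h1 := Finset.sum_nonneg (s := Finset.univ) (f := fun i => (w i).re ^ 2) (fun _ _ => sq_nonneg _)
  have h2 : ∑ i, (w i).im ^ 2 ≤ ∑ i : Fin n, (1:ℝ) := Finset.sum_le_sum fun i _ => by
    have := hw i
    nlinarith [sq_abs (w i).im, abs_nonneg (w i).im]
  simp at h2 h1
  linarith

theorem qf_re_pos {R : ℝ} (hR : 2 * n + 4 ≤ R) {w : Fin n → ℂ} (hw : w ∈ tube n 1) :
    0 < (qf R w).re := by
  have := qf_re_bound' (R := R) hw
  have : (0:ℝ) ≤ n := Nat.cast_nonneg n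
  nlinarith

/-- The estimates for one summand `w / √(R² + ∑ wᵢ²)` of the slow map on the unit tube. -/
theorem slow_term {R : ℝ} (hR : 2 * n + 4 ≤ R) {w : Fin n → ℂ} (hw : w ∈ tube n 1) :
    ∃ L, 0 < L ∧ R / 2 ≤ L ∧ ‖w‖ ≤ L ∧ ‖isq R w‖ ≤ 1 / L ∧
      ∀ i, |(isq R w * w i).im| ≤ (2 * n + 1) / L := by
  have hn : (0:ℝ) ≤ n := Nat.cast_nonneg n
  have hpos := qf_re_pos hR hw
  set L := √(qf R w).re with hL
  have hL0 : 0 < L := Real.sqrt_pos.2 hpos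
  have hL2 : (qf R w).re = L ^ 2 := (Real.sq_sqrt hpos.le).symm
  have hS : isq R w ^ 2 * qf R w = 1 := by
    have h0 : qf R w ≠ 0 := fun h => by rw [h] at hpos; simp at hpos
    rw [isq, ← cpow_nat_mul]
    have : ((2:ℕ) : ℂ) * (-(1/2)) = -1 := by norm_num
    rw [this, cpow_neg_one, inv_mul_cancel₀ h0]
  obtain ⟨hb1, hb2⟩ := inv_sqrt_bounds hS hL0 hL2
  have hre : ∀ i, |(w i).re| ≤ L := fun i => by
    refine abs_le_of_sq_le_sq ?_ hL0.le
    have := qf_re_bound (R := R) hw i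
    nlinarith
  refine ⟨L, hL0, ?_, ?_, hb1, ?_⟩
  · refine Real.le_sqrt_of_sq_le ?_
    have := qf_re_bound' (R := R) hw
    nlinarith
  · refine (pi_norm_le_iff_of_nonneg hL0.le).2 fun i => Real.le_sqrt_of_sq_le ?_
    rw [← normSq_eq_norm_sq, normSq_apply]
    have := qf_re_bound (R := R) hw i
    have := hw i
    nlinarith [sq_abs (w i).im, abs_nonneg (w i).im]
  · intro i
    have hY : |(qf R w).im| ≤ 2 * n * L := by
      rw [(qf_re_im R w).2]
      refine (Finset.abs_sum_le_sum_abs _ _).trans ?_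
      calc ∑ i, |2 * (w i).re * (w i).im| ≤ ∑ i : Fin n, 2 * L := by
            refine Finset.sum_le_sum fun i _ => ?_
            rw [abs_mul, abs_mul, abs_two]
            have := hw i
            have := hre i
            nlinarith [abs_nonneg (w i).re, abs_nonneg (w i).im]
        _ = 2 * n * L := by simp; ring
    rw [mul_im]
    calc |(isq R w).re * (w i).im + (isq R w).im * (w i).re|
        ≤ |(isq R w).re| * |(w i).im| + |(isq R w).im| * |(w i).re| := by
          rw [← abs_mul, ← abs_mul]; exact abs_add_le _ _
      _ ≤ (1 / L) * 1 + (2 * n * L * (1 / L) ^ 3) * L := by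
          gcongr
          · exact (abs_re_le_norm _).trans hb1
          · exact (hw i).le
          · exact hb2.trans (by gcongr)
          · exact hre i
      _ = (2 * n + 1) / L := by field_simp; ring

theorem isq_analytic {R : ℝ} (hR : 2 * n + 4 ≤ R) {w : Fin n → ℂ} (hw : w ∈ tube n 1) :
    AnalyticAt ℂ (isq (n := n) R) w := by
  refine AnalyticAt.cpow ?_ analyticAt_const (Or.inl (qf_re_pos hR hw))
  refine analyticAt_const.add (Finset.analyticAt_fun_sum _ fun i _ => ?_)
  exact ((ContinuousLinearMap.proj (R := ℂ) (φ := fun _ : Fin n => ℂ) i).analyticAt w).pow 2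

theorem isq_real (R : ℝ) (a : Fin n → ℝ) :
    isq R (cx n a) = ((1 / √(R ^ 2 + ∑ i, a i ^ 2) : ℝ) : ℂ) := by
  have h : qf R (cx n a) = ((R ^ 2 + ∑ i, a i ^ 2 : ℝ) : ℂ) := by simp [qf]
  have h0 : 0 ≤ R ^ 2 + ∑ i, a i ^ 2 := by positivity
  rw [isq, h]
  have : (-(1/2) : ℂ) = ((-(1/2) : ℝ) : ℂ) := by norm_num
  rw [this, ← ofReal_cpow h0, Real.rpow_neg h0, ← Real.sqrt_eq_rpow, one_div]

end

end

/-! ### The slow map on the unit tube -/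

section

open Set Filter Topology Metric Complex

section
variable {n : ℕ}

/-- Admissible scales for the slow map in dimension `n`. The lower bound keeps `Rₖ² + ∑ wᵢ²` in the
right half plane for all `w` in the unit tube, so that the principal square root is holomorphic. -/
structure Scales (n : ℕ) (R : ℕ → ℝ) : Prop where
  large : ∀ k, 2 * n + 4 ≤ R k
  growth : ∀ k, 4 * R k ≤ R (k + 1)

theorem Scales.pos {R : ℕ → ℝ} (h : Scales n R) (k : ℕ) : 0 < R k :=
  lt_of_lt_of_le (by positivity) (h.large k)

theorem Scales.pow_le {R : ℕ → ℝ} (h : Scales n R) (m j : ℕ) : 4 ^ j * R m ≤ R (m + j) := by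
  induction j with
  | zero => simp
  | succ j ih =>
    refine le_trans ?_ (h.growth (m + j))
    rw [pow_succ]; linarith

theorem Scales.le_pow {R : ℕ → ℝ} (h : Scales n R) (k : ℕ) : 2 / R k ≤ (1/4) ^ k := by
  have h1 := h.pow_le 0 k
  have h0 := h.large 0
  have hn : (0:ℝ) ≤ n := Nat.cast_nonneg n
  rw [zero_add] at h1
  rw [div_pow, one_pow, div_le_div_iff₀ (h.pos k) (by positivity)]
  nlinarith [pow_pos (show (0:ℝ) < 4 by norm_num) k]

/-- The scalar factor of the slow map `w ↦ ∑ₖ w / √(Rₖ² + ∑ wᵢ²)`. -/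
noncomputable def sl (R : ℕ → ℝ) (w : Fin n → ℂ) : ℂ := ∑' k, isq (R k) w

theorem isq_le {R : ℕ → ℝ} (h : Scales n R) (k : ℕ) {w : Fin n → ℂ} (hw : w ∈ tube n 1) :
    ‖isq (R k) w‖ ≤ (1/4) ^ k := by
  obtain ⟨L, hL0, hL1, -, hL2, -⟩ := slow_term (h.large k) hw
  refine hL2.trans (le_trans ?_ (h.le_pow k))
  rw [div_le_div_iff₀ hL0 (h.pos k)]; linarith

theorem summable_quarter : Summable fun k : ℕ => (1/4 : ℝ) ^ k :=
  summable_geometric_of_lt_one (by norm_num) (by norm_num)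

theorem summable_isq {R : ℕ → ℝ} (h : Scales n R) {w : Fin n → ℂ} (hw : w ∈ tube n 1) :
    Summable fun k => isq (R k) w :=
  Summable.of_norm_bounded summable_quarter fun k => isq_le h k hw

theorem sl_analytic {R : ℕ → ℝ} (h : Scales n R) : AnalyticOnNhd ℂ (sl (n := n) R) (tube n 1) := by
  refine analyticOnNhd_of_tendstoLocallyUniformlyOn
    (f := fun N z => ∑ k ∈ Finset.range N, isq (R k) z)
    (isOpen_tube 1) (fun N z hz => Finset.analyticAt_fun_sum _ fun k _ => isq_analytic (h.large k) hz) ?_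
  exact (tendstoUniformlyOn_tsum_nat summable_quarter
    (fun k z hz => isq_le h k hz)).tendstoLocallyUniformlyOn

/-- On the unit tube the slow map has imaginary part small compared with its real part. -/
theorem slow_bound {R : ℕ → ℝ} (h : Scales n R) {w : Fin n → ℂ} (hw : w ∈ tube n 1) :
    ∃ m : ℕ, ∀ i, |(sl R w * w i).re| ≤ m + 3 ∧
      |(sl R w * w i).im| ≤ 2 * (2 * n + 1) / R (m - 1) * (m + 3) := by
  -- the first `m` summands have size about `1`, the others decay geometrically
  have hex : ∃ m, ‖w‖ ≤ R m := by
    obtain ⟨m, hm⟩ := pow_unbounded_of_one_lt ‖w‖ (show (1:ℝ) < 4 by norm_num)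
    refine ⟨m, hm.le.trans ?_⟩
    have h1 := h.pow_le 0 m
    have h0 := h.large 0
    have hn : (0:ℝ) ≤ n := Nat.cast_nonneg n
    rw [zero_add] at h1
    nlinarith [pow_pos (show (0:ℝ) < 4 by norm_num) m]
  classical
  set m := Nat.find hex with hm
  have hmw : ‖w‖ ≤ R m := Nat.find_spec hex
  have hmin : ∀ k < m, R k < ‖w‖ := fun k hk => not_le.1 (Nat.find_min hex hk)
  have hmono : Monotone R := monotone_nat_of_le_succ fun k => by
    have := h.growth k; have := h.pos k; linarith
  let ρ : ℕ → ℝ := fun k => if k < m then 1 else 2 * (1/4) ^ (k - m)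
  have hρ : HasSum ρ (m + 8/3) := by
    rw [← hasSum_nat_add_iff' m]
    have h1 : ∑ i ∈ Finset.range m, ρ i = m := by
      rw [Finset.sum_congr rfl (g := fun _ => (1:ℝ))]
      · simp
      · intro i hi; simp [ρ, Finset.mem_range.1 hi]
    rw [h1, add_sub_cancel_left]
    have h2 : (fun k => ρ (k + m)) = fun k => 2 * (1/4 : ℝ) ^ k := by
      funext k; simp [ρ]
    rw [h2]
    have := (hasSum_geometric_of_lt_one (r := (1/4 : ℝ)) (by norm_num) (by norm_num)).mul_left 2
    rw [show (2 * (1 - 1/4)⁻¹ : ℝ) = 8/3 by norm_num] at this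
    exact this
  have hn : (0:ℝ) ≤ n := Nat.cast_nonneg n
  have hRk : ∀ k, m ≤ k → 4 ^ (k - m) * R m ≤ R k := fun k hk => by
    have := h.pow_le m (k - m)
    rwa [Nat.add_sub_cancel' hk] at this
  set C : ℝ := 2 * n + 1 with hC
  have hC0 : 0 < C := by positivity
  set B := 2 * C / R (m - 1) with hB
  have hB0 : 0 < B := div_pos (by positivity) (h.pos _)
  have hre : ∀ i k, |(isq (R k) w * w i).re| ≤ ρ k := by
    intro i k
    obtain ⟨L, hL0, hL1, hL2, hL3, -⟩ := slow_term (h.large k) hw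
    refine (abs_re_le_norm _).trans ?_
    rw [norm_mul]
    have h1 : ‖isq (R k) w‖ * ‖w i‖ ≤ 1 / L * ‖w‖ := by gcongr; exact norm_le_pi_norm w i
    refine h1.trans ?_
    by_cases hk : k < m
    · simp only [ρ, if_pos hk]
      rw [one_div, inv_mul_eq_div, div_le_one hL0]; exact hL2
    · simp only [ρ, if_neg hk]
      rw [one_div, inv_mul_eq_div, div_pow, one_pow, mul_one_div, div_le_div_iff₀ hL0 (by positivity)]
      have := hRk k (not_lt.1 hk)
      nlinarith [pow_pos (show (0:ℝ) < 4 by norm_num) (k - m)]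
  have him : ∀ i k, |(isq (R k) w * w i).im| ≤ B * ρ k := by
    intro i k
    obtain ⟨L, hL0, hL1, hL2, -, hL3⟩ := slow_term (h.large k) hw
    refine (hL3 i).trans ?_
    rw [← hC]
    by_cases hk : k < m
    · simp only [ρ, if_pos hk, mul_one]
      have := hmin (m - 1) (by omega)
      have := h.pos (m - 1)
      rw [hB, div_le_div_iff₀ hL0 (h.pos _)]
      nlinarith
    · simp only [ρ, if_neg hk]
      have h1 := hRk k (not_lt.1 hk)
      have h2 : R (m - 1) ≤ R m := hmono (Nat.sub_le m 1)
      have h3 := h.pos (m - 1)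
      have h4 := pow_pos (show (0:ℝ) < 4 by norm_num) (k - m)
      rw [hB, div_pow, one_pow, mul_one_div, div_mul_div_comm, div_le_div_iff₀ hL0 (by positivity)]
      have h5 : R (m - 1) * 4 ^ (k - m) ≤ 2 * L := by nlinarith
      nlinarith
  refine ⟨m, fun i => ?_⟩
  have hs : HasSum (fun k => isq (R k) w * w i) (sl R w * w i) :=
    (summable_isq h hw).hasSum.mul_right (w i)
  have hsr := hasSum_re hs
  have hsi := hasSum_im hs
  constructor
  · have := tsum_of_norm_bounded hρ (fun k => (Real.norm_eq_abs _).trans_le (hre i k))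
    rw [hsr.tsum_eq, Real.norm_eq_abs] at this
    linarith
  · have := tsum_of_norm_bounded (hρ.mul_left B) (fun k => (Real.norm_eq_abs _).trans_le (him i k))
    rw [hsi.tsum_eq, Real.norm_eq_abs] at this
    refine this.trans ?_
    gcongr
    norm_num

/-- The slow map can be adapted to any neighbourhood of the real points. -/
theorem exists_scales {Ω : Set (Fin n → ℂ)} (hΩ : IsOpen Ω) (hr : ∀ y, cx n y ∈ Ω) :
    ∃ R, Scales n R ∧ ∀ w ∈ tube n 1, sl R w • w ∈ Ω := by
  have hδ : ∀ m : ℕ, ∃ δ > 0, ∀ z : Fin n → ℂ, (∀ i, |(z i).re| ≤ m + 3) → (∀ i, |(z i).im| < δ) →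
      z ∈ Ω := by
    intro m
    have hK : IsCompact (cx n '' closedBall 0 (m + 3)) :=
      (isCompact_closedBall _ _).image (cx n).continuous
    obtain ⟨δ, hδ, hsub⟩ := hK.exists_thickening_subset_open hΩ (by
      rintro _ ⟨y, -, rfl⟩; exact hr y)
    refine ⟨δ, hδ, fun z h1 h2 => hsub ?_⟩
    rw [mem_thickening_iff]
    refine ⟨cx n fun i => (z i).re, ⟨_, ?_, rfl⟩, ?_⟩
    · rw [mem_closedBall_zero_iff]
      exact (pi_norm_le_iff_of_nonneg (by positivity)).2 h1
    · rw [dist_pi_lt_iff hδ]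
      intro i
      have : z i - (z i).re = (z i).im * I := by
        apply Complex.ext <;> simp
      rw [cx_apply, dist_eq_norm, this]
      simpa using h2 i
  choose δ hδ0 hδ using hδ
  have hn : (0:ℝ) ≤ n := Nat.cast_nonneg n
  set C : ℝ := 2 * (2 * n + 1) with hC
  have hC0 : 0 < C := by positivity
  -- `R k` has to beat the bound of `slow_bound` for `m = k + 1`, and for `m = k` in case `k = 0`
  let s : ℕ → ℝ := fun k => (2 * n + 4) + C * (k + 3) / δ k + C * (k + 4) / δ (k + 1)
  have hp1 : ∀ k : ℕ, 0 < C * (k + 3) / δ k := fun k => div_pos (by positivity) (hδ0 k)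
  have hp2 : ∀ k : ℕ, 0 < C * (k + 4) / δ (k+1) := fun k => div_pos (by positivity) (hδ0 (k+1))
  have hs0 : ∀ k, 0 < s k := fun k => by
    have := hp1 k; have := hp2 k
    simp only [s]; linarith
  let R : ℕ → ℝ := fun k => 4 ^ k * ∑ j ∈ Finset.range (k + 1), s j
  have hsum : ∀ k, s k ≤ ∑ j ∈ Finset.range (k + 1), s j := fun k =>
    Finset.single_le_sum (fun j _ => (hs0 j).le) (Finset.self_mem_range_succ k)
  have hsR : ∀ k, s k ≤ R k := fun k => (hsum k).trans
    (le_mul_of_one_le_left ((hs0 k).le.trans (hsum k)) (one_le_pow₀ (by norm_num)))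
  have hR : Scales n R := by
    refine ⟨fun k => le_trans ?_ (hsR k), fun k => ?_⟩
    · have := hp1 k; have := hp2 k
      simp only [s]; linarith
    · simp only [R]
      rw [Finset.sum_range_succ _ (k+1), pow_succ]
      have := hs0 (k+1)
      have := pow_pos (show (0:ℝ) < 4 by norm_num) k
      nlinarith [mul_pos this (hs0 (k+1))]
  refine ⟨R, hR, fun w hw => ?_⟩
  obtain ⟨m, hm⟩ := slow_bound hR hw
  refine hδ m _ (fun i => (hm i).1) fun i => (hm i).2.trans_lt ?_
  rw [div_mul_eq_mul_div, div_lt_iff₀ (hR.pos _), ← div_lt_iff₀' (hδ0 m), ← hC]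
  refine lt_of_lt_of_le ?_ (hsR (m - 1))
  rcases m with _ | m
  · have := hp2 0
    simp only [s, Nat.cast_zero, zero_add, Nat.zero_sub] at this ⊢
    linarith
  · have := hp1 m
    simp only [s, Nat.add_sub_cancel, Nat.cast_add, Nat.cast_one] at this ⊢
    have h3 : (m : ℝ) + 1 + 3 = m + 4 := by ring
    rw [h3]
    linarith

end

end

/-! ### The slow map on real points -/

section

open Set Filter Topology Metric Complex

section
variable {n : ℕ}

theorem hasDerivAt_ray {R q : ℝ} (hR : 0 < R) (hq : 0 ≤ q) (t : ℝ) :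
    ∃ d > 0, HasDerivAt (fun t : ℝ => t * (1 / √(R ^ 2 + t ^ 2 * q))) d t := by
  have hu : 0 < R ^ 2 + t ^ 2 * q := by positivity
  have h1 : HasDerivAt (fun t : ℝ => R ^ 2 + t ^ 2 * q) (2 * t * q) t := by
    simpa using (((hasDerivAt_id t).pow 2).mul_const q).const_add (R ^ 2)
  have h2 := (hasDerivAt_id t).div (h1.sqrt hu.ne') (Real.sqrt_pos.2 hu).ne'
  have h3 : (fun t : ℝ => t * (1 / √(R ^ 2 + t ^ 2 * q))) = (id / fun t : ℝ => √(R ^ 2 + t ^ 2 * q)) := by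
    funext t; simp [div_eq_mul_inv]
  refine ⟨_, ?_, h3 ▸ h2⟩
  have hs := Real.sqrt_pos.2 hu
  have hss := Real.sq_sqrt hu.le
  refine div_pos ?_ (by positivity)
  have : 1 * √(R ^ 2 + t ^ 2 * q) - id t * (2 * t * q / (2 * √(R ^ 2 + t ^ 2 * q))) =
      R ^ 2 / √(R ^ 2 + t ^ 2 * q) := by
    simp only [id]
    field_simp
    rw [hss]; ring
  rw [this]
  positivity

/-- Each summand of the slow map is strictly increasing along rays. -/
theorem strictMono_ray {R q : ℝ} (hR : 0 < R) (hq : 0 ≤ q) :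
    StrictMono (fun t : ℝ => t * (1 / √(R ^ 2 + t ^ 2 * q))) := by
  refine strictMono_of_deriv_pos fun t => ?_
  obtain ⟨d, hd, h⟩ := hasDerivAt_ray hR hq t
  rw [h.deriv]; exact hd

/-- The scalar factor of the slow map on real points. -/
noncomputable def slr (R : ℕ → ℝ) (a : Fin n → ℝ) : ℝ := ∑' k, 1 / √(R k ^ 2 + ∑ i, a i ^ 2)

theorem cx_mem_tube (a : Fin n → ℝ) {s : ℝ} (hs : 0 < s) : cx n a ∈ tube n s := fun i => by simpa using hs

theorem sl_cx {R : ℕ → ℝ} (a : Fin n → ℝ) : sl R (cx n a) = (slr R a : ℂ) := by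
  simp only [sl, slr, isq_real]
  rw [ofReal_tsum]

theorem summable_slr {R : ℕ → ℝ} (h : Scales n R) (a : Fin n → ℝ) :
    Summable fun k => 1 / √(R k ^ 2 + ∑ i, a i ^ 2) := by
  have := summable_isq h (cx_mem_tube a one_pos)
  simp only [isq_real] at this
  exact_mod_cast this

theorem analyticAt_re_cx {F : (Fin n → ℂ) → ℂ} {a : Fin n → ℝ} (hF : AnalyticAt ℂ F (cx n a)) :
    AnalyticAt ℝ (fun y => (F (cx n y)).re) a :=
  (reCLM.analyticAt _).comp (hF.restrictScalars.comp ((cx n).analyticAt a))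

theorem slr_analytic {R : ℕ → ℝ} (h : Scales n R) (a : Fin n → ℝ) : AnalyticAt ℝ (slr (n := n) R) a := by
  have := analyticAt_re_cx (sl_analytic h (cx n a) (cx_mem_tube a one_pos))
  simpa [sl_cx] using this

theorem slr_pos {R : ℕ → ℝ} (h : Scales n R) (a : Fin n → ℝ) : 0 < slr R a := by
  refine (summable_slr h a).tsum_pos (fun k => by positivity) 0 ?_
  have := h.pos 0
  positivity

theorem ray_eq (R : ℕ → ℝ) (a : Fin n → ℝ) (t : ℝ) :
    t * slr R (t • a) = ∑' k, t * (1 / √(R k ^ 2 + t ^ 2 * ∑ i, a i ^ 2)) := by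
  rw [slr, tsum_mul_left]
  simp [mul_pow, Finset.mul_sum]

theorem summable_ray {R : ℕ → ℝ} (h : Scales n R) (a : Fin n → ℝ) (t : ℝ) :
    Summable fun k => t * (1 / √(R k ^ 2 + t ^ 2 * ∑ i, a i ^ 2)) := by
  have := (summable_slr h (t • a)).mul_left t
  simpa [mul_pow, Finset.mul_sum] using this

/-- Along a ray the slow map is its first summand plus a monotone function. -/
theorem ray_split {R : ℕ → ℝ} (h : Scales n R) (a : Fin n → ℝ) : ∃ M : ℝ → ℝ, Monotone M ∧
    ∀ t, t * slr R (t • a) = t * (1 / √(R 0 ^ 2 + t ^ 2 * ∑ i, a i ^ 2)) + M t := by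
  have hq : 0 ≤ ∑ i, a i ^ 2 := by positivity
  refine ⟨fun t => ∑' k, t * (1 / √(R (k + 1) ^ 2 + t ^ 2 * ∑ i, a i ^ 2)), ?_, ?_⟩
  · intro s t hst
    refine Summable.tsum_le_tsum (fun k => (strictMono_ray (h.pos (k+1)) hq).monotone hst) ?_ ?_
    · exact (summable_nat_add_iff 1).2 (summable_ray h a s)
    · exact (summable_nat_add_iff 1).2 (summable_ray h a t)
  · intro t
    rw [ray_eq, (summable_ray h a t).tsum_eq_zero_add]

theorem ray_strictMono {R : ℕ → ℝ} (h : Scales n R) (a : Fin n → ℝ) :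
    StrictMono fun t : ℝ => t * slr R (t • a) := by
  obtain ⟨M, hM, hs⟩ := ray_split h a
  simp_rw [hs]
  exact (strictMono_ray (h.pos 0) (by positivity)).add_monotone hM

/-- The slow map on real points. -/
noncomputable def slow (R : ℕ → ℝ) (a : Fin n → ℝ) : Fin n → ℝ := slr R a • a

theorem slow_injective {R : ℕ → ℝ} (h : Scales n R) : Function.Injective (slow (n := n) R) := by
  intro a b hab
  simp only [slow] at hab
  have ha := slr_pos h a
  have hb := slr_pos h b
  set l := slr R a / slr R b with hl
  have hba : b = l • a := by
    rw [hl, div_eq_inv_mul, mul_smul, hab, inv_smul_smul₀ hb.ne']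
  by_cases ha0 : a = 0
  · rw [hba, ha0, smul_zero]
  · have h1 : l * slr R (l • a) = 1 * slr R ((1:ℝ) • a) := by
      rw [← hba, one_smul, one_mul, hl, div_mul_cancel₀ _ hb.ne']
    have h2 : l = 1 := (ray_strictMono h a).injective h1
    rw [hba, h2, one_smul]

theorem slow_surjective {R : ℕ → ℝ} (h : Scales n R) : Function.Surjective (slow (n := n) R) := by
  intro b
  by_cases hb : b = 0
  · exact ⟨0, by simp [slow, hb]⟩
  have hq : 0 < ∑ i, b i ^ 2 := by
    obtain ⟨i, hi⟩ := Function.ne_iff.1 hb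
    exact Finset.sum_pos' (fun _ _ => sq_nonneg _) ⟨i, Finset.mem_univ _, by
      have : b i ≠ 0 := hi
      positivity⟩
  set q := ∑ i, b i ^ 2 with hqd
  obtain ⟨m, hm⟩ := exists_nat_ge (√(2 * q))
  have hcont : Continuous fun t : ℝ => t * slr R (t • b) := by
    refine continuous_id.mul ?_
    exact (continuous_iff_continuousAt.2 fun a => (slr_analytic h a).continuousAt).comp (by fun_prop)
  have hmono : Monotone R := monotone_nat_of_le_succ fun k => by
    have := h.growth k; have := h.pos k; linarith
  set t := R m / √q with ht
  have hsq : 0 < √q := Real.sqrt_pos.2 hq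
  have ht0 : 0 < t := div_pos (h.pos m) hsq
  have htq : t ^ 2 * q = R m ^ 2 := by
    rw [ht, div_pow, Real.sq_sqrt hq.le]; field_simp
  have hbig : 1 ≤ t * slr R (t • b) := by
    rw [ray_eq]
    refine le_trans ?_ ((summable_ray h b t).sum_le_tsum (Finset.range m)
      (fun k _ => by positivity))
    have h1 : ∀ k ∈ Finset.range m, 1 / √(2 * q) ≤ t * (1 / √(R k ^ 2 + t ^ 2 * q)) := by
      intro k hk
      rw [htq]
      have hk' : R k ≤ R m := hmono (Finset.mem_range.1 hk).le
      have h2 : √(R k ^ 2 + R m ^ 2) ≤ √2 * R m := by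
        rw [Real.sqrt_le_left (by have := h.pos m; positivity), mul_pow, Real.sq_sqrt (by norm_num)]
        have := h.pos k
        nlinarith
      have h3 : 0 < √(R k ^ 2 + R m ^ 2) := Real.sqrt_pos.2 (by have := h.pos k; positivity)
      rw [Real.sqrt_mul (by norm_num), ht, div_mul_div_comm, mul_one, div_le_div_iff₀ (by positivity) (by positivity)]
      nlinarith
    refine le_trans ?_ (Finset.sum_le_sum h1)
    rw [Finset.sum_const, Finset.card_range, nsmul_eq_mul, mul_one_div, le_div_iff₀ (by positivity)]
    simpa using hm
  obtain ⟨s, hs⟩ := intermediate_value_univ (0:ℝ) t hcont (show (1:ℝ) ∈ Icc _ _ from ⟨by simp, hbig⟩)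
  refine ⟨s • b, ?_⟩
  simp only [slow, smul_smul]
  rw [mul_comm, show s * slr R (s • b) = 1 from hs, one_smul]

theorem slow_analytic {R : ℕ → ℝ} (h : Scales n R) (a : Fin n → ℝ) : AnalyticAt ℝ (slow (n := n) R) a :=
  (slr_analytic h a).smul analyticAt_id

theorem slow_fderiv_injective {R : ℕ → ℝ} (h : Scales n R) (a : Fin n → ℝ) :
    Function.Injective (fderiv ℝ (slow (n := n) R) a) := by
  have hd := (slr_analytic h a).differentiableAt.hasFDerivAt.smul (hasFDerivAt_id (𝕜 := ℝ) a)
  rw [injective_iff_map_eq_zero]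
  intro v hv
  have h1 : slr R a • v + (fderiv ℝ (slr R) a v) • a = 0 := by
    have h2 : fderiv ℝ (slow (n := n) R) a = _ := hd.fderiv
    rw [h2] at hv
    simpa using hv
  have hp := slr_pos h a
  have hva : v = (-(fderiv ℝ (slr R) a v) / slr R a) • a := by
    have h3 : slr R a • v = -(fderiv ℝ (slr R) a v) • a := by
      rw [neg_smul]; exact eq_neg_of_add_eq_zero_left h1
    rw [div_eq_inv_mul, mul_smul, ← h3, inv_smul_smul₀ hp.ne']
  set l := -(fderiv ℝ (slr R) a v) / slr R a with hl
  by_contra hv0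
  have hl0 : l ≠ 0 := fun h0 => hv0 (by rw [hva, h0, zero_smul])
  have ha0 : a ≠ 0 := fun h0 => hv0 (by rw [hva, h0, smul_zero])
  -- the derivative of the slow map in the radial direction would vanish
  have h4 : (slr R a + fderiv ℝ (slr R) a a) • a = 0 := by
    have h5 := h1
    rw [hva, map_smul, smul_comm, smul_assoc, ← smul_add, ← add_smul] at h5
    exact (smul_eq_zero.1 h5).resolve_left hl0
  have h6 : slr R a + fderiv ℝ (slr R) a a = 0 := (smul_eq_zero.1 h4).resolve_right ha0
  have h7 : HasDerivAt (fun t : ℝ => t • a) a 1 := by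
    simpa using (hasDerivAt_id (1:ℝ)).smul_const a
  have h8 : HasDerivAt (fun t : ℝ => slr R (t • a)) (fderiv ℝ (slr R) a a) 1 := by
    have : HasFDerivAt (slr R) (fderiv ℝ (slr R) a) ((1:ℝ) • a) := by
      rw [one_smul]; exact (slr_analytic h a).differentiableAt.hasFDerivAt
    exact this.comp_hasDerivAt (1:ℝ) h7
  have h9 : HasDerivAt (fun t : ℝ => t * slr R (t • a)) 0 1 := by
    have := (hasDerivAt_id (1:ℝ)).mul h8
    simp only [id, one_mul, one_smul] at this
    rw [h6] at this
    exact this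
  obtain ⟨M, hM, hs⟩ := ray_split h a
  obtain ⟨d, hd0, hd1⟩ := hasDerivAt_ray (R := R 0) (q := ∑ i, a i ^ 2) (h.pos 0) (by positivity) 1
  have h10 : HasDerivAt M (0 - d) 1 := by
    refine (h9.sub hd1).congr_of_eventuallyEq (Eventually.of_forall fun t => ?_)
    simp [hs]
  have := hM.deriv_nonneg (x := (1:ℝ))
  rw [h10.deriv] at this
  linarith

/-- The slow map has a global real-analytic inverse. -/
theorem slow_inverse {R : ℕ → ℝ} (h : Scales n R) : ∃ Ψ : (Fin n → ℝ) → Fin n → ℝ,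
    (∀ b, slow R (Ψ b) = b) ∧ ∀ b, AnalyticAt ℝ Ψ b := by
  choose Ψ hΨ using slow_surjective h
  refine ⟨Ψ, hΨ, fun b => ?_⟩
  set a := Ψ b with ha
  let e : (Fin n → ℝ) ≃L[ℝ] (Fin n → ℝ) := (LinearEquiv.ofInjectiveEndo
    (fderiv ℝ (slow (n := n) R) a : (Fin n → ℝ) →ₗ[ℝ] (Fin n → ℝ))
    (slow_fderiv_injective h a)).toContinuousLinearEquiv
  have he : (e : (Fin n → ℝ) →L[ℝ] (Fin n → ℝ)) = fderiv ℝ (slow (n := n) R) a := by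
    ext v : 1; rfl
  have hd : HasFDerivAt (slow R) (e : (Fin n → ℝ) →L[ℝ] (Fin n → ℝ)) a := by
    rw [he]; exact (slow_analytic h a).differentiableAt.hasFDerivAt
  have hc : ContDiffAt ℝ ⊤ (slow (n := n) R) a := (slow_analytic h a).contDiffAt
  have hl := (hc.to_localInverse hd (by simp)).analyticAt
  have hr := (hc.hasStrictFDerivAt' hd (by simp)).eventually_right_inverse
  rw [hΨ b] at hl hr
  refine hl.congr ?_
  filter_upwards [hr] with y hy
  exact slow_injective h (hy.trans (hΨ y).symm)

end

end

/-! ### Global relations on `ℝⁿ` and convexity of the saturation -/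

open Set Filter Topology Metric Complex

section
variable {n : ℕ}

theorem slow_cx (R : ℕ → ℝ) (a : Fin n → ℝ) : sl R (cx n a) • cx n a = cx n (slow R a) := by
  rw [sl_cx]
  ext i
  simp [slow]

/-- If `f` is locally at `x` a combination of `A₁, …, A_r`, then `h f` is globally one, for some
global analytic `h` with `h x ≠ 0`. -/
theorem real_relation {r : ℕ} {f : (Fin n → ℝ) → ℝ} {A : Fin r → (Fin n → ℝ) → ℝ}
    (hf : ∀ y, AnalyticAt ℝ f y) (hA : ∀ i y, AnalyticAt ℝ (A i) y) {x : Fin n → ℝ}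
    {c : Fin r → (Fin n → ℝ) → ℝ} (hc : ∀ i, AnalyticAt ℝ (c i) x)
    (hx : ∀ᶠ y in 𝓝 x, f y = ∑ i, c i y * A i y) :
    ∃ (h : (Fin n → ℝ) → ℝ) (C : Fin r → (Fin n → ℝ) → ℝ), (∀ y, AnalyticAt ℝ h y) ∧
      (∀ i y, AnalyticAt ℝ (C i) y) ∧ h x ≠ 0 ∧ ∀ y, h y * f y = ∑ i, C i y * A i y := by
  let A' : Fin (r + 1) → (Fin n → ℝ) → ℝ := Fin.cons f A
  have hA' : ∀ i y, AnalyticAt ℝ (A' i) y := by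
    intro i
    refine Fin.cases ?_ ?_ i
    · exact hf
    · exact hA
  choose Ω F hΩ hΩr hF hFr using fun i => complexify (hA' i)
  obtain ⟨R, hR, hRΩ⟩ := exists_scales (Ω := ⋂ i, Ω i) (isOpen_iInter_of_finite hΩ)
    (fun y => mem_iInter.2 fun i => hΩr i y)
  obtain ⟨Ψ, hΨ, hΨa⟩ := slow_inverse (n := n) hR
  have hτ : ∀ w ∈ tube n 1, AnalyticAt ℂ (fun w => sl R w • w) w := fun w hw =>
    (sl_analytic hR w hw).smul analyticAt_id
  have hFτ : ∀ i, ∀ w ∈ tube n 1, AnalyticAt ℂ (fun w => F i (sl R w • w)) w := fun i w hw =>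
    AnalyticAt.fun_comp (g := F i) (hF i _ (mem_iInter.1 (hRΩ w hw) i)) (hτ w hw)
  -- the row of the complexified functions, pulled back by the slow map
  obtain ⟨Φ, hΦa, hΦ⟩ := clm_of_columns (V := Fin n → ℂ) (X := Fin 1 → ℂ)
    (fun (i : Fin (r + 1)) w (_ : Fin 1) => F i (sl R w • w))
  have hΦan : AnalyticOnNhd ℂ Φ (tube n 1) := fun w hw => hΦa w fun i =>
    analyticAt_pi_iff.2 fun _ => hFτ i w hw
  have hΦ0 : ∀ w v, Φ w v = 0 ↔ ∑ i, v i * F i (sl R w • w) = 0 := by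
    intro w v
    rw [hΦ, funext_iff]
    simp
  choose ρ hρ c' hc'a hc' using fun i => complexify_local (hc i)
  set x' := cx n (Ψ x) with hx'
  have hτx : sl R x' • x' = cx n x := by rw [hx', slow_cx, hΨ]
  have hx't : x' ∈ tube n 1 := cx_mem_tube _ one_pos
  have hc'x : ∀ i, AnalyticAt ℂ (c' i) (sl R x' • x') := fun i => by
    rw [hτx]; exact hc'a i _ (mem_ball_self (hρ i))
  let v : (Fin n → ℂ) → Fin (r + 1) → ℂ := fun w => Fin.cons 1 fun i => - c' i (sl R w • w)
  have hv : AnalyticAt ℂ v x' := by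
    rw [analyticAt_pi_iff]
    intro i
    refine Fin.cases ?_ (fun i => ?_) i
    · exact analyticAt_const
    · exact (AnalyticAt.fun_comp (g := c' i) (f := fun w => sl R w • w) (hc'x i) (hτ x' hx't)).neg
  have hvr : ∀ᶠ w in 𝓝 x', Φ w (v w) = 0 := by
    have h1 : ∀ᶠ z in 𝓝 (cx n x), F 0 z - ∑ i, c' i z * F i.succ z = 0 := by
      refine eventually_zero_of_real ((hF 0 _ (hΩr 0 x)).sub
        (Finset.analyticAt_fun_sum _ fun i _ => ?_)) ?_
      · exact (hc'a i _ (mem_ball_self (hρ i))).mul (hF _ _ (hΩr _ x))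
      · filter_upwards [hx, eventually_all.2 fun i => isOpen_ball.mem_nhds (mem_ball_self (hρ i))]
          with y hy hyb
        have e0 : F 0 (cx n y) = f y := hFr 0 y
        have e1 : ∀ i, c' i (cx n y) * F i.succ (cx n y) = ((c i y * A i y : ℝ) : ℂ) := by
          intro i
          rw [hc' i y (hyb i), hFr i.succ y, ofReal_mul]
          rfl
        rw [e0, Finset.sum_congr rfl fun i _ => e1 i, hy, ofReal_sum, sub_self]
    have h2 : Tendsto (fun w => sl R w • w) (𝓝 x') (𝓝 (cx n x)) := by
      rw [← hτx]; exact (hτ x' hx't).continuousAt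
    filter_upwards [h2.eventually h1] with w hw
    rw [hΦ0, Fin.sum_univ_succ]
    simp only [v, Fin.cons_zero, Fin.cons_succ, one_mul, neg_mul, Finset.sum_neg_distrib]
    rw [← sub_eq_add_neg]
    exact hw
  obtain ⟨H, hHa, hHr, hH0⟩ := relation_tube hΦan (cx_mem_tube (Ψ x) (by norm_num)) hv hvr 0
    (by simp [v])
  -- multiplication by `μ` makes the leading component positive at the base point
  set μ : ℂ := (starRingEnd ℂ) (H x' 0) with hμ
  have hcomp : ∀ i y, AnalyticAt ℝ (fun y => (μ * H (cx n (Ψ y)) i).re) y := by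
    intro i y
    have h1 : AnalyticAt ℂ (fun z => μ * H z i) (cx n (Ψ y)) :=
      analyticAt_const.mul (analyticAt_pi_iff.1 (hHa _ (cx_mem_tube (Ψ y) (by norm_num))) i)
    exact AnalyticAt.fun_comp (g := fun a => (μ * H (cx n a) i).re) (analyticAt_re_cx h1) (hΨa y)
  refine ⟨fun y => (μ * H (cx n (Ψ y)) 0).re, fun i y => -(μ * H (cx n (Ψ y)) i.succ).re,
    hcomp 0, fun i y => (hcomp i.succ y).neg, ?_, ?_⟩
  · change (μ * H x' 0).re ≠ 0
    rw [hμ, mul_comm, mul_conj, ofReal_re]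
    exact normSq_eq_zero.not.2 hH0
  · intro y
    have h1 := (hΦ0 _ _).1 (hHr _ (cx_mem_tube (Ψ y) (by norm_num)))
    rw [slow_cx, hΨ, Finset.sum_congr rfl fun i _ => by rw [hFr i y]] at h1
    have h2 := congrArg (fun z => (μ * z).re) h1
    simp only [Finset.mul_sum, mul_zero, zero_re, re_sum, ← mul_assoc, re_mul_ofReal] at h2
    rw [Fin.sum_univ_succ] at h2
    have h3 : (μ * H (cx n (Ψ y)) 0).re * f y +
      ∑ i : Fin r, (μ * H (cx n (Ψ y)) i.succ).re * A i y = 0 := h2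
    simp only [neg_mul, Finset.sum_neg_distrib]
    linarith

end

theorem stmt_17 (n : ℕ) (a : Ideal (ORn n))
    (hconv : ∀ g f : ORn n, f ∈ a →
      (∀ x : Fin n → ℝ, |(g : (Fin n → ℝ) → ℝ) x| ≤ (f : (Fin n → ℝ) → ℝ) x) → g ∈ a) :
    (∃ I : Ideal (ORn n), (I : Set (ORn n)) = saturation n (a : Set (ORn n))) ∧
    ∀ g f : ORn n, f ∈ saturation n (a : Set (ORn n)) →
      (∀ x : Fin n → ℝ, |(g : (Fin n → ℝ) → ℝ) x| ≤ (f : (Fin n → ℝ) → ℝ) x) →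
      g ∈ saturation n (a : Set (ORn n)) := by
  constructor
  · refine ⟨{ carrier := saturation n (a : Set (ORn n)), add_mem' := ?_, zero_mem' := ?_,
              smul_mem' := ?_ }, rfl⟩
    · intro g g' hg hg' x
      obtain ⟨U, hU, hxU, r, A, c, hA, hc, h⟩ := hg x
      obtain ⟨U', hU', hxU', r', A', c', hA', hc', h'⟩ := hg' x
      refine ⟨U ∩ U', hU.inter hU', ⟨hxU, hxU'⟩, r + r', Fin.append A A', Fin.append c c', ?_, ?_, ?_⟩
      · intro i
        refine Fin.addCases (fun i => ?_) (fun i => ?_) i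
        · simpa using hA i
        · simpa using hA' i
      · intro i y hy
        refine Fin.addCases (fun i => ?_) (fun i => ?_) i
        · simpa using hc i y hy.1
        · simpa using hc' i y hy.2
      · intro y hy
        rw [Fin.sum_univ_add]
        simp only [Fin.append_left, Fin.append_right]
        rw [← h y hy.1, ← h' y hy.2]
        rfl
    · intro x
      exact ⟨univ, isOpen_univ, mem_univ x, 0, Fin.elim0, Fin.elim0, fun i => i.elim0,
        fun i => i.elim0, fun y _ => by simp⟩
    · intro f g hg x
      obtain ⟨U, hU, hxU, r, A, c, hA, hc, h⟩ := hg x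
      refine ⟨U, hU, hxU, r, A, fun i y => (f : (Fin n → ℝ) → ℝ) y * c i y, hA,
        fun i y hy => (f.2 y).mul (hc i y hy), fun y hy => ?_⟩
      have : ((f • g : ORn n) : (Fin n → ℝ) → ℝ) y =
        (f : (Fin n → ℝ) → ℝ) y * (g : (Fin n → ℝ) → ℝ) y := rfl
      rw [this, h y hy, Finset.mul_sum]
      exact Finset.sum_congr rfl fun i _ => (mul_assoc _ _ _).symm
  · intro g f hf hgf x
    obtain ⟨U, hU, hxU, r, A, c, hA, hc, hfU⟩ := hf x
    obtain ⟨h, C, hh, hC, hhx, hrel⟩ := real_relation (f := (f : (Fin n → ℝ) → ℝ))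
      (A := fun i => (A i : (Fin n → ℝ) → ℝ)) f.2 (fun i => (A i).2) (fun i => hc i x hxU)
      (by filter_upwards [hU.mem_nhds hxU] with y hy using hfU y hy)
    -- `h² f` lies in the ideal and dominates `h² g`
    let h' : ORn n := ⟨h, hh⟩
    let C' : Fin r → ORn n := fun i => ⟨C i, hC i⟩
    have hhf : h' * f = ∑ i, C' i * A i := by
      apply Subtype.ext
      funext y
      rw [AddSubmonoidClass.coe_finset_sum, Finset.sum_apply]
      exact hrel y
    have hmem : h' * (h' * f) ∈ a := by
      rw [hhf]
      exact a.mul_mem_left _ (a.sum_mem fun i _ => a.mul_mem_left _ (hA i))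
    have hmem' : h' * (h' * g) ∈ a := by
      refine hconv _ _ hmem fun y => ?_
      change |h y * (h y * (g : (Fin n → ℝ) → ℝ) y)| ≤ h y * (h y * (f : (Fin n → ℝ) → ℝ) y)
      rw [← mul_assoc, ← mul_assoc, abs_mul, abs_mul_self]
      exact mul_le_mul_of_nonneg_left (hgf y) (mul_self_nonneg _)
    have hcont : Continuous h := continuous_iff_continuousAt.2 fun y => (hh y).continuousAt
    refine ⟨{y | h y ≠ 0}, isOpen_ne_fun hcont continuous_const, hhx, 1, fun _ => h' * (h' * g),
      fun _ y => (h y * h y)⁻¹, fun _ => hmem', fun _ y hy => ((hh y).mul (hh y)).inv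
        (mul_ne_zero hy hy), fun y hy => ?_⟩
    have hy' : h y ≠ 0 := hy
    have : ((h' * (h' * g) : ORn n) : (Fin n → ℝ) → ℝ) y =
      h y * (h y * (g : (Fin n → ℝ) → ℝ) y) := rfl
    rw [Fin.sum_univ_one, this]
    field_simp
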